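/- arXiv:1408.2618 — 5 statements merged into one kernel-verified Lean document; each statement's English description precedes it below -/
import Mathlib

section
/- Let A be a commutative ring and f, g ∈ A with fA + gA = A. Let M and N be A-modules, φ : M_f → N_f an A_f-linear map and ψ : M_g → N_g an A_g-linear map such that φ and ψ induce the same map M_{fg} → N_{fg} after further localization. Then: (i) there exists an A-linear map ξ : M → N such that ξ localizes to φ over A_f and to ψ over A_g; (ii) if moreover φ and ψ are surjective, then ξ is surjective. -/
/-!
`N` is the fibre product `N_f ×_{N_{fg}} N_g`. If `x / f ^ m` and `y / g ^ n` agree in `N_{fg}`,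
then after enlarging `m` and `n` one has `g ^ n x = f ^ m y` in `N` itself. Writing
`p f ^ m + q g ^ n = 1`, the element `p x + q y` then has both fractions as its images. So the
composites `M → M_f → N_f` and `M → M_g → N_g` factor through a single linear map `ξ : M → N`. If
`φ` and `ψ` are surjective, then the range of `ξ` contains, for each `z : N`, a multiple of `z` by
a power of `f` and one by a power of `g`, hence also `z`.
-/

noncomputable section

/-- The canonical `A`-linear map `N_a → N_{ab}` between localized modules
(well defined since `a^k ∣ (ab)^k` for all `k`). -/
def auxMapLeft (A : Type*) [CommRing A] (a b : A)
    (N : Type*) [AddCommGroup N] [Module A N] :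
    LocalizedModule (Submonoid.powers a) N →ₗ[A]
      LocalizedModule (Submonoid.powers (a * b)) N :=
  LocalizedModule.lift _ (LocalizedModule.mkLinearMap (Submonoid.powers (a * b)) N)
    (by
      rintro ⟨x, hx⟩
      obtain ⟨k, hk⟩ := hx
      have hk' : a ^ k = x := hk
      have hmem : (a * b) ^ k ∈ Submonoid.powers (a * b) := ⟨k, rfl⟩
      have hu : IsUnit ((algebraMap A
          (Module.End A (LocalizedModule (Submonoid.powers (a * b)) N))) ((a * b) ^ k)) :=
        IsLocalizedModule.map_units
          (LocalizedModule.mkLinearMap (Submonoid.powers (a * b)) N) ⟨(a * b) ^ k, hmem⟩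
      rw [mul_pow, map_mul] at hu
      have hc : Commute ((algebraMap A
            (Module.End A (LocalizedModule (Submonoid.powers (a * b)) N))) (a ^ k))
          ((algebraMap A
            (Module.End A (LocalizedModule (Submonoid.powers (a * b)) N))) (b ^ k)) :=
        (Commute.all (a ^ k) (b ^ k)).map _
      simpa only [hk'] using (hc.isUnit_mul_iff.mp hu).1)

/-- The canonical `A`-linear map `N_b → N_{ab}` between localized modules
(well defined since `b^k ∣ (ab)^k` for all `k`). -/
def auxMapRight (A : Type*) [CommRing A] (a b : A)
    (N : Type*) [AddCommGroup N] [Module A N] :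
    LocalizedModule (Submonoid.powers b) N →ₗ[A]
      LocalizedModule (Submonoid.powers (a * b)) N :=
  LocalizedModule.lift _ (LocalizedModule.mkLinearMap (Submonoid.powers (a * b)) N)
    (by
      rintro ⟨x, hx⟩
      obtain ⟨k, hk⟩ := hx
      have hk' : b ^ k = x := hk
      have hmem : (a * b) ^ k ∈ Submonoid.powers (a * b) := ⟨k, rfl⟩
      have hu : IsUnit ((algebraMap A
          (Module.End A (LocalizedModule (Submonoid.powers (a * b)) N))) ((a * b) ^ k)) :=
        IsLocalizedModule.map_units
          (LocalizedModule.mkLinearMap (Submonoid.powers (a * b)) N) ⟨(a * b) ^ k, hmem⟩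
      rw [mul_pow, map_mul] at hu
      have hc : Commute ((algebraMap A
            (Module.End A (LocalizedModule (Submonoid.powers (a * b)) N))) (a ^ k))
          ((algebraMap A
            (Module.End A (LocalizedModule (Submonoid.powers (a * b)) N))) (b ^ k)) :=
        (Commute.all (a ^ k) (b ^ k)).map _
      simpa only [hk'] using (hc.isUnit_mul_iff.mp hu).2)

theorem auxMapLeft_comp_mkLinearMap (A : Type*) [CommRing A] (a b : A)
    (N : Type*) [AddCommGroup N] [Module A N] :
    auxMapLeft A a b N ∘ₗ LocalizedModule.mkLinearMap (.powers a) N =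
      LocalizedModule.mkLinearMap (.powers (a * b)) N :=
  LocalizedModule.lift_comp _ _ _

theorem auxMapRight_comp_mkLinearMap (A : Type*) [CommRing A] (a b : A)
    (N : Type*) [AddCommGroup N] [Module A N] :
    auxMapRight A a b N ∘ₗ LocalizedModule.mkLinearMap (.powers b) N =
      LocalizedModule.mkLinearMap (.powers (a * b)) N :=
  LocalizedModule.lift_comp _ _ _

section Coprime

variable {A N : Type*} [CommSemiring A] [AddCommMonoid N] [Module A N] {s t : A}

theorem eq_of_smul_eq_of_isCoprime (h : IsCoprime s t) {x y : N}
    (hs : s • x = s • y) (ht : t • x = t • y) : x = y := by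
  obtain ⟨p, q, hpq⟩ := h
  rw [← one_smul A x, ← one_smul A y, ← hpq]
  simp only [add_smul, mul_smul, hs, ht]

theorem exists_smul_eq_of_isCoprime (h : IsCoprime s t) {x y : N} (hxy : t • x = s • y) :
    ∃ z : N, s • z = x ∧ t • z = y := by
  obtain ⟨p, q, hpq⟩ := h
  refine ⟨p • x + q • y, ?_, ?_⟩
  · calc s • (p • x + q • y) = p • s • x + q • s • y := by module
      _ = (p * s + q * t) • x := by rw [← hxy, add_smul, mul_smul, mul_smul]
      _ = x := by rw [hpq, one_smul]
  · calc t • (p • x + q • y) = p • t • x + q • t • y := by module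
      _ = (p * s + q * t) • y := by rw [hxy, add_smul, mul_smul, mul_smul]
      _ = y := by rw [hpq, one_smul]

end Coprime

section Away

open IsLocalizedModule LinearMap

variable {A N N₁ N₂ N₁₂ : Type*} [CommSemiring A] [AddCommMonoid N] [Module A N]
  [AddCommMonoid N₁] [Module A N₁] [AddCommMonoid N₂] [Module A N₂]
  [AddCommMonoid N₁₂] [Module A N₁₂] {f g : A}

theorem prod_injective_of_isCoprime (h : IsCoprime f g) (i : N →ₗ[A] N₁) (j : N →ₗ[A] N₂)
    [IsLocalizedModule.Away f i] [IsLocalizedModule.Away g j] :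
    Function.Injective (i.prod j) := by
  intro x y hxy
  obtain ⟨m, hm⟩ := Away.exists_of_eq f (congrArg Prod.fst hxy : i x = i y)
  obtain ⟨n, hn⟩ := Away.exists_of_eq g (congrArg Prod.snd hxy : j x = j y)
  exact eq_of_smul_eq_of_isCoprime h.pow hm hn

section Overlap

variable {i : N →ₗ[A] N₁} {j : N →ₗ[A] N₂} {k : N →ₗ[A] N₁₂}
  [IsLocalizedModule.Away f i] [IsLocalizedModule.Away g j] [IsLocalizedModule.Away (f * g) k]
  {α : N₁ →ₗ[A] N₁₂} {β : N₂ →ₗ[A] N₁₂}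

variable (f g) in
theorem exists_compatible_numerators (hα : α ∘ₗ i = k) (hβ : β ∘ₗ j = k) {u : N₁} {v : N₂}
    (huv : α u = β v) :
    ∃ (m n : ℕ) (x y : N), f ^ m • u = i x ∧ g ^ n • v = j y ∧ g ^ n • x = f ^ m • y := by
  obtain ⟨m, x, hx⟩ := Away.surj i f u
  obtain ⟨n, y, hy⟩ := Away.surj j g v
  have hkx : f ^ m • α u = k x := by rw [← map_smul, hx, ← hα, comp_apply]
  have hky : g ^ n • β v = k y := by rw [← map_smul, hy, ← hβ, comp_apply]
  have hk : k (g ^ n • x) = k (f ^ m • y) := by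
    rw [map_smul, map_smul, ← hkx, ← hky, huv, smul_comm]
  obtain ⟨c, hc⟩ := Away.exists_of_eq (f * g) hk
  refine ⟨c + m, c + n, f ^ c • x, g ^ c • y, ?_, ?_, ?_⟩
  · rw [pow_add, mul_smul, hx, map_smul]
  · rw [pow_add, mul_smul, hy, map_smul]
  · calc g ^ (c + n) • f ^ c • x = (f * g) ^ c • g ^ n • x := by module
      _ = (f * g) ^ c • f ^ m • y := hc
      _ = f ^ (c + m) • g ^ c • y := by module

theorem range_prod_eq_eqLocus_of_isCoprime (h : IsCoprime f g) (hα : α ∘ₗ i = k)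
    (hβ : β ∘ₗ j = k) :
    range (i.prod j) = eqLocus (α ∘ₗ fst A N₁ N₂) (β ∘ₗ snd A N₁ N₂) := by
  apply le_antisymm
  · rintro _ ⟨z, rfl⟩
    exact LinearMap.congr_fun (hα.trans hβ.symm) z
  · rintro ⟨u, v⟩ huv
    obtain ⟨m, n, x, y, hx, hy, hxy⟩ := exists_compatible_numerators f g hα hβ huv
    obtain ⟨z, rfl, rfl⟩ := exists_smul_eq_of_isCoprime h.pow hxy
    refine ⟨z, Prod.ext ?_ ?_⟩
    · exact smul_injective i (⟨f ^ m, m, rfl⟩ : Submonoid.powers f)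
        ((map_smul i _ z).symm.trans hx.symm)
    · exact smul_injective j (⟨g ^ n, n, rfl⟩ : Submonoid.powers g)
        ((map_smul j _ z).symm.trans hy.symm)

end Overlap

theorem exists_pow_smul_mem_range_of_surjective {M M₁ : Type*} [AddCommMonoid M] [Module A M]
    [AddCommMonoid M₁] [Module A M₁] {i₀ : M →ₗ[A] M₁} {i : N →ₗ[A] N₁}
    [IsLocalizedModule.Away f i₀] [IsLocalizedModule.Away f i]
    {φ : M₁ →ₗ[A] N₁} {ξ : M →ₗ[A] N} (hξ : i ∘ₗ ξ = φ ∘ₗ i₀)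
    (hφ : Function.Surjective φ) (z : N) :
    ∃ n : ℕ, f ^ n • z ∈ range ξ := by
  obtain ⟨u, hu⟩ := hφ (i z)
  obtain ⟨m, x, hx⟩ := Away.surj i₀ f u
  have hi : i (ξ x) = i (f ^ m • z) :=
    calc i (ξ x) = φ (i₀ x) := LinearMap.congr_fun hξ x
      _ = i (f ^ m • z) := by rw [← hx, map_smul, hu, map_smul]
  obtain ⟨c, hc⟩ := Away.exists_of_eq f hi
  exact ⟨c + m, f ^ c • x, by rw [map_smul, hc, pow_add, mul_smul]⟩

theorem fiber_product_of_localized_surjections_general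
    (hfg : Ideal.span ({f, g} : Set A) = ⊤)
    {M M₁ M₂ : Type*} [AddCommMonoid M] [Module A M] [AddCommMonoid M₁] [Module A M₁]
    [AddCommMonoid M₂] [Module A M₂]
    (i₀ : M →ₗ[A] M₁) (j₀ : M →ₗ[A] M₂)
    [IsLocalizedModule.Away f i₀] [IsLocalizedModule.Away g j₀]
    (i : N →ₗ[A] N₁) (j : N →ₗ[A] N₂) (k : N →ₗ[A] N₁₂)
    [IsLocalizedModule.Away f i] [IsLocalizedModule.Away g j] [IsLocalizedModule.Away (f * g) k]
    {α : N₁ →ₗ[A] N₁₂} {β : N₂ →ₗ[A] N₁₂} (hα : α ∘ₗ i = k) (hβ : β ∘ₗ j = k)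
    (φ : M₁ →ₗ[A] N₁) (ψ : M₂ →ₗ[A] N₂) (hcompat : ∀ x, α (φ (i₀ x)) = β (ψ (j₀ x))) :
    ∃ ξ : M →ₗ[A] N, (∀ x, i (ξ x) = φ (i₀ x)) ∧ (∀ x, j (ξ x) = ψ (j₀ x)) ∧
      (Function.Surjective φ → Function.Surjective ψ → Function.Surjective ξ) := by
  have hcop : IsCoprime f g := Ideal.mem_span_pair.mp (hfg ▸ Submodule.mem_top)
  have hmem (x : M) : (φ ∘ₗ i₀).prod (ψ ∘ₗ j₀) x ∈ range (i.prod j) := by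
    rw [range_prod_eq_eqLocus_of_isCoprime hcop hα hβ]
    exact hcompat x
  let ξ := codRestrictOfInjective _ (i.prod j) (prod_injective_of_isCoprime hcop i j) hmem
  have hξ (x : M) : (i (ξ x), j (ξ x)) = (φ (i₀ x), ψ (j₀ x)) :=
    codRestrictOfInjective_comp_apply _ _ _ hmem x
  have hφξ (x : M) : i (ξ x) = φ (i₀ x) := congrArg Prod.fst (hξ x)
  have hψξ (x : M) : j (ξ x) = ψ (j₀ x) := congrArg Prod.snd (hξ x)
  refine ⟨ξ, hφξ, hψξ, fun hφ hψ z ↦ ?_⟩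
  apply Submodule.mem_of_span_eq_top_of_smul_pow_mem (range ξ) _ hfg
  rintro ⟨_, rfl | rfl⟩
  · exact exists_pow_smul_mem_range_of_surjective (LinearMap.ext hφξ) hφ z
  · exact exists_pow_smul_mem_range_of_surjective (LinearMap.ext hψξ) hψ z

end Away

/-- **Proposition (fiber products of localizations).**  Let `A` be a commutative ring and
`f, g ∈ A` with `fA + gA = A`.  Let `M, N` be `A`-modules, `φ : M_f → N_f` an
`A_f`-linear map and `ψ : M_g → N_g` an `A_g`-linear map inducing the same map
`M_{fg} → N_{fg}`.  Then (i) there is an `A`-linear map `ξ : M → N` with `ξ_f = φ` and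
`ξ_g = ψ`, and (ii) if `φ` and `ψ` are surjective, then so is `ξ`. -/
theorem fiber_product_of_localized_surjections
    (A : Type*) [CommRing A] (f g : A)
    (hfg : Ideal.span ({f, g} : Set A) = ⊤)
    (M N : Type*) [AddCommGroup M] [Module A M] [AddCommGroup N] [Module A N]
    (φ : LocalizedModule (Submonoid.powers f) M →ₗ[Localization (Submonoid.powers f)]
      LocalizedModule (Submonoid.powers f) N)
    (ψ : LocalizedModule (Submonoid.powers g) M →ₗ[Localization (Submonoid.powers g)]
      LocalizedModule (Submonoid.powers g) N)
    (hcompat : ∀ x : M,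
      auxMapLeft A f g N (φ (LocalizedModule.mkLinearMap (Submonoid.powers f) M x))
        = auxMapRight A f g N (ψ (LocalizedModule.mkLinearMap (Submonoid.powers g) M x))) :
    ∃ ξ : M →ₗ[A] N,
      (∀ x : M, LocalizedModule.mkLinearMap (Submonoid.powers f) N (ξ x)
          = φ (LocalizedModule.mkLinearMap (Submonoid.powers f) M x)) ∧
      (∀ x : M, LocalizedModule.mkLinearMap (Submonoid.powers g) N (ξ x)
          = ψ (LocalizedModule.mkLinearMap (Submonoid.powers g) M x)) ∧
      (Function.Surjective φ → Function.Surjective ψ → Function.Surjective ξ) :=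
  fiber_product_of_localized_surjections_general hfg _ _ _ _ _ (auxMapLeft_comp_mkLinearMap A f g N)
    (auxMapRight_comp_mkLinearMap A f g N) (φ.restrictScalars A) (ψ.restrictScalars A) hcompat
end
end

section
/- Let R be a commutative Noetherian ring of finite Krull dimension d, let n > 0, and let B = R[X_1,…,X_m,Y_1^{±1},…,Y_n^{±1}]. Let I be an ideal of B of height > d. Then there exists an R[Y_n^{±1}]-algebra automorphism Θ of B such that Θ(I) contains an element of the form 1 + Y_n h for some h in the subring R[X_1,…,X_m,Y_1^{±1},…,Y_{n−1}^{±1},Y_n] of B (equivalently, Θ(I) contains a polynomial in Y_n over R[X_1,…,X_m,Y_1^{±1},…,Y_{n−1}^{±1}] with constant term 1). -/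
open MvPolynomial

noncomputable section

/-- The submonoid of the polynomial ring `R[X_1,…,X_m,Y_1,…,Y_n]` generated by the
`Y`-variables; inverting it produces the Laurent polynomial ring
`B = R[X_1,…,X_m,Y_1^{±1},…,Y_n^{±1}]`. -/
def Ymonoid (R : Type*) [CommRing R] (m n : ℕ) :
    Submonoid (MvPolynomial (Fin m ⊕ Fin n) R) :=
  Submonoid.closure (Set.range fun j : Fin n => (X (Sum.inr j) : MvPolynomial (Fin m ⊕ Fin n) R))

/-!
After replacing `t = Y_n` by its inverse, contract `I` to the polynomial ring. The height of the
contraction still exceeds `dim R`, and passing to the ideal of leading coefficients in one variable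
does not lower the height; eliminating the variables one after the other, with `t` last, thus yields
an element `f` that is monic for some positive weights `w` giving `t` the weight `1` (Suslin).
The automorphism `X_i ↦ X_i + t ^ (-w_i)`, `Y_j ↦ Y_j t ^ (-w_j)` fixing `t` then turns the image of
`f` into an element which, multiplied by a power of `t`, is a product of factors `Y_j` and
`1 + t ^ w_i X_i` plus a multiple of `t` in the subring where `t` is not inverted. Modulo `t` that
product is a unit, so a multiple of the element has the form `1 + t h`.
-/

lemma height_eq_iInf_primeSpectrum {A : Type*} [CommRing A] (I : Ideal A) :
    I.height = ⨅ (p : PrimeSpectrum A) (_ : I ≤ p.asIdeal), Order.height p := by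
  refine le_antisymm (le_iInf₂ fun p hp ↦ ?_) ?_
  · rw [← PrimeSpectrum.height_eq_orderHeight]
    exact Ideal.height_mono hp
  · rw [Ideal.height_eq_inf_minimalPrimes]
    refine le_iInf₂ fun p hp ↦ (iInf₂_le ⟨p, hp.isPrime⟩ hp.1.2).trans_eq ?_
    exact (PrimeSpectrum.height_eq_orderHeight _).symm

section LeadingCoeff

open Ideal
open scoped Polynomial

variable {R : Type*} [CommRing R]

lemma comap_C_le_leadingCoeff (I : Ideal R[X]) : I.comap Polynomial.C ≤ I.leadingCoeff :=
  fun _ hx ↦ (mem_leadingCoeff _ _).2 ⟨_, hx, Polynomial.leadingCoeff_C _⟩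

/-- The polynomials whose leading coefficient lies outside the prime `q`. An ideal avoids this
set exactly when its leading coefficients all lie in `q`. -/
def leadingCoeffCompl (q : Ideal R) [q.IsPrime] : Submonoid R[X] where
  carrier := {f | f.leadingCoeff ∉ q}
  one_mem' := by simpa using IsPrime.one_notMem ‹_›
  mul_mem' {f g} hf hg := by
    have hfg : f.leadingCoeff * g.leadingCoeff ∉ q := IsPrime.mul_notMem ‹_› hf hg
    rwa [Set.mem_ofPred_eq, Polynomial.leadingCoeff_mul' fun h0 ↦ hfg (h0 ▸ zero_mem q)]

lemma leadingCoeff_le_iff_disjoint {I : Ideal R[X]} {q : Ideal R} [q.IsPrime] :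
    I.leadingCoeff ≤ q ↔ Disjoint (I : Set R[X]) (leadingCoeffCompl q) := by
  simp only [SetLike.le_def, mem_leadingCoeff, Set.disjoint_left]
  exact ⟨fun h f hf hq ↦ hq (h ⟨f, hf, rfl⟩), fun h _ ⟨f, hf, hx⟩ ↦ hx ▸ not_not.1 (h hf)⟩

variable [IsNoetherianRing R]

attribute [local instance] Polynomial.algebra Polynomial.isLocalization in
lemma height_le_height_under_add_one (P : Ideal R[X]) [P.IsPrime] :
    P.height ≤ (P.under R).height + 1 := by
  set p := P.under R
  let Rₚ := Localization.AtPrime p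
  have hdisj : Disjoint (p.primeCompl.map Polynomial.C : Set R[X]) P := by
    rw [Set.disjoint_left]
    rintro _ ⟨_, hb, rfl⟩ hP
    exact hb hP
  have hprime : (P.map (algebraMap R[X] Rₚ[X])).IsPrime :=
    IsLocalization.isPrime_of_isPrime_disjoint (p.primeCompl.map Polynomial.C) _ _ ‹_› hdisj
  have hdim : ((P.map (algebraMap R[X] Rₚ[X])).height : WithBot ℕ∞) ≤ p.height + 1 := by
    rw [← IsLocalization.AtPrime.ringKrullDim_eq_height p Rₚ,
      ← Polynomial.ringKrullDim_of_isNoetherianRing]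
    exact height_le_ringKrullDim_of_ne_top hprime.ne_top
  rw [← IsLocalization.height_map_of_disjoint (S := Rₚ[X]) (p.primeCompl.map Polynomial.C) P hdisj]
  exact_mod_cast hdim

lemma height_map_C_le_height (p : Ideal R) [p.IsPrime] :
    (p.map Polynomial.C).height ≤ p.height := by
  have : (p.map Polynomial.C).LiesOver p :=
    ⟨le_comap_map.antisymm fun x hx ↦ by simpa using mem_map_C_iff.1 hx 0⟩
  have h := height_le_height_add_of_liesOver p (p.map Polynomial.C)
  rwa [Polynomial.algebraMap_eq, map_quotient_self, height_bot, add_zero] at h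

lemma height_le_of_leadingCoeff_le {P : Ideal R[X]} [P.IsPrime] {q : Ideal R} [q.IsPrime]
    (h : P.leadingCoeff ≤ q) : P.height ≤ q.height := by
  have hPq : P.under R ≤ q := (comap_C_le_leadingCoeff P).trans h
  obtain heq | hlt := hPq.eq_or_lt
  · have hmap := map_C_comap_of_comap_eq_leadingCoeff P <|
      (comap_C_le_leadingCoeff P).antisymm (h.trans heq.ge)
    calc P.height = ((P.under R).map Polynomial.C).height := congrArg height hmap.symm
      _ ≤ (P.under R).height := height_map_C_le_height _
      _ ≤ q.height := height_mono hPq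
  · exact (height_le_height_under_add_one P).trans (height_add_one_le_of_lt_of_isPrime hlt)

lemma height_le_height_leadingCoeff (I : Ideal R[X]) : I.height ≤ I.leadingCoeff.height := by
  rw [height_eq_inf_minimalPrimes I.leadingCoeff]
  refine le_iInf₂ fun q hq ↦ ?_
  have := hq.isPrime
  obtain ⟨P, _, hIP, hP⟩ := exists_le_prime_disjoint I _ (leadingCoeff_le_iff_disjoint.1 hq.1.2)
  exact (height_mono hIP).trans (height_le_of_leadingCoeff_le (leadingCoeff_le_iff_disjoint.2 hP))

end LeadingCoeff

section WeightMonic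

open Finsupp (weight)

/-- `f` has a single term of maximal `w`-weight, namely the monomial with exponent `a` and
coefficient one. This is the form of "monic" that Suslin's theorem produces in several variables. -/
structure IsWeightMonic {σ R : Type*} [CommSemiring R] (w : σ → ℕ) (f : MvPolynomial σ R)
    (a : σ →₀ ℕ) : Prop where
  coeff_eq_one : coeff a f = 1
  weight_lt : ∀ b ∈ f.support, b ≠ a → weight w b < weight w a

lemma weight_mapDomain_equiv {σ τ : Type*} (w : σ → ℕ) (e : σ ≃ τ) (b : σ →₀ ℕ) :
    weight (w ∘ e.symm) (b.mapDomain e) = weight w b := by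
  simp [Finsupp.weight_apply, Finsupp.sum_mapDomain_index, add_mul]

lemma weight_cons {N : ℕ} (M : ℕ) (w : Fin N → ℕ) (k : ℕ) (b : Fin N →₀ ℕ) :
    weight (Fin.cons M w : Fin (N + 1) → ℕ) (b.cons k) = k * M + weight w b := by
  simp [Finsupp.weight_eq_sum, Fin.sum_univ_succ]

lemma IsWeightMonic.rename {σ τ R : Type*} [CommSemiring R] {w : σ → ℕ} {f : MvPolynomial σ R}
    {a : σ →₀ ℕ} (h : IsWeightMonic w f a) (e : σ ≃ τ) :
    IsWeightMonic (w ∘ e.symm) (rename e f) (a.mapDomain e) where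
  coeff_eq_one := (coeff_rename_mapDomain _ e.injective _ _).trans h.coeff_eq_one
  weight_lt := by
    classical
    simp only [support_rename_of_injective e.injective, Finset.forall_mem_image,
      weight_mapDomain_equiv]
    exact fun b hb hne ↦ h.weight_lt b hb (mt (congrArg _) hne)

variable {R : Type*} [CommRing R]

lemma IsWeightMonic.cons {N M : ℕ} {f : MvPolynomial (Fin (N + 1)) R} {w : Fin N → ℕ}
    {a : Fin N →₀ ℕ} (h : IsWeightMonic w (finSuccEquiv R N f).leadingCoeff a)
    (hM : ∀ b ∈ f.support, weight w b.tail < M) :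
    IsWeightMonic (Fin.cons M w : Fin (N + 1) → ℕ) f
      (a.cons (finSuccEquiv R N f).natDegree) where
  coeff_eq_one := by rw [← finSuccEquiv_coeff_coeff]; exact h.coeff_eq_one
  weight_lt b hb hba := by
    have hM := hM b hb
    have hdeg : b 0 ≤ (finSuccEquiv R N f).natDegree :=
      natDegree_finSuccEquiv f ▸ monomial_le_degreeOf 0 hb
    rw [← b.cons_tail] at hb hba ⊢
    simp only [weight_cons]
    obtain hlt | heq := hdeg.lt_or_eq
    · calc b 0 * M + weight w b.tail < (b 0 + 1) * M := by linarith
        _ ≤ (finSuccEquiv R N f).natDegree * M := Nat.mul_le_mul_right _ hlt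
        _ ≤ _ := Nat.le_add_right _ _
    · rw [heq] at hb hba ⊢
      exact Nat.add_lt_add_left (h.weight_lt _ (mem_support_coeff_finSuccEquiv.2 hb)
        fun hta ↦ hba (hta ▸ rfl)) _

lemma eq_top_of_ringKrullDim_lt_height {I : Ideal R} (hI : ringKrullDim R < I.height) : I = ⊤ :=
  not_not.1 fun h ↦ hI.not_ge (Ideal.height_le_ringKrullDim_of_ne_top h)

lemma exists_mem_leadingCoeff_finSuccEquiv_eq {N : ℕ} {J : Ideal (MvPolynomial (Fin (N + 1)) R)}
    {c : MvPolynomial (Fin N) R}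
    (hc : c ∈ (J.comap (finSuccEquiv R N).symm.toRingEquiv).leadingCoeff) :
    ∃ f ∈ J, (finSuccEquiv R N f).leadingCoeff = c := by
  obtain ⟨g, hg, rfl⟩ := (Ideal.mem_leadingCoeff _ _).1 hc
  exact ⟨_, hg, congrArg _ ((finSuccEquiv R N).apply_symm_apply g)⟩

variable [IsNoetherianRing R]

lemma ringKrullDim_lt_height_leadingCoeff {N : ℕ} {J : Ideal (MvPolynomial (Fin (N + 1)) R)}
    (hJ : ringKrullDim R < J.height) :
    ringKrullDim R < (J.comap (finSuccEquiv R N).symm.toRingEquiv).leadingCoeff.height := by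
  refine hJ.trans_le ?_
  rw [← RingEquiv.height_comap (finSuccEquiv R N).symm.toRingEquiv J]
  exact_mod_cast height_le_height_leadingCoeff _

lemma exists_mem_isWeightMonic_fin {N : ℕ} (J : Ideal (MvPolynomial (Fin (N + 1)) R))
    (hJ : ringKrullDim R < J.height) :
    ∃ f ∈ J, ∃ w a, IsWeightMonic w f a ∧ (∀ i, 0 < w i) ∧ w (Fin.last N) = 1 := by
  have hlead := ringKrullDim_lt_height_leadingCoeff hJ
  induction N with
  | zero =>
    rw [← ringKrullDim_eq_of_ringEquiv (isEmptyAlgEquiv R (Fin 0)).toRingEquiv] at hlead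
    obtain ⟨f, hf, hf1⟩ := exists_mem_leadingCoeff_finSuccEquiv_eq
      (eq_top_of_ringKrullDim_lt_height hlead ▸ Submodule.mem_top (x := 1))
    have hone : IsWeightMonic (Fin.elim0 : Fin 0 → ℕ) (1 : MvPolynomial (Fin 0) R) 0 :=
      ⟨coeff_zero_one, fun b _ hb ↦ (hb (Subsingleton.elim _ _)).elim⟩
    exact ⟨f, hf, _, _, (hf1 ▸ hone).cons (M := 1) (by simp [Finsupp.weight_eq_sum]),
      by simp [Fin.forall_fin_one], rfl⟩
  | succ N ih =>
    obtain ⟨c, hc, w, a, hmonic, hpos, hlast⟩ :=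
      ih _ hlead (ringKrullDim_lt_height_leadingCoeff hlead)
    obtain ⟨f, hf, rfl⟩ := exists_mem_leadingCoeff_finSuccEquiv_eq hc
    let M := f.support.sup (fun b ↦ weight w b.tail) + 1
    refine ⟨f, hf, _, _, hmonic.cons (M := M) fun b hb ↦ Nat.lt_succ_of_le ?_,
      Fin.cases (Nat.succ_pos _) hpos, hlast⟩
    exact Finset.le_sup (f := fun b : Fin (N + 2) →₀ ℕ ↦ weight w b.tail) hb

lemma exists_mem_isWeightMonic {ι : Type*} [Finite ι] (i₀ : ι) (J : Ideal (MvPolynomial ι R))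
    (hJ : ringKrullDim R < J.height) :
    ∃ f ∈ J, ∃ w a, IsWeightMonic w f a ∧ (∀ i, 0 < w i) ∧ w i₀ = 1 := by
  have : Nonempty ι := ⟨i₀⟩
  obtain ⟨N, hN⟩ := Nat.exists_eq_succ_of_ne_zero (Nat.card_pos (α := ι)).ne'
  let e₀ : ι ≃ Fin (N + 1) := (Finite.equivFin ι).trans (finCongr hN)
  let e : Fin (N + 1) ≃ ι := (e₀.trans (Equiv.swap (e₀ i₀) (Fin.last N))).symm
  obtain ⟨f, hf, w, a, hmonic, hpos, hlast⟩ :=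
    exists_mem_isWeightMonic_fin (J.comap (renameEquiv R e).toRingEquiv)
      (by rwa [RingEquiv.height_comap])
  exact ⟨rename e f, hf, _, _, hmonic.rename e, fun i ↦ hpos _, by simpa [e] using hlast⟩

end WeightMonic

section Evaluation

open Finsupp (weight)

variable {ι R S B : Type*} [CommRing R] [CommRing S] [CommRing B] [Algebra S B]
  {w : ι → ℕ} {τ : S} {v : ι → S} {g : ι → B}

lemma algebraMap_pow_weight_mul_prod
    (hv : ∀ i, algebraMap S B (τ ^ w i) * g i = algebraMap S B (v i)) (b : ι →₀ ℕ) :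
    algebraMap S B (τ ^ weight w b) * b.prod (fun i k ↦ g i ^ k) =
      algebraMap S B (b.prod fun i k ↦ v i ^ k) := by
  have hpow : τ ^ weight w b = b.prod fun i k ↦ (τ ^ w i) ^ k := by
    simp only [Finsupp.weight_apply, Finsupp.sum, Finsupp.prod, ← Finset.prod_pow_eq_pow_sum,
      smul_eq_mul, mul_comm (b _), pow_mul]
  simp only [hpow, Finsupp.prod, map_prod, map_pow _ (_ ^ w _), map_pow _ (v _), ← hv, mul_pow,
    Finset.prod_mul_distrib]

variable [Algebra R S] [Algebra R B] [IsScalarTower R S B]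

lemma exists_pow_mul_aeval_eq_of_weight_lt {f : MvPolynomial ι R} {W : ℕ}
    (hf : ∀ b ∈ f.support, weight w b < W)
    (hv : ∀ i, algebraMap S B (τ ^ w i) * g i = algebraMap S B (v i)) :
    ∃ s : S, algebraMap S B (τ ^ W) * aeval g f = algebraMap S B (τ * s) := by
  refine ⟨∑ b ∈ f.support, algebraMap R S (coeff b f) * τ ^ (W - weight w b - 1) *
    b.prod fun i k ↦ v i ^ k, ?_⟩
  rw [aeval_def, eval₂_eq, Finset.mul_sum, Finset.mul_sum, map_sum]
  refine Finset.sum_congr rfl fun b hb ↦ ?_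
  have hW : τ ^ W = τ * τ ^ (W - weight w b - 1) * τ ^ weight w b := by
    rw [← pow_succ', ← pow_add]
    congr 1
    have := hf b hb
    omega
  rw [hW, IsScalarTower.algebraMap_apply R S B]
  simp only [map_mul, ← algebraMap_pow_weight_mul_prod hv]
  simp only [Finsupp.prod]
  ring

lemma IsWeightMonic.exists_pow_weight_mul_aeval_eq {f : MvPolynomial ι R} {a : ι →₀ ℕ}
    (h : IsWeightMonic w f a)
    (hv : ∀ i, algebraMap S B (τ ^ w i) * g i = algebraMap S B (v i)) :
    ∃ s : S, algebraMap S B (τ ^ weight w a) * aeval g f =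
      algebraMap S B ((a.prod fun i k ↦ v i ^ k) + τ * s) := by
  have hlower : ∀ b ∈ (f - monomial a 1).support, weight w b < weight w a := by
    classical
    intro b hb
    obtain rfl | hba := eq_or_ne b a
    · simp [coeff_monomial, h.coeff_eq_one] at hb
    · exact h.weight_lt b (by simpa [coeff_monomial, hba.symm] using hb) hba
  obtain ⟨s, hs⟩ := exists_pow_mul_aeval_eq_of_weight_lt hlower hv
  refine ⟨s, ?_⟩
  have hlead := algebraMap_pow_weight_mul_prod hv a
  rw [map_sub, aeval_monomial, map_one, one_mul] at hs
  rw [map_add, ← hlead, ← hs]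
  ring

lemma IsWeightMonic.exists_one_add_mul_mem {f : MvPolynomial ι R} {a : ι →₀ ℕ}
    (h : IsWeightMonic w f a)
    (hv : ∀ i, algebraMap S B (τ ^ w i) * g i = algebraMap S B (v i))
    (hco : ∀ i, IsCoprime (v i) τ) {I : Ideal B} (hI : aeval g f ∈ I) :
    ∃ s : S, algebraMap S B (1 + τ * s) ∈ I := by
  obtain ⟨s, hs⟩ := h.exists_pow_weight_mul_aeval_eq hv
  have hprod : IsCoprime (a.prod fun i k ↦ v i ^ k) τ :=
    IsCoprime.prod_left fun i _ ↦ (hco i).pow_left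
  obtain ⟨x, y, hxy⟩ := hprod.add_mul_left_left s
  have hmul : 1 + τ * -y = x * ((a.prod fun i k ↦ v i ^ k) + τ * s) := by
    linear_combination -hxy
  refine ⟨-y, ?_⟩
  rw [hmul, map_mul, ← hs]
  exact I.mul_mem_left _ (I.mul_mem_left _ hI)

end Evaluation

lemma map_coe_units_zpow_eq {M N F : Type*} [Monoid M] [Monoid N] [FunLike F M N]
    [MonoidHomClass F M N] (φ : F) {t : Mˣ} {u : Nˣ} (h : φ t = u) (z : ℤ) :
    φ ↑(t ^ z) = (↑(u ^ z) : N) := by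
  have ht : Units.map (φ : M →* N) t = u := Units.ext h
  exact congrArg Units.val ((map_zpow _ t z).trans (congrArg (· ^ z) ht))

lemma units_pow_mul_zpow_neg {M : Type*} [Monoid M] (t : Mˣ) (k : ℕ) :
    (t ^ k * ↑(t ^ (-k : ℤ)) : M) = 1 := by
  rw [← Units.val_pow_eq_pow_val, ← Units.val_mul, zpow_neg, zpow_natCast, mul_inv_cancel,
    Units.val_one]

section Laurent

variable (R : Type*) [CommRing R] {m n : ℕ} (B : Type*) [CommRing B]
  [Algebra (MvPolynomial (Fin m ⊕ Fin n) R) B]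

/-- The image of a variable of `R[X_1,…,X_m,Y_1,…,Y_n]` in an algebra over it: `X_i` is indexed
by `Sum.inl i` and `Y_j` by `Sum.inr j`. -/
def laurentVar (i : Fin m ⊕ Fin n) : B := algebraMap (MvPolynomial (Fin m ⊕ Fin n) R) B (X i)

variable {B} in
lemma algHom_algebraMap_eq_aeval {C : Type*} [CommRing C] [Algebra R C] [Algebra R B]
    [IsScalarTower R (MvPolynomial (Fin m ⊕ Fin n) R) B] (φ : B →ₐ[R] C)
    (f : MvPolynomial (Fin m ⊕ Fin n) R) :
    φ (algebraMap _ B f) = aeval (fun i ↦ φ (laurentVar R B i)) f :=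
  DFunLike.congr_fun (aeval_unique (φ.comp (IsScalarTower.toAlgHom R _ B))) f

lemma algebraMap_laurentVar {S : Type*} [CommRing S] [Algebra (MvPolynomial (Fin m ⊕ Fin n) R) S]
    [Algebra S B] [IsScalarTower (MvPolynomial (Fin m ⊕ Fin n) R) S B] (i : Fin m ⊕ Fin n) :
    algebraMap S B (laurentVar R S i) = laurentVar R B i :=
  (IsScalarTower.algebraMap_apply _ S B _).symm

variable [IsLocalization (Ymonoid R m n) B]

variable (m) in
/-- The variable `Y_j`, as a unit of the Laurent polynomial ring `B`. -/
def laurentUnit (j : Fin n) : Bˣ :=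
  (IsLocalization.map_units B
    (⟨X (Sum.inr j), Submonoid.subset_closure ⟨j, rfl⟩⟩ : Ymonoid R m n)).unit

lemma coe_laurentUnit (j : Fin n) :
    (laurentUnit R m B j : B) = laurentVar R B (Sum.inr j : Fin m ⊕ Fin n) := rfl

section Lift

variable {R B} {C : Type*} [CommRing C] [Algebra R C]

lemma isUnit_aeval_of_mem_Ymonoid {g : Fin m ⊕ Fin n → C} (hg : ∀ j, IsUnit (g (Sum.inr j)))
    (s : Ymonoid R m n) : IsUnit (aeval (R := R) g s.1) := by
  have hle : Ymonoid R m n ≤ (IsUnit.submonoid C).comap (aeval (R := R) g) :=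
    Submonoid.closure_le.2 <| Set.range_subset_iff.2 fun j ↦ by
      simpa [IsUnit.mem_submonoid_iff] using hg j
  exact hle s.2

variable [Algebra R B] [IsScalarTower R (MvPolynomial (Fin m ⊕ Fin n) R) B]

/-- The `R`-algebra homomorphism out of the Laurent polynomial ring that sends the variables to
prescribed values, those of the `Y_j` being units. -/
def laurentLift (g : Fin m ⊕ Fin n → C) (hg : ∀ j, IsUnit (g (Sum.inr j))) : B →ₐ[R] C :=
  IsLocalization.liftAlgHom (M := Ymonoid R m n) (f := aeval g) (isUnit_aeval_of_mem_Ymonoid hg)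

@[simp]
lemma laurentLift_laurentVar (g : Fin m ⊕ Fin n → C) (hg : ∀ j, IsUnit (g (Sum.inr j)))
    (i : Fin m ⊕ Fin n) : (laurentLift g hg : B →ₐ[R] C) (laurentVar R B i) = g i :=
  (IsLocalization.lift_eq (isUnit_aeval_of_mem_Ymonoid hg) _).trans (aeval_X _ _)

lemma laurentAlgHom_ext {φ ψ : B →ₐ[R] C}
    (h : ∀ i : Fin m ⊕ Fin n, φ (laurentVar R B i) = ψ (laurentVar R B i)) : φ = ψ :=
  IsLocalization.algHom_ext (W := Ymonoid R m n) <| MvPolynomial.algHom_ext h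

end Lift

variable [Algebra R B] [IsScalarTower R (MvPolynomial (Fin m ⊕ Fin n) R) B]

section Invert

variable (m) in
/-- The endomorphism of the Laurent polynomial ring that replaces `Y_{j₀}` by its inverse. -/
def laurentInvertHom (j₀ : Fin n) : B →ₐ[R] B :=
  laurentLift (Function.update (laurentVar R B) (Sum.inr j₀ : Fin m ⊕ Fin n)
    ↑(laurentUnit R m B j₀)⁻¹) fun j ↦ by
      obtain rfl | hj := eq_or_ne j j₀
      · simp
      · simp [hj, ← coe_laurentUnit]

lemma laurentInvertHom_of_ne {j₀ : Fin n} {i : Fin m ⊕ Fin n} (hi : i ≠ Sum.inr j₀) :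
    laurentInvertHom R m B j₀ (laurentVar R B i) = laurentVar R B i := by
  rw [laurentInvertHom, laurentLift_laurentVar, Function.update_of_ne hi]

lemma laurentInvertHom_self (j₀ : Fin n) :
    laurentInvertHom R m B j₀ (laurentUnit R m B j₀) = ↑(laurentUnit R m B j₀ ^ (-1 : ℤ)) := by
  rw [coe_laurentUnit, laurentInvertHom, laurentLift_laurentVar, Function.update_self, zpow_neg_one]

lemma laurentInvertHom_comp_self (j₀ : Fin n) :
    (laurentInvertHom R m B j₀).comp (laurentInvertHom R m B j₀) = AlgHom.id R B := by
  refine laurentAlgHom_ext fun i : Fin m ⊕ Fin n ↦ ?_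
  obtain rfl | hi := eq_or_ne i (Sum.inr j₀)
  · rw [AlgHom.comp_apply, ← coe_laurentUnit, laurentInvertHom_self,
      map_coe_units_zpow_eq _ (laurentInvertHom_self R B j₀), ← zpow_mul, neg_one_mul, neg_neg,
      zpow_one, AlgHom.id_apply]
  · simp [laurentInvertHom_of_ne R B hi]

variable (m) in
/-- The involution of the Laurent polynomial ring that replaces `Y_{j₀}` by its inverse. -/
def laurentInvert (j₀ : Fin n) : B ≃ₐ[R] B :=
  AlgEquiv.ofAlgHom _ _ (laurentInvertHom_comp_self R (m := m) B j₀)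
    (laurentInvertHom_comp_self R B j₀)

lemma laurentInvert_of_ne {j₀ : Fin n} {i : Fin m ⊕ Fin n} (hi : i ≠ Sum.inr j₀) :
    laurentInvert R m B j₀ (laurentVar R B i) = laurentVar R B i :=
  laurentInvertHom_of_ne R B hi

lemma laurentInvert_self (j₀ : Fin n) :
    laurentInvert R m B j₀ (laurentUnit R m B j₀) = ↑(laurentUnit R m B j₀ ^ (-1 : ℤ)) :=
  laurentInvertHom_self R B j₀

end Invert

section Shear

variable {B}

/-- The endomorphism `X_i ↦ X_i + b_i`, `Y_j ↦ Y_j u_j` of the Laurent polynomial ring. -/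
def shear (b : Fin m → B) (u : Fin n → Bˣ) : B →ₐ[R] B :=
  laurentLift (Sum.elim (fun i ↦ laurentVar R B (Sum.inl i : Fin m ⊕ Fin n) + b i)
    fun j ↦ ↑(laurentUnit R m B j * u j)) fun _ ↦ Units.isUnit _

@[simp]
lemma shear_inl (b : Fin m → B) (u : Fin n → Bˣ) (i : Fin m) :
    shear R b u (laurentVar R B (Sum.inl i : Fin m ⊕ Fin n)) =
      laurentVar R B (Sum.inl i : Fin m ⊕ Fin n) + b i := by
  simp [shear]

@[simp]
lemma shear_inr (b : Fin m → B) (u : Fin n → Bˣ) (j : Fin n) :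
    shear R b u (laurentUnit R m B j) = laurentUnit R m B j * u j := by
  simp [shear, coe_laurentUnit]

lemma shear_comp_shear {b b' : Fin m → B} {u u' : Fin n → Bˣ}
    (hb : ∀ i, shear R b u (b' i) = b' i) (hu : ∀ j, shear R b u (u' j) = u' j) :
    (shear R b u).comp (shear R b' u') = shear R (b + b') (u * u') := by
  refine laurentAlgHom_ext (m := m) (n := n) (Sum.rec (fun i ↦ ?_) fun j ↦ ?_)
  · simp [hb, add_assoc]
  · simp [← coe_laurentUnit, hu, mul_assoc]

lemma shear_zero_one : shear R (0 : Fin m → B) (1 : Fin n → Bˣ) = AlgHom.id R B :=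
  laurentAlgHom_ext (m := m) (n := n) (Sum.rec (by simp) (by simp [← coe_laurentUnit]))

lemma shear_zpow_eq_self {b : Fin m → B} {u : Fin n → Bˣ} {j₀ : Fin n} (hu : u j₀ = 1) (z : ℤ) :
    shear R b u ↑(laurentUnit R m B j₀ ^ z) = ↑(laurentUnit R m B j₀ ^ z) :=
  map_coe_units_zpow_eq _ (by simp [hu]) z

/-- The automorphism `X_i ↦ X_i + t ^ c_i`, `Y_j ↦ Y_j t ^ k_j` of the Laurent polynomial ring,
where `t = Y_{j₀}`; it fixes `t` because `k_{j₀} = 0`. -/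
def zpowShear {j₀ : Fin n} (c : Fin m → ℤ) {k : Fin n → ℤ} (hk : k j₀ = 0) : B ≃ₐ[R] B :=
  let b : Fin m → B := fun i ↦ ↑(laurentUnit R m B j₀ ^ c i)
  let u : Fin n → Bˣ := fun j ↦ laurentUnit R m B j₀ ^ k j
  have hu : u j₀ = 1 := by simp [u, hk]
  AlgEquiv.ofAlgHom (shear R b u) (shear R (-b) u⁻¹)
    (by
      rw [shear_comp_shear, add_neg_cancel, mul_inv_cancel, shear_zero_one]
      · simp [b, shear_zpow_eq_self R hu]
      · simp [u, ← zpow_neg, shear_zpow_eq_self R hu])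
    (by
      have hu' : u⁻¹ j₀ = 1 := by simp [hu]
      rw [shear_comp_shear, neg_add_cancel, inv_mul_cancel, shear_zero_one]
      · simp [b, shear_zpow_eq_self R hu']
      · simp [u, shear_zpow_eq_self R hu'])

variable (B) in
/-- The automorphism `X_i ↦ X_i + t ^ (-w_i)`, `Y_j ↦ Y_j t ^ (-w_j)` for `j ≠ j₀`, `t ↦ t` of the
Laurent polynomial ring, where `t = Y_{j₀}`. -/
def weightShear (j₀ : Fin n) (w : Fin m ⊕ Fin n → ℕ) : B ≃ₐ[R] B :=
  zpowShear R (fun i ↦ -(w (Sum.inl i) : ℤ))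
    (Function.update_self j₀ 0 fun j ↦ -(w (Sum.inr j) : ℤ))

variable (j₀ : Fin n) (w : Fin m ⊕ Fin n → ℕ)

lemma weightShear_inl (i : Fin m) :
    weightShear R B j₀ w (laurentVar R B (Sum.inl i : Fin m ⊕ Fin n)) =
      laurentVar R B (Sum.inl i : Fin m ⊕ Fin n) +
        ↑(laurentUnit R m B j₀ ^ (-(w (Sum.inl i) : ℤ))) :=
  shear_inl R _ _ i

lemma weightShear_inr_of_ne {j : Fin n} (hj : j ≠ j₀) :
    weightShear R B j₀ w (laurentUnit R m B j) =
      laurentUnit R m B j * ↑(laurentUnit R m B j₀ ^ (-(w (Sum.inr j) : ℤ))) :=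
  (shear_inr R _ _ j).trans (by rw [Function.update_of_ne hj])

lemma weightShear_self : weightShear R B j₀ w (laurentUnit R m B j₀) = laurentUnit R m B j₀ :=
  (shear_inr R _ _ j₀).trans (by simp)

lemma pow_mul_weightShear_laurentInvert_inl (i : Fin m) :
    laurentUnit R m B j₀ ^ w (Sum.inl i) *
        weightShear R B j₀ w
          (laurentInvert R m B j₀ (laurentVar R B (Sum.inl i : Fin m ⊕ Fin n))) =
      1 + laurentUnit R m B j₀ ^ w (Sum.inl i) * laurentVar R B (Sum.inl i : Fin m ⊕ Fin n) := by
  rw [laurentInvert_of_ne R B Sum.inl_ne_inr, weightShear_inl, mul_add,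
    units_pow_mul_zpow_neg, add_comm]

lemma pow_mul_weightShear_laurentInvert_inr_of_ne {j : Fin n} (hj : j ≠ j₀) :
    laurentUnit R m B j₀ ^ w (Sum.inr j) *
        weightShear R B j₀ w (laurentInvert R m B j₀ (laurentUnit R m B j)) =
      laurentUnit R m B j := by
  rw [coe_laurentUnit R B j, laurentInvert_of_ne R B (by simpa using hj), ← coe_laurentUnit,
    weightShear_inr_of_ne R j₀ w hj, mul_left_comm, units_pow_mul_zpow_neg, mul_one]

lemma mul_weightShear_laurentInvert_self :
    laurentUnit R m B j₀ *
      weightShear R B j₀ w (laurentInvert R m B j₀ (laurentUnit R m B j₀)) = 1 := by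
  rw [laurentInvert_self, map_coe_units_zpow_eq _ (weightShear_self R j₀ w), zpow_neg_one,
    Units.mul_inv]

end Shear

section SpecialMonic

variable {S : Type*} [CommRing S] [Algebra (MvPolynomial (Fin m ⊕ Fin n) R) S] [Algebra S B]
  [IsScalarTower (MvPolynomial (Fin m ⊕ Fin n) R) S B]

variable {R B}

lemma exists_isCoprime_of_weightShear {j₀ : Fin n}
    (hS : ∀ j ≠ j₀, IsUnit (laurentVar R S (Sum.inr j : Fin m ⊕ Fin n)))
    {w : Fin m ⊕ Fin n → ℕ} (hpos : ∀ i, 0 < w i) (hw : w (Sum.inr j₀) = 1) (i : Fin m ⊕ Fin n) :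
    ∃ v : S, algebraMap S B (laurentVar R S (Sum.inr j₀ : Fin m ⊕ Fin n) ^ w i) *
        weightShear R B j₀ w (laurentInvert R m B j₀ (laurentVar R B i)) = algebraMap S B v ∧
      IsCoprime v (laurentVar R S (Sum.inr j₀ : Fin m ⊕ Fin n)) := by
  set τ := laurentVar R S (Sum.inr j₀ : Fin m ⊕ Fin n)
  have hτ : algebraMap S B τ = laurentUnit R m B j₀ := algebraMap_laurentVar R B _
  rcases i with i | j
  · refine ⟨1 + τ * (τ ^ (w (Sum.inl i) - 1) * laurentVar R S (Sum.inl i : Fin m ⊕ Fin n)), ?_,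
      isCoprime_one_left.add_mul_left_left _⟩
    rw [← mul_assoc, mul_pow_sub_one (hpos _).ne', map_pow, hτ,
      pow_mul_weightShear_laurentInvert_inl, map_add, map_one, map_mul, map_pow, hτ,
      algebraMap_laurentVar]
  · obtain rfl | hj := eq_or_ne j j₀
    · refine ⟨1, ?_, isCoprime_one_left⟩
      rw [hw, pow_one, hτ, ← coe_laurentUnit, mul_weightShear_laurentInvert_self, map_one]
    · obtain ⟨s, hs⟩ := (hS j hj).exists_left_inv
      refine ⟨laurentVar R S (Sum.inr j : Fin m ⊕ Fin n), ?_, s, 0, by rw [hs, zero_mul, add_zero]⟩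
      rw [map_pow, hτ, algebraMap_laurentVar, ← coe_laurentUnit,
        pow_mul_weightShear_laurentInvert_inr_of_ne R j₀ w hj]

variable [IsNoetherianRing R]

lemma exists_isWeightMonic_laurentInvert_mem (j₀ : Fin n) {I : Ideal B}
    (hI : ringKrullDim R < I.height) :
    ∃ f : MvPolynomial (Fin m ⊕ Fin n) R, laurentInvert R m B j₀ (algebraMap _ B f) ∈ I ∧
      ∃ w a, IsWeightMonic w f a ∧ (∀ i, 0 < w i) ∧ w (Sum.inr j₀) = 1 := by
  refine exists_mem_isWeightMonic (Sum.inr j₀) ((I.comap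
    (laurentInvert R m B j₀).toRingEquiv).under (MvPolynomial (Fin m ⊕ Fin n) R)) ?_
  rwa [IsLocalization.height_under (Ymonoid R m n), RingEquiv.height_comap]

lemma exists_weightShear_one_add_mul_mem (j₀ : Fin n) {I : Ideal B}
    (hI : ringKrullDim R < I.height) [Algebra R S] [IsScalarTower R S B]
    (hS : ∀ j ≠ j₀, IsUnit (laurentVar R S (Sum.inr j : Fin m ⊕ Fin n))) :
    ∃ (w : Fin m ⊕ Fin n → ℕ) (s : S),
      1 + laurentUnit R m B j₀ * algebraMap S B s ∈ I.map (weightShear R B j₀ w) := by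
  obtain ⟨f, hf, w, a, hmonic, hpos, hw⟩ := exists_isWeightMonic_laurentInvert_mem (m := m) j₀ hI
  choose v hv hco using exists_isCoprime_of_weightShear (B := B) hS hpos hw
  have hmem := Ideal.mem_map_of_mem (weightShear R B j₀ w) hf
  rw [← AlgEquiv.trans_apply, ← AlgEquiv.toAlgHom_apply, algHom_algebraMap_eq_aeval] at hmem
  obtain ⟨s, hs⟩ := hmonic.exists_one_add_mul_mem hv hco hmem
  refine ⟨w, s, ?_⟩
  rwa [map_add, map_one, map_mul, algebraMap_laurentVar] at hs

end SpecialMonic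

end Laurent

/-- **Lemma (Mandal).** Let `R` be Noetherian of finite Krull dimension `d`, `n > 0`
(here the Laurent variables are indexed by `Fin (n+1)`, so there are `n + 1 ≥ 1` of them,
the last one playing the role of `Y_n`), and `B = R[X_1,…,X_m,Y_1^{±1},…,Y_{n+1}^{±1}]`.
Let `I` be an ideal of `B` of height `> d`.  Then there is an `R[Y_{n+1}^{±1}]`-algebra
automorphism `Θ` of `B` (an `R`-algebra automorphism fixing the last Laurent variable)
such that `Θ(I)` contains an element `1 + Y_{n+1}·h` with
`h ∈ R[X_1,…,X_m,Y_1^{±1},…,Y_n^{±1},Y_{n+1}]`. -/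
theorem laurent_ideal_contains_special_monic
    (R : Type*) [CommRing R] [IsNoetherianRing R] (d : ℕ) (hdim : ringKrullDim R = d)
    (m n : ℕ)
    (B : Type*) [CommRing B] [Algebra R B]
    [Algebra (MvPolynomial (Fin m ⊕ Fin (n + 1)) R) B]
    [IsScalarTower R (MvPolynomial (Fin m ⊕ Fin (n + 1)) R) B]
    [IsLocalization (Ymonoid R m (n + 1)) B]
    (I : Ideal B)
    (hht : (d : ℕ∞) < ⨅ (p : PrimeSpectrum B) (_ : I ≤ p.asIdeal), Order.height p) :
    ∃ Θ : B ≃ₐ[R] B,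
      Θ (algebraMap (MvPolynomial (Fin m ⊕ Fin (n + 1)) R) B (X (Sum.inr (Fin.last n))))
        = algebraMap (MvPolynomial (Fin m ⊕ Fin (n + 1)) R) B (X (Sum.inr (Fin.last n))) ∧
      ∃ h : B,
        (∃ (p s : MvPolynomial (Fin m ⊕ Fin (n + 1)) R),
          s ∈ Submonoid.closure
            (Set.range fun j : Fin n =>
              (X (Sum.inr (Fin.castSucc j)) : MvPolynomial (Fin m ⊕ Fin (n + 1)) R)) ∧
          h * algebraMap (MvPolynomial (Fin m ⊕ Fin (n + 1)) R) B s
            = algebraMap (MvPolynomial (Fin m ⊕ Fin (n + 1)) R) B p) ∧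
        1 + algebraMap (MvPolynomial (Fin m ⊕ Fin (n + 1)) R) B (X (Sum.inr (Fin.last n))) * h
          ∈ I.map Θ := by
  let M : Submonoid (MvPolynomial (Fin m ⊕ Fin (n + 1)) R) :=
    Submonoid.closure (Set.range fun j : Fin n ↦ X (Sum.inr (Fin.castSucc j)))
  have hM : M ≤ Ymonoid R m (n + 1) :=
    Submonoid.closure_mono (Set.range_comp_subset_range Fin.castSucc fun j ↦ X (Sum.inr j))
  let S := Localization M
  let : Algebra S B := IsLocalization.localizationAlgebraOfSubmonoidLe S B M _ hM
  have := IsLocalization.localization_isScalarTower_of_submonoid_le S B M _ hM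
  have : IsScalarTower R S B := .to₁₃₄ R (MvPolynomial (Fin m ⊕ Fin (n + 1)) R) S B
  have hS (j) (hj : j ≠ Fin.last n) :
      IsUnit (laurentVar R S (Sum.inr j : Fin m ⊕ Fin (n + 1))) := by
    obtain ⟨j, rfl⟩ := Fin.exists_castSucc_eq.2 hj
    exact IsLocalization.map_units S (⟨_, Submonoid.subset_closure ⟨j, rfl⟩⟩ : M)
  rw [← height_eq_iInf_primeSpectrum] at hht
  obtain ⟨w, s, hs⟩ := exists_weightShear_one_add_mul_mem (m := m) (Fin.last n)
    (hdim.trans_lt (WithBot.coe_lt_coe.2 hht)) hS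
  obtain ⟨⟨p, q⟩, hpq⟩ := IsLocalization.surj M s
  refine ⟨weightShear R B (Fin.last n) w, weightShear_self R _ w, algebraMap S B s,
    ⟨p, q, q.2, ?_⟩, hs⟩
  simp only [IsScalarTower.algebraMap_apply _ S B, ← map_mul, hpq]
end
end

section
/- Let R be a commutative Noetherian ring, I an ideal of R[X] containing a monic polynomial, and P = Q ⊕ R a finitely generated projective R-module of constant rank r with r ≥ dim(R[X]/I) + 2. Then every R[X]/I-linear surjection φ : (P ⊗_R R[X])/I(P ⊗_R R[X]) ↠ I/I² can be lifted to an R[X]-linear surjection Φ : P ⊗_R R[X] ↠ I. -/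
open TensorProduct

noncomputable section

/-! Write `P = Q ⊕ R` and lift `φ` to an `R`-linear map `F = (f, g) : Q ⊕ R → I`. Adding a multiple
of a monic element of `I ^ 2` makes `g` monic. Let `J = I ∩ R`. Then `R[X] / (g, J)` and `R[X] / I`
are integral over `R / J`, which embeds into the latter, so `dim (R[X] / (g, J)) < rank Q`. Hence
general position (prime avoidance applied over a stratification of the spectrum on whose pieces `Q`
has free quotients of the required rank) moves `f` modulo `I ^ 2` so that `I` lies in the radical of
`N + J[X]`, where `N` is the ideal generated by the image of `F`. Together with `I = N + I ^ 2` this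
yields `I = N + J[X] I`, and since `R[X] / N` is finite over `R`, Nakayama's lemma gives
`t ∈ 1 + J ^ 2` with `t I ⊆ N`.

Finally replace every coordinate `a` of `F` by `t ^ d * a (X + (1 - t) / t)` with `d` large. This
does not change `a` modulo `1 - t ∈ I ^ 2`, while the monic coordinate, with `d` its degree, becomes
`1` modulo `t`. Hence the ideal generated by the new image is comaximal with `t`; as it contains
`t ^ n * (1 - t)` for some `n`, it contains `1 - t` and is therefore all of `I`. -/

section GeneralPosition

theorem ringKrullDim_le_of_ker_algebraMap_le {R S E : Type*} [CommRing R] [CommRing S]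
    [CommRing E] [Algebra R S] [Algebra R E] [Algebra.IsIntegral R S] [Algebra.IsIntegral R E]
    (h : RingHom.ker (algebraMap R S) ≤ RingHom.ker (algebraMap R E)) :
    ringKrullDim E ≤ ringKrullDim S := by
  refine iSup_le fun p => ?_
  have hmono : StrictMono (PrimeSpectrum.comap (algebraMap R E)) := fun a b hab =>
    Ideal.IsIntegral.comap_lt_comap (R := R) (I := a.asIdeal) (J := b.asIdeal) hab
  let l := p.map _ hmono
  have hle : (⊥ : Ideal S).comap (algebraMap R S) ≤ l.head.asIdeal :=
    h.trans (Ideal.comap_mono bot_le)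
  obtain ⟨P, -, hP, hPc⟩ := Ideal.exists_ideal_over_prime_of_isIntegral l.head.asIdeal ⊥ hle
  have : P.LiesOver l.head.asIdeal := ⟨hPc.symm⟩
  obtain ⟨L, hL, -⟩ := Ideal.exists_ltSeries_of_hasGoingUp l P
  rw [show p.length = L.length from hL.symm ▸ rfl]
  exact le_iSup (fun q : LTSeries (PrimeSpectrum S) => (q.length : WithBot ℕ∞)) L

theorem exists_mem_forall_add_notMem {E : Type*} [CommRing E] {S : Set (Ideal E)}
    (hfin : S.Finite) (hprime : ∀ p ∈ S, p.IsPrime) (hanti : IsAntichain (· ≤ ·) S) {𝔠 : Ideal E}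
    (h𝔠 : ∀ p ∈ S, ¬ 𝔠 ≤ p) (a : E) : ∃ c ∈ 𝔠, ∀ p ∈ S, a + c ∉ p := by
  classical
  let T : Finset (Ideal E) := (hfin.subset (Set.sep_subset S (a ∉ ·))).toFinset
  have mem_T {p : Ideal E} : p ∈ T ↔ p ∈ S ∧ a ∉ p := Set.Finite.mem_toFinset _
  obtain ⟨c, hcK, hc⟩ : ∃ c ∈ 𝔠 ⊓ T.inf id, ∀ p ∈ S, a ∈ p → c ∉ p := by
    by_contra! hcon
    obtain ⟨p, hp, hle⟩ := (Ideal.subset_union_prime_finite (s := {p ∈ S | a ∈ p})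
      (hfin.subset (Set.sep_subset _ _)) (f := id) ⊤ ⊤ fun p hp _ _ => hprime p hp.1).1
      fun x hx => by
        obtain ⟨p, hp, hap, hxp⟩ := hcon x hx
        exact Set.mem_biUnion ⟨hp, hap⟩ hxp
    rcases (hprime p hp.1).inf_le.1 hle with hle | hle
    · exact h𝔠 p hp.1 hle
    · obtain ⟨q, hq, hqp⟩ := (hprime p hp.1).inf_le'.1 hle
      obtain rfl := hanti.eq (mem_T.1 hq).1 hp.1 hqp
      exact (mem_T.1 hq).2 hp.2
  refine ⟨c, hcK.1, fun p hp hacp => ?_⟩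
  by_cases hap : a ∈ p
  · exact hc p hp hap ((Ideal.add_mem_iff_right p hap).1 hacp)
  · have hcp : c ∈ p := Finset.inf_le (f := id) (mem_T.2 ⟨hp, hap⟩) hcK.2
    exact hap ((Ideal.add_mem_iff_left p hcp).1 hacp)

theorem exists_forall_le_height_of_forall_add_mem {E : Type*} [CommRing E] [IsNoetherianRing E]
    (𝔠 : Ideal E) {m : ℕ} (a : Fin m → E) :
    ∃ c : Fin m → E, (∀ i, c i ∈ 𝔠) ∧ ∀ p : Ideal E, p.IsPrime → ¬ 𝔠 ≤ p →
      (∀ i, a i + c i ∈ p) → (m : ℕ∞) ≤ p.height := by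
  induction m with
  | zero => exact ⟨0, fun _ => 𝔠.zero_mem, by simp⟩
  | succ m ih =>
    obtain ⟨c, hc, hheight⟩ := ih (Fin.init a)
    let O : Ideal E := Ideal.span (Set.range (Fin.init a + c))
    obtain ⟨d, hd, hdO⟩ := exists_mem_forall_add_notMem
      (S := {p ∈ O.minimalPrimes | ¬ 𝔠 ≤ p})
      ((Ideal.finite_minimalPrimes_of_isNoetherianRing E O).subset (Set.sep_subset _ _))
      (fun p hp => hp.1.1.1)
      (fun p hp q hq hne hpq => hne (hpq.antisymm (hq.1.2 hp.1.1 hpq)))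
      (fun p hp => hp.2) (a (Fin.last m))
    refine ⟨Fin.snoc c d, Fin.lastCases (by simpa using hd) (by simpa using hc),
      fun p hp h𝔠p hmem => ?_⟩
    have hOp : O ≤ p := Ideal.span_le.2 <| by
      rintro _ ⟨i, rfl⟩
      simpa [Fin.init] using hmem i.castSucc
    obtain ⟨q, hq, hqp⟩ := Ideal.exists_minimalPrimes_le hOp
    have h𝔠q : ¬ 𝔠 ≤ q := fun h => h𝔠p (h.trans hqp)
    have : q.IsPrime := hq.1.1
    have hqheight : (m : ℕ∞) ≤ q.height :=
      hheight q hq.1.1 h𝔠q fun i => hq.1.2 (Ideal.subset_span ⟨i, rfl⟩)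
    have hlt : q < p := hqp.lt_of_ne <| by
      rintro rfl
      exact hdO q ⟨hq, h𝔠q⟩ (by simpa using hmem (Fin.last m))
    calc ((m + 1 : ℕ) : ℕ∞) = m + 1 := by push_cast; rfl
      _ ≤ q.height + 1 := by gcongr
      _ ≤ p.height := Ideal.height_add_one_le_of_lt_of_isPrime hlt

theorem exists_comp_eq_smul_id_of_isLocalizedModule {R M N M' N' : Type*} [CommRing R]
    [AddCommGroup M] [AddCommGroup N] [AddCommGroup M'] [AddCommGroup N'] [Module R M]
    [Module R N] [Module R M'] [Module R N'] [Module.FinitePresentation R M]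
    [Module.FinitePresentation R N] (S : Submonoid R) (f : M →ₗ[R] M') (g : N →ₗ[R] N')
    [IsLocalizedModule S f] [IsLocalizedModule S g] {π : M' →ₗ[R] N'} {σ : N' →ₗ[R] M'}
    (h : π ∘ₗ σ = LinearMap.id) :
    ∃ s ∈ S, ∃ (π₀ : M →ₗ[R] N) (σ₀ : N →ₗ[R] M), π₀ ∘ₗ σ₀ = s • LinearMap.id := by
  obtain ⟨π₀, s, hπ⟩ := Module.FinitePresentation.exists_lift_of_isLocalizedModule S g (π ∘ₗ f)
  obtain ⟨σ₀, t, hσ⟩ := Module.FinitePresentation.exists_lift_of_isLocalizedModule S f (σ ∘ₗ g)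
  have hcomp : g ∘ₗ (π₀ ∘ₗ σ₀) = g ∘ₗ ((s * t) • LinearMap.id) := by
    calc g ∘ₗ (π₀ ∘ₗ σ₀) = s • (π ∘ₗ (f ∘ₗ σ₀)) := by
          rw [← LinearMap.comp_assoc, hπ, LinearMap.smul_comp, LinearMap.comp_assoc]
      _ = s • t • ((π ∘ₗ σ) ∘ₗ g) := by
          rw [hσ, Submonoid.smul_def t, LinearMap.comp_smul, LinearMap.comp_assoc]; rfl
      _ = g ∘ₗ ((s * t) • LinearMap.id) := by
          rw [h, LinearMap.id_comp, smul_smul, Submonoid.smul_def, Submonoid.smul_def,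
            LinearMap.comp_smul, LinearMap.comp_id]
  obtain ⟨u, hu⟩ := Module.Finite.exists_smul_of_comp_eq_of_isLocalizedModule S g _ _ hcomp
  exact ⟨(u * (s * t) : S), SetLike.coe_mem _, u • π₀, σ₀, by
    rw [LinearMap.smul_comp, hu, smul_smul, Submonoid.smul_def]⟩

theorem exists_comp_eq_smul_id_of_le_rankAtStalk {R Q : Type*} [CommRing R] [AddCommGroup Q]
    [Module R Q] [Module.Finite R Q] [Module.Projective R Q] (p : PrimeSpectrum R) {m : ℕ}
    (hm : m ≤ Module.rankAtStalk Q p) :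
    ∃ s ∉ p.asIdeal, ∃ (π : Q →ₗ[R] Fin m → R) (σ : (Fin m → R) →ₗ[R] Q),
      π ∘ₗ σ = s • LinearMap.id := by
  let Rp := Localization.AtPrime p.asIdeal
  let Qp := LocalizedModule p.asIdeal.primeCompl Q
  have : Module.FinitePresentation R Q := Module.finitePresentation_of_projective R Q
  have : Module.Free Rp Qp := Module.free_of_flat_of_isLocalRing
  let b : Module.Basis (Fin (Module.rankAtStalk Q p)) Rp Qp := Module.finBasisOfFinrankEq Rp Qp rfl
  let π : Qp →ₗ[Rp] Fin m → Rp := LinearMap.funLeft Rp Rp (Fin.castLE hm) ∘ₗ b.equivFun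
  have hπ : Function.Surjective π :=
    (LinearMap.funLeft_surjective_of_injective Rp Rp _ (Fin.castLE_injective hm)).comp
      b.equivFun.surjective
  obtain ⟨σ, hσ⟩ := Module.projective_lifting_property π LinearMap.id hπ
  exact exists_comp_eq_smul_id_of_isLocalizedModule p.asIdeal.primeCompl
    (LocalizedModule.mkLinearMap _ Q)
    (LinearMap.pi fun i => Algebra.linearMap R Rp ∘ₗ LinearMap.proj (φ := fun _ : Fin m => R) i)
    (π := π.restrictScalars R) (σ := σ.restrictScalars R)
    (LinearMap.ext fun x => LinearMap.congr_fun hσ x)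

section

variable {R E Q : Type*} [CommRing R] [CommRing E] [IsNoetherianRing E] [Algebra R E]
  [AddCommGroup Q] [Module R Q]

theorem exists_sub_mem_forall_le_of_comp_eq_smul_id {m : ℕ} (hdim : ringKrullDim E < m)
    (𝔟 : Ideal E) {s : R} {π : Q →ₗ[R] Fin m → R} {σ : (Fin m → R) →ₗ[R] Q}
    (h : π ∘ₗ σ = s • LinearMap.id) (f : Q →ₗ[R] E) :
    ∃ f' : Q →ₗ[R] E, (∀ y, f' y - f y ∈ Ideal.span {algebraMap R E s} * 𝔟) ∧
      ∀ p : Ideal E, p.IsPrime → algebraMap R E s ∉ p → (∀ y, f' y ∈ p) → 𝔟 ≤ p := by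
  let s' : E := algebraMap R E s
  let v (i : Fin m) : Q := σ (Pi.single i 1)
  obtain ⟨d, hd, hheight⟩ := exists_forall_le_height_of_forall_add_mem
    (Ideal.span {s'} * (Ideal.span {s'} * 𝔟)) (fun i => f (v i))
  choose e he hed using fun i => Ideal.mem_span_singleton_mul.1 (hd i)
  let c : Q →ₗ[R] E := Fintype.linearCombination R e ∘ₗ π
  have hc (y) : c y = ∑ i, π y i • e i := by simp [c, Fintype.linearCombination_apply]
  have hcv (i) : c (v i) = d i := by
    have : π (v i) = s • Pi.single i 1 := LinearMap.congr_fun h _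
    simp [hc, this, Pi.single_apply, ite_smul, ← hed, s', ← Algebra.smul_def]
  refine ⟨f + c, fun y => ?_, fun p hp hsp hmem => ?_⟩
  · rw [LinearMap.add_apply, add_sub_cancel_left, hc]
    exact Ideal.sum_mem _ fun i _ => Submodule.smul_of_tower_mem _ _ (he i)
  · by_contra h𝔟p
    have hle : (m : ℕ∞) ≤ p.height := hheight p hp
      (by simp [hp.mul_le, s', hsp, h𝔟p])
      fun i => hcv i ▸ hmem (v i)
    have hlt : (p.height : WithBot ℕ∞) < (m : ℕ∞) :=
      (Ideal.height_le_ringKrullDim_of_ne_top hp.ne_top).trans_lt hdim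
    exact (WithBot.coe_lt_coe.1 hlt).not_ge hle

theorem exists_sub_mem_le_radical_span_range [Module.Finite R Q] [Module.Projective R Q] {m : ℕ}
    (hdim : ringKrullDim E < m)
    (hrank : ∀ p : PrimeSpectrum E, m ≤ Module.rankAtStalk Q (p.comap (algebraMap R E)))
    (𝔟 : Ideal E) (f : Q →ₗ[R] E) :
    ∃ f' : Q →ₗ[R] E, (∀ y, f' y - f y ∈ 𝔟) ∧ 𝔟 ≤ (Ideal.span (Set.range f')).radical := by
  suffices h : ∀ K : Ideal E, ∃ f' : Q →ₗ[R] E, (∀ y, f' y - f y ∈ 𝔟) ∧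
      ∀ p : Ideal E, p.IsPrime → K ≤ p → (∀ y, f' y ∈ p) → 𝔟 ≤ p by
    obtain ⟨f', hf', hle⟩ := h ⊥
    refine ⟨f', hf', ?_⟩
    rw [Ideal.radical_eq_sInf]
    exact le_sInf fun p hp => hle p hp.2 bot_le fun y => hp.1 (Ideal.subset_span ⟨y, rfl⟩)
  intro K
  induction K using IsNoetherian.induction with
  | hgt K ih =>
    by_cases hK : K = ⊤
    · exact ⟨f, by simp, fun p hp hKp _ => absurd (top_le_iff.1 (hK ▸ hKp)) hp.ne_top⟩
    obtain ⟨𝔪, h𝔪, hK𝔪⟩ := Ideal.exists_le_maximal K hK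
    obtain ⟨s, hs, π, σ, hπσ⟩ :=
      exists_comp_eq_smul_id_of_le_rankAtStalk _ (hrank ⟨𝔪, h𝔪.isPrime⟩)
    have hlt : K < K ⊔ Ideal.span {algebraMap R E s} := left_lt_sup.2 fun hle =>
      hs (hK𝔪 ((Ideal.span_singleton_le_iff_mem _).1 hle))
    obtain ⟨f₀, hf₀, hle₀⟩ := ih _ hlt
    obtain ⟨f', hf', hle⟩ := exists_sub_mem_forall_le_of_comp_eq_smul_id hdim 𝔟 hπσ f₀
    refine ⟨f', fun y => ?_, fun p hp hKp hmem => ?_⟩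
    · simpa using 𝔟.add_mem (Ideal.mul_le_right (hf' y)) (hf₀ y)
    · by_cases hsp : algebraMap R E s ∈ p
      · have hsp' := (Ideal.span_singleton_le_iff_mem p).2 hsp
        refine hle₀ p hp (sup_le hKp hsp') fun y => ?_
        exact (Submodule.sub_mem_iff_right p (hmem y)).1 (hsp' (Ideal.mul_le_left (hf' y)))
      · exact hle p hp hsp hmem

end

theorem exists_comp_eq_sub_mem_of_sub_mem_map {R P M N : Type*} [Ring R] [AddCommGroup P]
    [AddCommGroup M] [AddCommGroup N] [Module R P] [Module R M] [Module R N] [Module.Projective R P]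
    (π : M →ₗ[R] N) (B : Submodule R M) (f : P →ₗ[R] M) (g : P →ₗ[R] N)
    (h : ∀ x, g x - π (f x) ∈ B.map π) :
    ∃ f' : P →ₗ[R] M, π ∘ₗ f' = g ∧ ∀ x, f' x - f x ∈ B := by
  obtain ⟨l, hl⟩ := Module.projective_lifting_property (π.submoduleMap B)
    ((g - π ∘ₗ f).codRestrict _ h) (π.submoduleMap_surjective B)
  refine ⟨f + B.subtype ∘ₗ l, LinearMap.ext fun x => ?_, fun x => by simp⟩
  have hlx : π (l x) = g x - π (f x) := congrArg Subtype.val (LinearMap.congr_fun hl x)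
  simp [hlx]

theorem exists_sub_mem_le_radical_span_range_sup {R A Q : Type*} [CommRing R] [CommRing A]
    [IsNoetherianRing A] [Algebra R A] [AddCommGroup Q] [Module R Q] [Module.Finite R Q]
    [Module.Projective R Q] (L 𝔟 : Ideal A) {m : ℕ} (hdim : ringKrullDim (A ⧸ L) < m)
    (hrank : ∀ p : PrimeSpectrum R, L.comap (algebraMap R A) ≤ p.asIdeal →
      m ≤ Module.rankAtStalk Q p) (f : Q →ₗ[R] A) :
    ∃ f' : Q →ₗ[R] A, (∀ y, f' y - f y ∈ 𝔟) ∧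
      𝔟 ≤ (Ideal.span (Set.range f') ⊔ L).radical := by
  let π : A →ₗ[R] A ⧸ L := (Ideal.Quotient.mkₐ R L).toLinearMap
  have hπ : Function.Surjective (Ideal.Quotient.mk L) := Ideal.Quotient.mk_surjective
  obtain ⟨g, hg, hrad⟩ := exists_sub_mem_le_radical_span_range hdim
    (fun p => hrank _ fun x hx => by
      have : algebraMap R (A ⧸ L) x = 0 := Ideal.Quotient.eq_zero_iff_mem.2 hx
      simp [this])
    (𝔟.map (Ideal.Quotient.mk L)) (π ∘ₗ f)
  obtain ⟨f', rfl, hf'⟩ := exists_comp_eq_sub_mem_of_sub_mem_map π (𝔟.restrictScalars R) f g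
    fun y => by
      obtain ⟨b, hb, hby⟩ := (Ideal.mem_map_iff_of_surjective _ hπ).1 (hg y)
      exact ⟨b, hb, hby⟩
  refine ⟨f', hf', ?_⟩
  have hspan : Ideal.span (Set.range (π ∘ₗ f')) =
      (Ideal.span (Set.range f')).map (Ideal.Quotient.mk L) := by
    rw [Ideal.map_span, ← Set.range_comp]; rfl
  rwa [hspan, Ideal.map_le_iff_le_comap, Ideal.comap_radical,
    Ideal.comap_map_of_surjective' _ hπ, Ideal.mk_ker] at hrad

end GeneralPosition

section Ideals

theorem span_range_sup_eq_of_sub_mem {A : Type*} [CommRing A] {ι : Type*} {f g : ι → A}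
    {K : Ideal A} (h : ∀ x, f x - g x ∈ K) :
    Ideal.span (Set.range f) ⊔ K = Ideal.span (Set.range g) ⊔ K := by
  refine le_antisymm (sup_le (Ideal.span_le.2 ?_) le_sup_right)
    (sup_le (Ideal.span_le.2 ?_) le_sup_right)
  · rintro _ ⟨x, rfl⟩
    rw [← add_sub_cancel (g x) (f x)]
    exact Submodule.add_mem_sup (Ideal.subset_span ⟨x, rfl⟩) (h x)
  · rintro _ ⟨x, rfl⟩
    rw [← sub_sub_cancel (f x) (g x)]
    exact Submodule.sub_mem _ (Ideal.mem_sup_left (Ideal.subset_span ⟨x, rfl⟩))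
      (Ideal.mem_sup_right (h x))

theorem mem_of_pow_mul_mem_of_sup_span_singleton_eq_top {A : Type*} [CommRing A] {K : Ideal A}
    {t a : A} {n : ℕ} (h : K ⊔ Ideal.span {t} = ⊤) (ha : t ^ n * a ∈ K) : a ∈ K := by
  have htop : K ⊔ Ideal.span {t ^ n} = ⊤ := by
    rw [← Ideal.span_singleton_pow]; exact Ideal.sup_pow_eq_top h
  obtain ⟨k, hk, s, hs⟩ :=
    Submodule.mem_sup.1 ((Ideal.eq_top_iff_one _).1 htop)
  obtain ⟨⟨b, rfl⟩, hs⟩ := And.imp_left Ideal.mem_span_singleton'.1 hs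
  rw [← one_mul a, ← hs, add_mul, mul_assoc]
  exact K.add_mem (K.mul_mem_right _ hk) (K.mul_mem_left _ ha)

theorem le_sup_pow_mul_of_le_sup_mul {A : Type*} [CommRing A] {I N K : Ideal A}
    (h : I ≤ N ⊔ K * I) (n : ℕ) : I ≤ N ⊔ K ^ n * I := by
  induction n with
  | zero => simp
  | succ n ih =>
    calc I ≤ N ⊔ K ^ n * I := ih
      _ ≤ N ⊔ K ^ n * (N ⊔ K * I) := by gcongr
      _ ≤ N ⊔ K ^ (n + 1) * I := by
        rw [Ideal.mul_sup, ← mul_assoc, ← pow_succ, ← sup_assoc]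
        gcongr
        exact sup_le le_rfl Ideal.mul_le_right

theorem le_of_le_sup_sq_of_le_radical {A : Type*} [CommRing A] {I N : Ideal A} (hI : I.FG)
    (h : I ≤ N ⊔ I ^ 2) (hrad : I ≤ N.radical) : I ≤ N := by
  obtain ⟨n, hn⟩ := Ideal.exists_pow_le_of_le_radical_of_fg hrad hI
  exact (le_sup_pow_mul_of_le_sup_mul (h.trans_eq (by rw [sq])) n).trans
    (sup_le le_rfl (Ideal.mul_le_left.trans hn))

theorem le_sup_mul_of_le_sup_sq {A : Type*} [CommRing A] {I N K : Ideal A} (hI : I.FG)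
    (h : I ≤ N ⊔ I ^ 2) (hrad : I ≤ (N ⊔ K).radical) : I ≤ N ⊔ K * I := by
  have hle : I ≤ N ⊔ K :=
    le_of_le_sup_sq_of_le_radical hI (h.trans (sup_le_sup_right le_sup_left _)) hrad
  calc I ≤ N ⊔ I * I := h.trans_eq (by rw [sq])
    _ ≤ N ⊔ (N ⊔ K) * I := by gcongr
    _ ≤ N ⊔ K * I := by
      rw [Ideal.sup_mul, ← sup_assoc]
      gcongr
      exact sup_le le_rfl Ideal.mul_le_left

theorem exists_one_sub_mem_forall_algebraMap_mul_mem {R A : Type*} [CommRing R] [CommRing A]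
    [Algebra R A] {I N : Ideal A} [IsNoetherian R (A ⧸ N)] {K : Ideal R}
    (h : I ≤ N ⊔ K.map (algebraMap R A) * I) :
    ∃ t : R, 1 - t ∈ K ∧ ∀ a ∈ I, algebraMap R A t * a ∈ N := by
  let π : A →ₗ[R] A ⧸ N := (Ideal.Quotient.mkₐ R N).toLinearMap
  have hπ {a : A} : π a = 0 ↔ a ∈ N := Ideal.Quotient.eq_zero_iff_mem
  let M : Submodule R (A ⧸ N) := (I.restrictScalars R).map π
  have hM : M ≤ K • M := by
    rintro _ ⟨a, ha, rfl⟩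
    obtain ⟨n, hn, b, hb, rfl⟩ := Submodule.mem_sup.1 (h ha)
    rw [map_add, hπ.2 hn, zero_add, ← Submodule.map_smul'', ← Ideal.smul_restrictScalars]
    exact ⟨b, hb, rfl⟩
  obtain ⟨s, hs, hsM⟩ := Submodule.exists_sub_one_mem_and_smul_eq_zero_of_fg_of_le_smul K M
    (IsNoetherian.noetherian M) hM
  refine ⟨s, by simpa using K.neg_mem hs, fun a ha => hπ.1 ?_⟩
  rw [← Algebra.smul_def, map_smul]
  exact hsM _ ⟨a, ha, rfl⟩

end Ideals

section BaseChange

variable {R A P : Type*} [CommRing R] [CommRing A] [Algebra R A] [AddCommGroup P] [Module R P]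
  {I : Ideal A}

theorem exists_toCotangent_comp_liftBaseChange_eq [Module.Projective R P]
    (φ : A ⊗[R] P →ₗ[A] I.Cotangent) :
    ∃ F : P →ₗ[R] I, I.toCotangent ∘ₗ F.liftBaseChange A = φ := by
  obtain ⟨F, hF⟩ := Module.projective_lifting_property (I.toCotangent.restrictScalars R)
    ((LinearMap.liftBaseChangeEquiv A).symm φ) I.toCotangent_surjective
  refine ⟨F, (LinearMap.liftBaseChangeEquiv A).symm.injective (LinearMap.ext fun x => ?_)⟩
  simpa using LinearMap.congr_fun hF x

theorem map_subtype_range_liftBaseChange (F : P →ₗ[R] I) :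
    (LinearMap.range (F.liftBaseChange A)).map I.subtype =
      Ideal.span (Set.range fun x => (F x : A)) := by
  rw [LinearMap.range_liftBaseChange, Submodule.map_span, LinearMap.coe_range, ← Set.range_comp]
  rfl

theorem liftBaseChange_surjective_of_span_eq {F : P →ₗ[R] I}
    (h : Ideal.span (Set.range fun x => (F x : A)) = I) :
    Function.Surjective (F.liftBaseChange A) := by
  rw [← LinearMap.range_eq_top]
  refine Submodule.map_injective_of_injective I.subtype_injective ?_
  rw [map_subtype_range_liftBaseChange, h, Submodule.map_subtype_top]

theorem le_span_sup_sq_of_surjective {F : P →ₗ[R] I}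
    (h : Function.Surjective (I.toCotangent ∘ₗ F.liftBaseChange A)) :
    I ≤ Ideal.span (Set.range fun x => (F x : A)) ⊔ I ^ 2 := by
  intro a ha
  obtain ⟨z, hz⟩ := h (I.toCotangent ⟨a, ha⟩)
  have hza : (F.liftBaseChange A z : A) - a ∈ I ^ 2 := (Ideal.toCotangent_eq I).1 hz
  rw [← map_subtype_range_liftBaseChange, ← sub_sub_cancel (F.liftBaseChange A z : A) a]
  exact Submodule.sub_mem _ (Ideal.mem_sup_left ⟨_, ⟨z, rfl⟩, rfl⟩) (Ideal.mem_sup_right hza)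

theorem toCotangent_comp_liftBaseChange_congr {F G : P →ₗ[R] I}
    (h : ∀ x, (G x : A) - F x ∈ I ^ 2) :
    I.toCotangent ∘ₗ G.liftBaseChange A = I.toCotangent ∘ₗ F.liftBaseChange A := by
  refine (LinearMap.liftBaseChangeEquiv A).symm.injective (LinearMap.ext fun x => ?_)
  simpa using (Ideal.toCotangent_eq I).2 (h x)

end BaseChange

section ScaledTranslate

open Polynomial

variable {R : Type*} [CommRing R]

/-- `scaledTranslate t d a` is the polynomial `t ^ d * a (X + (1 - t) / t)`, for `a` of degree at
most `d`. The division by `t` is avoided by evaluating the homogenization of `a` in degree `d` at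
`(t * X + (1 - t), t)`. -/
def scaledTranslate (t : R) (d : ℕ) : R[X] →ₗ[R] R[X] :=
  (MvPolynomial.aeval ![C t * X + C (1 - t), C t]).toLinearMap ∘ₗ homogenizeLM d

theorem scaledTranslate_C (t : R) (d : ℕ) (r : R) :
    scaledTranslate t d (C r) = C t ^ d * C r := by
  simp [scaledTranslate, mul_comm (C t ^ d)]

theorem scaledTranslate_mul (t : R) {d e : ℕ} {a b : R[X]} (ha : a.natDegree ≤ d)
    (hb : b.natDegree ≤ e) :
    scaledTranslate t (d + e) (a * b) = scaledTranslate t d a * scaledTranslate t e b := by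
  simp [scaledTranslate, homogenize_mul a b ha hb]

theorem scaledTranslate_sub_mem (t : R) {d : ℕ} {a : R[X]} (ha : a.natDegree ≤ d) :
    scaledTranslate t d a - a ∈ Ideal.span {C (1 - t)} := by
  let ψ := Ideal.Quotient.mkₐ R (Ideal.span {(C (1 - t) : R[X])})
  have hψ : ψ (C (1 - t)) = 0 := Ideal.Quotient.mk_singleton_self _
  have hψt : ψ (C t) = 1 := Ideal.Quotient.eq.2 (Ideal.mem_span_singleton.2 ⟨-1, by simp⟩)
  refine Ideal.Quotient.eq.1 (show ψ _ = ψ a from ?_)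
  calc ψ (scaledTranslate t d a)
      = MvPolynomial.aeval (fun i => ψ (![C t * X + C (1 - t), C t] i)) (a.homogenize d) :=
        MvPolynomial.comp_aeval_apply _ ψ _
    _ = aeval (ψ X) a := by
        rw [aeval_homogenize_of_eq_one ha _ hψt]
        simp only [Matrix.cons_val_zero, map_add, map_mul, hψ, hψt, one_mul, add_zero]
    _ = ψ a := by simp [aeval_algHom_apply]

theorem scaledTranslate_sub_C_coeff_mem (t : R) (d : ℕ) (a : R[X]) :
    scaledTranslate t d a - C (a.coeff d) ∈ Ideal.span {C t} := by
  have hψ : Ideal.Quotient.mk (Ideal.span {(C t : R[X])}) (C t) = 0 :=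
    Ideal.Quotient.mk_singleton_self _
  have hsum : scaledTranslate t d a = ∑ k ∈ Finset.HasAntidiagonal.antidiagonal d,
      C (a.coeff k.1) * ((C t * X + C (1 - t)) ^ k.1 * C t ^ k.2) := by
    simp [scaledTranslate, homogenize, MvPolynomial.aeval_monomial, Finsupp.prod_fintype]
  rw [← Ideal.Quotient.eq, hsum, map_sum, Finset.sum_eq_single (d, 0)]
  · simp [hψ]
  · rintro ⟨k, l⟩ hkl hne
    have hl : l ≠ 0 := by
      rintro rfl
      exact hne (by simpa using hkl)
    simp [hψ, hl]
  · simp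

/-- The ideal of the polynomials `a` such that `t ^ d * a (X + (1 - t) / t)` lies in `K` for some
`d` at least the degree of `a`; it is the preimage of the extension of `K` to `R[1/t][X]` under
the substitution `X ↦ X + (1 - t) / t`. -/
def translatePreimage (t : R) (K : Ideal R[X]) : Ideal R[X] where
  carrier := {a | ∃ d, a.natDegree ≤ d ∧ scaledTranslate t d a ∈ K}
  zero_mem' := ⟨0, by simp⟩
  add_mem' := by
    rintro a b ⟨d, had, ha⟩ ⟨e, hbe, hb⟩
    refine ⟨d + e, (natDegree_add_le a b).trans (by lia), ?_⟩
    have h1 (n : ℕ) : (1 : R[X]).natDegree ≤ n := by simp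
    have ha' := K.mul_mem_right (scaledTranslate t e 1) ha
    have hb' := K.mul_mem_left (scaledTranslate t d 1) hb
    rw [← scaledTranslate_mul t had (h1 e), mul_one] at ha'
    rw [← scaledTranslate_mul t (h1 d) hbe, one_mul] at hb'
    rw [map_add]
    exact K.add_mem ha' hb'
  smul_mem' := by
    rintro b a ⟨d, had, ha⟩
    refine ⟨b.natDegree + d, natDegree_mul_le_of_le le_rfl had, ?_⟩
    rw [smul_eq_mul, scaledTranslate_mul t le_rfl had]
    exact K.mul_mem_left _ ha

theorem pow_mul_C_mem_of_C_mem_translatePreimage {t r : R} {K : Ideal R[X]}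
    (h : C r ∈ translatePreimage t K) : ∃ n, C t ^ n * C r ∈ K := by
  obtain ⟨d, -, hd⟩ := h
  exact ⟨d, scaledTranslate_C t d r ▸ hd⟩

end ScaledTranslate

section MonicIdeal

open Polynomial

variable {R : Type*} [CommRing R]

theorem finite_quotient_of_monic_mem {I : Ideal R[X]} {g : R[X]} (hg : g.Monic) (hgI : g ∈ I) :
    Module.Finite R (R[X] ⧸ I) := by
  have : Module.Finite R (R[X] ⧸ Ideal.span {g}) := hg.finite_quotient
  have hle : Ideal.span {g} ≤ I := (Ideal.span_singleton_le_iff_mem _).2 hgI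
  exact Module.Finite.of_surjective (Ideal.Quotient.factorₐ R hle).toLinearMap
    (Ideal.Quotient.factor_surjective hle)

theorem exists_monic_sub_mem_pow {I : Ideal R[X]} {g : R[X]} (hg : g.Monic) (hgI : g ∈ I)
    (h : R[X]) (n : ℕ) : ∃ f : R[X], f.Monic ∧ f - h ∈ I ^ n := by
  rcases subsingleton_or_nontrivial R with _ | _
  · exact ⟨h, monic_of_subsingleton h, by simp⟩
  refine ⟨X ^ (h.natDegree + 1) * g ^ n + h, Monic.add_of_left ((monic_X_pow _).mul (hg.pow n)) ?_,
    by simpa using Ideal.mul_mem_left _ _ (Ideal.pow_mem_pow hgI n)⟩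
  refine degree_lt_degree ?_
  rw [(monic_X_pow _).natDegree_mul (hg.pow n), natDegree_X_pow]
  lia

theorem exists_forall_natDegree_le {M : Type*} [AddCommGroup M] [Module R M] [Module.Finite R M]
    (f : M →ₗ[R] R[X]) : ∃ d, ∀ x, (f x).natDegree ≤ d := by
  obtain ⟨s, hs, hsf⟩ := Submodule.fg_def.1 (Module.Finite.fg_top.map f)
  obtain ⟨d, hd⟩ := span_le_degreeLE_of_finite hs
  exact ⟨d, fun x => natDegree_le_iff_degree_le.2 <| mem_degreeLE.1 <|
    hd (hsf ▸ Submodule.mem_map_of_mem Submodule.mem_top)⟩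

theorem span_range_eq_of_le_translatePreimage {ι : Type*} {I : Ideal R[X]} {F Φ : ι → R[X]} {t : R}
    (hF : ∀ x, F x ∈ I) (ht : C (1 - t) ∈ I)
    (hmul : ∀ a ∈ I, C t * a ∈ Ideal.span (Set.range F))
    (hsub : ∀ x, Φ x - F x ∈ Ideal.span {C (1 - t)})
    (htop : Ideal.span (Set.range Φ) ⊔ Ideal.span {C t} = ⊤)
    (hpre : Ideal.span (Set.range F) ≤ translatePreimage t (Ideal.span (Set.range Φ))) :
    Ideal.span (Set.range Φ) = I := by
  have htΦ : C (1 - t) ∈ Ideal.span (Set.range Φ) := by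
    have hmem := hpre (hmul _ ht)
    rw [← C_mul] at hmem
    obtain ⟨n, hn⟩ := pow_mul_C_mem_of_C_mem_translatePreimage hmem
    rw [C_mul, ← mul_assoc, ← pow_succ] at hn
    exact mem_of_pow_mul_mem_of_sup_span_singleton_eq_top htop hn
  have hI : I = Ideal.span (Set.range F) ⊔ Ideal.span {C (1 - t)} := by
    refine le_antisymm (fun a ha => ?_) (sup_le (Ideal.span_le.2 (Set.range_subset_iff.2 hF))
      ((Ideal.span_singleton_le_iff_mem _).2 ht))
    have hsum : a = C t * a + a * C (1 - t) := by rw [C_sub, C_1]; ring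
    rw [hsum]
    exact Submodule.add_mem_sup (hmul a ha)
      (Ideal.mul_mem_left _ _ (Ideal.mem_span_singleton_self _))
  rw [hI, ← span_range_sup_eq_of_sub_mem hsub, eq_comm, sup_eq_left]
  exact (Ideal.span_singleton_le_iff_mem _).2 htΦ

theorem exists_span_range_eq_of_monic {Q : Type*} [AddCommGroup Q] [Module R Q] [Module.Finite R Q]
    {I : Ideal R[X]} {f : Q →ₗ[R] R[X]} {g : R →ₗ[R] R[X]} (hg : (g 1).Monic) {t : R}
    (hI : ∀ x, f.coprod g x ∈ I) (ht : C (1 - t) ∈ I)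
    (hmul : ∀ a ∈ I, C t * a ∈ Ideal.span (Set.range (f.coprod g))) :
    ∃ Φ : Q × R →ₗ[R] R[X], (∀ x, Φ x - f.coprod g x ∈ Ideal.span {C (1 - t)}) ∧
      Ideal.span (Set.range Φ) = I := by
  obtain ⟨d, hd⟩ := exists_forall_natDegree_le f
  have he (r : R) : (g r).natDegree ≤ (g 1).natDegree := by
    rw [← mul_one r, ← smul_eq_mul, map_smul]
    exact natDegree_smul_le r (g 1)
  let Φ : Q × R →ₗ[R] R[X] :=
    (scaledTranslate t d ∘ₗ f).coprod (scaledTranslate t (g 1).natDegree ∘ₗ g)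
  have hΦf (y : Q) : scaledTranslate t d (f y) ∈ Ideal.span (Set.range Φ) :=
    Ideal.subset_span ⟨(y, 0), by simp [Φ]⟩
  have hΦg (r : R) : scaledTranslate t (g 1).natDegree (g r) ∈ Ideal.span (Set.range Φ) :=
    Ideal.subset_span ⟨(0, r), by simp [Φ]⟩
  have hsub (x : Q × R) : Φ x - f.coprod g x ∈ Ideal.span {C (1 - t)} := by
    simp only [Φ, LinearMap.coprod_apply, LinearMap.comp_apply, add_sub_add_comm]
    exact Ideal.add_mem _ (scaledTranslate_sub_mem t (hd _)) (scaledTranslate_sub_mem t (he _))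
  refine ⟨Φ, hsub, span_range_eq_of_le_translatePreimage hI ht hmul hsub ?_ ?_⟩
  · have hlead := scaledTranslate_sub_C_coeff_mem t (g 1).natDegree (g 1)
    rw [hg.coeff_natDegree, C_1] at hlead
    rw [Ideal.eq_top_iff_one, ← sub_sub_cancel (scaledTranslate t (g 1).natDegree (g 1)) 1]
    exact Ideal.sub_mem _ (Ideal.mem_sup_left (hΦg 1)) (Ideal.mem_sup_right hlead)
  · rw [Ideal.span_le]
    rintro _ ⟨x, rfl⟩
    exact Ideal.add_mem _ ⟨d, hd _, hΦf _⟩ ⟨_, he _, hΦg _⟩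

theorem ringKrullDim_quotient_sup_map_comap_C_le {I : Ideal R[X]} {g : R[X]} (hg : g.Monic)
    (hgI : g ∈ I) :
    ringKrullDim (R[X] ⧸ Ideal.span {g} ⊔ (I.comap C).map C) ≤ ringKrullDim (R[X] ⧸ I) := by
  have hgL : g ∈ Ideal.span {g} ⊔ (I.comap C).map C :=
    Ideal.mem_sup_left (Ideal.mem_span_singleton_self g)
  have := finite_quotient_of_monic_mem hg hgI
  have := finite_quotient_of_monic_mem hg hgL
  refine ringKrullDim_le_of_ker_algebraMap_le (R := R) fun r hr => ?_
  have hrI : C r ∈ I := Ideal.Quotient.eq_zero_iff_mem.1 hr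
  exact Ideal.Quotient.eq_zero_iff_mem.2
    (Ideal.mem_sup_right (Ideal.mem_map_of_mem C (Ideal.mem_comap.2 hrI)))

variable [IsNoetherianRing R] {Q : Type*} [AddCommGroup Q] [Module R Q] [Module.Finite R Q]

theorem exists_coprod_sub_mem_sq_le_radical [Module.Projective R Q] {I : Ideal R[X]}
    (hmonic : ∃ g : R[X], g.Monic ∧ g ∈ I) {m : ℕ} (hdim : ringKrullDim (R[X] ⧸ I) < m)
    (hrank : ∀ q : PrimeSpectrum R, I.comap C ≤ q.asIdeal → m ≤ Module.rankAtStalk Q q)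
    {F : Q × R →ₗ[R] R[X]} (hF : ∀ x, F x ∈ I) :
    ∃ (f : Q →ₗ[R] R[X]) (g : R →ₗ[R] R[X]), (g 1).Monic ∧
      (∀ x, f.coprod g x - F x ∈ I ^ 2) ∧
      I ≤ (Ideal.span (Set.range (f.coprod g)) ⊔ (I.comap C).map C).radical := by
  obtain ⟨g₀, hg₀, hg₀I⟩ := hmonic
  obtain ⟨g, hg, hgF⟩ := exists_monic_sub_mem_pow hg₀ hg₀I (F (0, 1)) 2
  have hgI : g ∈ I := (Submodule.sub_mem_iff_left _ (hF _)).1 (Ideal.pow_le_self two_ne_zero hgF)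
  obtain ⟨f, hf, hrad⟩ := exists_sub_mem_le_radical_span_range_sup
    (Ideal.span {g} ⊔ (I.comap C).map C) (I ^ 2)
    ((ringKrullDim_quotient_sup_map_comap_C_le hg hgI).trans_lt hdim)
    (fun q hq => hrank q ((Ideal.le_comap_map.trans (Ideal.comap_mono le_sup_right)).trans hq))
    (F ∘ₗ LinearMap.inl R Q R)
  refine ⟨f, LinearMap.toSpanSingleton R _ g, by simpa using hg, fun x => ?_, ?_⟩
  · have hx : F x = F (x.1, 0) + x.2 • F (0, 1) := by rw [← map_smul, ← map_add]; simp
    rw [hx, LinearMap.coprod_apply, LinearMap.toSpanSingleton_apply, add_sub_add_comm, ← smul_sub]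
    exact Ideal.add_mem _ (hf x.1) (Submodule.smul_of_tower_mem _ _ hgF)
  · have hle : Ideal.span (Set.range f) ⊔ (Ideal.span {g} ⊔ (I.comap C).map C) ≤
        Ideal.span (Set.range (f.coprod (LinearMap.toSpanSingleton R _ g))) ⊔
          (I.comap C).map C := by
      rw [← sup_assoc, ← Ideal.span_union]
      gcongr
      rintro _ (⟨y, rfl⟩ | rfl)
      · exact ⟨(y, 0), by simp⟩
      · exact ⟨(0, 1), by simp⟩
    calc I ≤ (I ^ 2).radical := Ideal.radical_pow I two_ne_zero ▸ Ideal.le_radical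
      _ ≤ _ := Ideal.radical_le_radical_iff.2 (hrad.trans (Ideal.radical_mono hle))

theorem exists_sub_mem_sq_span_range_eq [Module.Projective R Q] {I : Ideal R[X]}
    (hmonic : ∃ g : R[X], g.Monic ∧ g ∈ I) {m : ℕ} (hdim : ringKrullDim (R[X] ⧸ I) < m)
    (hrank : ∀ q : PrimeSpectrum R, I.comap C ≤ q.asIdeal → m ≤ Module.rankAtStalk Q q)
    {F : Q × R →ₗ[R] R[X]} (hF : ∀ x, F x ∈ I) (hsq : I ≤ Ideal.span (Set.range F) ⊔ I ^ 2) :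
    ∃ Φ : Q × R →ₗ[R] R[X], (∀ x, Φ x - F x ∈ I ^ 2) ∧ Ideal.span (Set.range Φ) = I := by
  obtain ⟨f, g, hg, hsub, hrad⟩ := exists_coprod_sub_mem_sq_le_radical hmonic hdim hrank hF
  have hfg (x : Q × R) : f.coprod g x ∈ I :=
    (Submodule.sub_mem_iff_left _ (hF x)).1 (Ideal.pow_le_self two_ne_zero (hsub x))
  have hJ : I ≤ Ideal.span (Set.range (f.coprod g)) ⊔ (I.comap C).map C * I :=
    le_sup_mul_of_le_sup_sq I.fg_of_isNoetherianRing
      (hsq.trans_eq (span_range_sup_eq_of_sub_mem hsub).symm) hrad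
  have hJ2 := le_sup_pow_mul_of_le_sup_mul hJ 2
  rw [← Ideal.map_pow] at hJ2
  have := finite_quotient_of_monic_mem hg (Ideal.subset_span ⟨(0, 1), by simp⟩ :
    g 1 ∈ Ideal.span (Set.range (f.coprod g)))
  obtain ⟨t, ht, hmul⟩ := exists_one_sub_mem_forall_algebraMap_mul_mem hJ2
  have htI : C (1 - t) ∈ I ^ 2 := by
    have hmem := Ideal.mem_map_of_mem C ht
    rw [Ideal.map_pow] at hmem
    exact Ideal.pow_right_mono Ideal.map_comap_le 2 hmem
  obtain ⟨Φ, hΦ, hspan⟩ :=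
    exists_span_range_eq_of_monic hg hfg (Ideal.pow_le_self two_ne_zero htI) hmul
  refine ⟨Φ, fun x => ?_, hspan⟩
  rw [← sub_add_sub_cancel (Φ x) (f.coprod g x)]
  exact Ideal.add_mem _ ((Ideal.span_singleton_le_iff_mem _).2 htI (hΦ x)) (hsub x)

end MonicIdeal

theorem lt_natCast_sub_one_of_add_two_le {d : WithBot ℕ∞} {r : ℕ} (h : d + 2 ≤ r) :
    d < (r - 1 : ℕ) := by
  cases d with
  | bot => exact WithBot.bot_lt_coe _
  | coe d =>
    have h' : d + 2 ≤ (r : ℕ∞) := WithBot.coe_le_coe.1 h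
    refine WithBot.coe_lt_coe.2 ?_
    cases d with
    | top => simp at h'
    | coe n =>
      have : n + 2 ≤ r := by exact_mod_cast h'
      exact Nat.cast_lt.2 (by lia)

open Polynomial in
theorem surjection_onto_ideal_lifts_polynomial_ring_general
    {R : Type*} [CommRing R] [IsNoetherianRing R] {I : Ideal R[X]}
    (hmonic : ∃ g : R[X], g.Monic ∧ g ∈ I)
    {P Q : Type*} [AddCommGroup P] [Module R P] [AddCommGroup Q] [Module R Q]
    (e : P ≃ₗ[R] Q × R) [Module.Finite R P] [Module.Projective R P] {r : ℕ}
    (hrank : ∀ q : PrimeSpectrum R, I.comap C ≤ q.asIdeal → r ≤ Module.rankAtStalk P q)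
    (hr : ringKrullDim (R[X] ⧸ I) + 2 ≤ r)
    {φ : R[X] ⊗[R] P →ₗ[R[X]] I.Cotangent} (hφ : Function.Surjective φ) :
    ∃ Φ : R[X] ⊗[R] P →ₗ[R[X]] I, Function.Surjective Φ ∧ I.toCotangent ∘ₗ Φ = φ := by
  have : Module.Finite R Q := .of_surjective (LinearMap.fst R Q R ∘ₗ e.toLinearMap)
    (Prod.fst_surjective.comp e.surjective)
  have : Module.Projective R Q := .of_split (e.symm.toLinearMap ∘ₗ LinearMap.inl R Q R)
    (LinearMap.fst R Q R ∘ₗ e.toLinearMap) (by ext; simp)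
  have hrankQ (q : PrimeSpectrum R) (hq : I.comap C ≤ q.asIdeal) :
      r - 1 ≤ Module.rankAtStalk Q q := by
    have := q.nontrivial
    have h := hrank q hq
    rw [Module.rankAtStalk_eq_of_equiv e, Module.rankAtStalk_prod] at h
    simp only [Pi.add_apply, Module.rankAtStalk_self, Pi.one_apply] at h
    lia
  obtain ⟨F, rfl⟩ := exists_toCotangent_comp_liftBaseChange_eq φ
  let G : Q × R →ₗ[R] R[X] := I.subtype.restrictScalars R ∘ₗ F ∘ₗ e.symm.toLinearMap
  have hG : Set.range (fun x => (F x : R[X])) = Set.range G := (e.symm.surjective.range_comp _).symm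
  obtain ⟨Φ, hΦ, hspan⟩ := exists_sub_mem_sq_span_range_eq hmonic
    (lt_natCast_sub_one_of_add_two_le hr) hrankQ (fun x => (F (e.symm x)).2)
    (hG ▸ le_span_sup_sq_of_surjective hφ : I ≤ Ideal.span (Set.range G) ⊔ I ^ 2)
  let Ψ : P →ₗ[R] I := (Φ ∘ₗ e.toLinearMap).codRestrict (I.restrictScalars R)
    fun x => hspan.le (Ideal.subset_span ⟨e x, rfl⟩)
  refine ⟨Ψ.liftBaseChange _, liftBaseChange_surjective_of_span_eq ?_,
    toCotangent_comp_liftBaseChange_congr fun x => ?_⟩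
  · exact (congrArg Ideal.span (e.surjective.range_comp Φ)).trans hspan
  · simpa [G] using! hΦ (e x)

/-- **Theorem (Bhatwadekar–Raja Sridharan).** Let `R` be a commutative Noetherian ring,
`I` an ideal of `R[X]` containing a monic polynomial and `P = Q ⊕ R` a finitely generated
projective `R`-module of constant rank `r` with `r ≥ dim (R[X]/I) + 2`.  Then every
`R[X]`-linear surjection `φ : P ⊗_R R[X] ↠ I/I²` (equivalently, a surjection
`(P ⊗ R[X])/I(P ⊗ R[X]) ↠ I/I²`) lifts to an `R[X]`-linear surjection `Φ : P ⊗_R R[X] ↠ I`. -/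
theorem surjection_onto_ideal_lifts_polynomial_ring
    (R : Type*) [CommRing R] [IsNoetherianRing R]
    (I : Ideal (Polynomial R))
    (hmonic : ∃ g : Polynomial R, g.Monic ∧ g ∈ I)
    (P Q : Type*) [AddCommGroup P] [Module R P] [AddCommGroup Q] [Module R Q]
    (hPQ : Nonempty (P ≃ₗ[R] Q × R))
    [Module.Finite R P] [Module.Projective R P]
    (r : ℕ)
    (hrank : ∀ q : PrimeSpectrum R,
      Module.finrank (Localization.AtPrime q.asIdeal) (LocalizedModule q.asIdeal.primeCompl P)
        = r)
    (hr : ringKrullDim (Polynomial R ⧸ I) + 2 ≤ (r : ℕ))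
    (φ : Polynomial R ⊗[R] P →ₗ[Polynomial R] I.Cotangent) (hφ : Function.Surjective φ) :
    ∃ Φ : Polynomial R ⊗[R] P →ₗ[Polynomial R] I,
      Function.Surjective Φ ∧ I.toCotangent ∘ₗ Φ = φ := by
  obtain ⟨e⟩ := hPQ
  exact surjection_onto_ideal_lifts_polynomial_ring_general hmonic e (fun q _ => (hrank q).ge) hr hφ
end
end

section
/- Let R be a commutative Noetherian ring and I a locally complete intersection ideal of R of height n ≥ 2 with dim(R/I) ≤ 1. Then there exists a locally complete intersection ideal J ⊆ R of height n such that (i) √I = √J and (ii) J/J² is a free R/J-module of rank n. -/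
noncomputable section

/-- The height of an ideal: the infimum of the heights of the prime ideals containing it. -/
def idealHeight {A : Type*} [CommRing A] (I : Ideal A) : ℕ∞ :=
  ⨅ (p : PrimeSpectrum A) (_ : I ≤ p.asIdeal), Order.height p

/-- `a : Fin k → A` is a regular sequence: each `a i` is a nonzerodivisor modulo the ideal
generated by the previous terms. -/
def IsRegularSeq {A : Type*} [CommRing A] {k : ℕ} (a : Fin k → A) : Prop :=
  ∀ (i : Fin k) (x : A),
    a i * x ∈ Ideal.span {y | ∃ j < i, a j = y} → x ∈ Ideal.span {y | ∃ j < i, a j = y}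

/-- An ideal `I` of `A` is a locally complete intersection ideal of height `k` if
`ht I = k` and for every prime `p ⊇ I` the ideal `I A_p` is generated by a regular
sequence of length `k`. -/
def IsLocallyCompleteIntersection {A : Type*} [CommRing A] (I : Ideal A) (k : ℕ) : Prop :=
  idealHeight I = k ∧
  ∀ p : PrimeSpectrum A, I ≤ p.asIdeal →
    ∃ a : Fin k → Localization.AtPrime p.asIdeal,
      IsRegularSeq a ∧
      Ideal.span (Set.range a)
        = I.map (algebraMap A (Localization.AtPrime p.asIdeal))

/-!
Let `A = R ⧸ I`. The conormal module `I / I²` is projective of rank `n` over `A` and `dim A ≤ 1`,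
so by Serre's splitting theorem it is `Aⁿ⁻² ⊕ A u ⊕ L` with `L` of rank one. Since `L⁻¹` has two
generators, there is a surjection `A u ⊕ L → L⁻¹` with kernel isomorphic to `L²`, and `J` is the
preimage in `I` of `Aⁿ⁻² ⊕ L²` (Ferrand's doubling). Where `L` is trivial, `I = (f, b, a)` and
`J = (f, b, a²)`, with `b` and `a` lifting generators of the kernel and of `L⁻¹`; hence `J` is again
locally a complete intersection. Moreover `J / IJ` is an extension of `J / I² = Aⁿ⁻² ⊕ L²` by
`I² / IJ = L⁻²`, and `L² ⊕ L⁻²` is free: if `L` is the image of an idempotent matrix with diagonal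
`α, δ`, then `α + δ = 1` implies that `α²` and `δ²` generate the unit ideal, which gives an explicit
basis. By Nakayama's lemma this basis lifts to `J / J²`.
-/

namespace FerrandSzpiro

open Module TensorProduct

section Fiber

variable {A M : Type*} [CommRing A] [AddCommGroup M] [Module A M]

lemma fiber_smul_tmul (p : Ideal A) [p.IsPrime] (r : A) (x : M) :
    (1 : p.ResidueField) ⊗ₜ[A] (r • x) = algebraMap A p.ResidueField r • (1 ⊗ₜ[A] x) := by
  rw [tmul_smul, algebraMap_smul]

lemma exists_one_tmul_notMem_of_ne_top (p : Ideal A) [p.IsPrime]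
    {W : Submodule p.ResidueField (p.ResidueField ⊗[A] M)} (hW : W ≠ ⊤) :
    ∃ x : M, 1 ⊗ₜ[A] x ∉ W := by
  by_contra! hall
  refine hW (eq_top_iff.2 fun z _ => ?_)
  induction z with
  | zero => exact W.zero_mem
  | tmul c x => simpa [smul_tmul'] using W.smul_mem c (hall x)
  | add y z hy hz => exact W.add_mem (hy trivial) (hz trivial)

theorem exists_forall_one_tmul_notMem {T : Set (PrimeSpectrum A)} (hT : T.Finite)
    (W : ∀ p : PrimeSpectrum A, Submodule p.asIdeal.ResidueField (p.asIdeal.ResidueField ⊗[A] M))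
    (hW : ∀ p ∈ T, W p ≠ ⊤) :
    ∃ h : M, ∀ p ∈ T, 1 ⊗ₜ[A] h ∉ W p := by
  classical
  lift T to Finset (PrimeSpectrum A) using hT
  induction hn : T.card generalizing T with
  | zero => exact ⟨0, by simp [Finset.card_eq_zero.1 hn]⟩
  | succ n ih =>
    obtain ⟨p, hp⟩ := T.exists_minimal (Finset.card_pos.1 (by omega))
    obtain ⟨h, hh⟩ := ih (T.erase p) (fun q hq => hW q (Finset.mem_of_mem_erase hq))
      (by rw [Finset.card_erase_of_mem hp.1]; omega)
    by_cases hph : 1 ⊗ₜ[A] h ∉ W p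
    · refine ⟨h, fun q hq => ?_⟩
      obtain rfl | hqp := eq_or_ne q p
      exacts [hph, hh q (Finset.mem_erase.2 ⟨hqp, hq⟩)]
    rw [not_not] at hph
    obtain ⟨z, hz⟩ := exists_one_tmul_notMem_of_ne_top p.asIdeal (hW p hp.1)
    obtain ⟨r, hrT, hrp⟩ : ∃ r ∈ (T.erase p).inf PrimeSpectrum.asIdeal, r ∉ p.asIdeal := by
      refine Set.not_subset.1 fun hle => ?_
      obtain ⟨q, hq, hqp⟩ := (Ideal.IsPrime.inf_le' p.2).1 hle
      exact Finset.ne_of_mem_erase hq (le_antisymm hqp (hp.2 (Finset.mem_of_mem_erase hq) hqp))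
    refine ⟨h + r • z, fun q hq => ?_⟩
    rw [tmul_add, fiber_smul_tmul]
    obtain rfl | hqp := eq_or_ne q p
    · rw [(W q).add_mem_iff_right hph, (W q).smul_mem_iff (by simpa using hrp)]
      exact hz
    · have hq' := Finset.mem_erase.2 ⟨hqp, hq⟩
      have hrq : algebraMap A q.asIdeal.ResidueField r = 0 := by
        simpa using (Finset.inf_le hq' : _ ≤ q.asIdeal) hrT
      simpa [hrq] using hh q hq'

/-- The order ideal (or trace) of an element `x` of a module `M`: the ideal of all values at `x`
of linear forms on `M`. -/
def orderIdeal (A : Type*) {M : Type*} [CommRing A] [AddCommGroup M] [Module A M] (x : M) :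
    Ideal A :=
  LinearMap.range (Dual.eval A M x)

lemma apply_mem_orderIdeal (φ : Dual A M) (x : M) : φ x ∈ orderIdeal A x :=
  ⟨φ, rfl⟩

lemma one_tmul_eq_zero_iff [Projective A M] (p : Ideal A) [p.IsPrime] (x : M) :
    (1 : p.ResidueField) ⊗ₜ[A] x = 0 ↔ orderIdeal A x ≤ p := by
  constructor
  · rintro hx _ ⟨φ, rfl⟩
    have hφ := congrArg (φ.baseChange p.ResidueField) hx
    rwa [Dual.baseChange_apply_tmul, map_zero, ← Algebra.algebraMap_eq_smul_one,
      Ideal.algebraMap_residueField_eq_zero] at hφ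
  · intro hx
    obtain ⟨s, hs⟩ := Module.projective_def'.1 ‹Projective A M›
    have hsum : x = (s x).sum fun m a => a • m := (LinearMap.congr_fun hs x).symm
    rw [hsum, Finsupp.sum, tmul_sum]
    refine Finset.sum_eq_zero fun m _ => ?_
    have hm : s x m ∈ p := hx (apply_mem_orderIdeal (Finsupp.lapply m ∘ₗ s) x)
    rw [fiber_smul_tmul, Ideal.algebraMap_residueField_eq_zero.2 hm, zero_smul]

lemma exists_apply_notMem [Projective A M] {p : Ideal A} [p.IsPrime] {x : M}
    (hx : (1 : p.ResidueField) ⊗ₜ[A] x ≠ 0) : ∃ φ : Dual A M, φ x ∉ p := by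
  rw [Ne, one_tmul_eq_zero_iff] at hx
  obtain ⟨_, ⟨φ, rfl⟩, hφ⟩ := Set.not_subset.1 hx
  exact ⟨φ, hφ⟩

/-- The ideal of all `2 × 2` minors `φ x * ψ y - φ y * ψ x` of two elements `x`, `y` of a module;
its zero locus is where `x` and `y` become linearly dependent in the fibers. -/
def minorIdeal (A : Type*) {M : Type*} [CommRing A] [AddCommGroup M] [Module A M] (x y : M) :
    Ideal A :=
  Ideal.span {a | ∃ φ ψ : Dual A M, φ x * ψ y - φ y * ψ x = a}

lemma not_minorIdeal_le [Projective A M] {p : Ideal A} [p.IsPrime] {x y : M}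
    (hx : (1 : p.ResidueField) ⊗ₜ[A] x ≠ 0)
    (hy : (1 : p.ResidueField) ⊗ₜ[A] y ∉ Submodule.span p.ResidueField {1 ⊗ₜ[A] x}) :
    ¬ minorIdeal A x y ≤ p := by
  obtain ⟨φ, hφ⟩ := exists_apply_notMem hx
  have hφ' : algebraMap A p.ResidueField (φ x) ≠ 0 := by simpa using hφ
  have hz : (1 : p.ResidueField) ⊗ₜ[A] (φ x • y - φ y • x) ≠ 0 := by
    rw [tmul_sub, fiber_smul_tmul, fiber_smul_tmul, sub_ne_zero]
    intro heq
    refine hy ((Submodule.smul_mem_iff _ hφ').1 ?_)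
    rw [heq]
    exact Submodule.smul_mem _ _ (Submodule.mem_span_singleton_self _)
  obtain ⟨ψ, hψ⟩ := exists_apply_notMem hz
  refine fun hle => hψ (hle (Ideal.subset_span ⟨φ, ψ, ?_⟩))
  simp only [map_sub, map_smul, smul_eq_mul]

lemma minorIdeal_le_of_orderIdeal_add_smul_le {p : Ideal A} {x y : M} {r : A}
    (h : orderIdeal A (x + r • y) ≤ p) : minorIdeal A x y ≤ p := by
  rw [minorIdeal, Ideal.span_le]
  rintro _ ⟨φ, ψ, rfl⟩
  have hφ := p.mul_mem_right (ψ y) (h (apply_mem_orderIdeal φ (x + r • y)))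
  have hψ := p.mul_mem_right (φ y) (h (apply_mem_orderIdeal ψ (x + r • y)))
  simp only [map_add, map_smul, smul_eq_mul] at hφ hψ
  rw [SetLike.mem_coe]
  convert p.sub_mem hφ hψ using 1
  ring

lemma span_singleton_one_tmul_ne_top [Module.Finite A M] [Projective A M] {p : PrimeSpectrum A}
    (hrank : 2 ≤ rankAtStalk M p) (x : M) :
    Submodule.span p.asIdeal.ResidueField {(1 : p.asIdeal.ResidueField) ⊗ₜ[A] x} ≠ ⊤ := by
  intro htop
  have hle := finrank_span_le_card (R := p.asIdeal.ResidueField)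
    {(1 : p.asIdeal.ResidueField) ⊗ₜ[A] x}
  rw [htop, finrank_top, ← rankAtStalk_eq, Set.toFinset_singleton, Finset.card_singleton] at hle
  omega

lemma bot_ne_top_of_rankAtStalk_pos [Module.Finite A M] [Projective A M] {p : PrimeSpectrum A}
    (hrank : 0 < rankAtStalk M p) :
    (⊥ : Submodule p.asIdeal.ResidueField (p.asIdeal.ResidueField ⊗[A] M)) ≠ ⊤ := by
  rw [rankAtStalk_eq, finrank_pos_iff] at hrank
  exact bot_ne_top

end Fiber

section Serre

variable {A M : Type*} [CommRing A]

lemma isMaximal_of_forall_not_le [Ring.KrullDimLE 1 A] {𝔟 p : Ideal A} [p.IsPrime] (hbp : 𝔟 ≤ p)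
    (hb : ∀ q ∈ minimalPrimes A, ¬ 𝔟 ≤ q) : p.IsMaximal :=
  (Ring.krullDimLE_one_iff.1 ‹_› p ‹_›).resolve_left fun hmin => hb p hmin hbp

lemma asIdeal_injective : Function.Injective (PrimeSpectrum.asIdeal (R := A)) :=
  fun _ _ h => PrimeSpectrum.ext h

lemma finite_setOf_asIdeal_mem_minimalPrimes [IsNoetherianRing A] :
    {p : PrimeSpectrum A | p.asIdeal ∈ minimalPrimes A}.Finite :=
  (minimalPrimes.finite_of_isNoetherianRing A).preimage asIdeal_injective.injOn

lemma finite_setOf_le_asIdeal [IsNoetherianRing A] [Ring.KrullDimLE 1 A] {𝔟 : Ideal A}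
    (hb : ∀ q ∈ minimalPrimes A, ¬ 𝔟 ≤ q) : {p : PrimeSpectrum A | 𝔟 ≤ p.asIdeal}.Finite := by
  refine ((𝔟.finite_minimalPrimes_of_isNoetherianRing A).preimage
    asIdeal_injective.injOn).subset fun p hp => ⟨⟨p.2, hp⟩, fun q ⟨hq, hbq⟩ hqp => ?_⟩
  exact ((isMaximal_of_forall_not_le hbq hb).eq_of_le p.2.ne_top hqp).ge

lemma exists_notMem_iff_mem {S : Set (PrimeSpectrum A)} (hS : S.Finite)
    (hmax : ∀ p ∈ S, p.asIdeal.IsMaximal) (B : Set (PrimeSpectrum A)) :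
    ∃ r : A, ∀ p ∈ S, r ∉ p.asIdeal ↔ p ∈ B := by
  classical
  have := hS.to_subtype
  obtain ⟨r, hr⟩ := Ideal.exists_forall_sub_mem_ideal (I := fun p : S => p.1.asIdeal)
    (fun p q hpq => by
      have := hmax p p.2
      have := hmax q q.2
      exact Ideal.isCoprime_of_isMaximal fun h => hpq (Subtype.ext (asIdeal_injective h)))
    (fun p => if p.1 ∈ B then 1 else 0)
  refine ⟨r, fun p hp => ?_⟩
  have hrp := hr ⟨p, hp⟩
  by_cases hB : p ∈ B
  · rw [if_pos hB] at hrp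
    simp only [hB, iff_true]
    exact fun h => p.2.one_notMem (by simpa using p.asIdeal.sub_mem h hrp)
  · simpa [hB] using hrp

variable [AddCommGroup M] [Module A M] [Projective A M]

lemma exists_forall_not_orderIdeal_le [Module.Finite A M] {T : Set (PrimeSpectrum A)}
    (hT : T.Finite) (hrank : ∀ p ∈ T, 0 < rankAtStalk M p) :
    ∃ x : M, ∀ p ∈ T, ¬ orderIdeal A x ≤ p.asIdeal := by
  obtain ⟨x, hx⟩ := exists_forall_one_tmul_notMem (M := M) hT (fun _ => ⊥)
    fun p hp => bot_ne_top_of_rankAtStalk_pos (hrank p hp)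
  exact ⟨x, fun p hp => (one_tmul_eq_zero_iff _ _).not.1 (hx p hp)⟩

variable [IsNoetherianRing A] [Ring.KrullDimLE 1 A]

theorem exists_orderIdeal_eq_top [Module.Finite A M]
    (hrank : ∀ p : PrimeSpectrum A, 2 ≤ rankAtStalk M p) : ∃ x : M, orderIdeal A x = ⊤ := by
  have hmin := finite_setOf_asIdeal_mem_minimalPrimes (A := A)
  obtain ⟨y, hy⟩ := exists_forall_not_orderIdeal_le (M := M) hmin
    fun p _ => two_pos.trans_le (hrank p)
  replace hy : ∀ q ∈ minimalPrimes A, ¬ orderIdeal A y ≤ q := fun q hq => hy ⟨q, hq.1.1⟩ hq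
  obtain ⟨z, hz⟩ := exists_forall_one_tmul_notMem (M := M) (hmin.union (finite_setOf_le_asIdeal hy))
    (fun p => Submodule.span _ {1 ⊗ₜ[A] y})
    fun p _ => span_singleton_one_tmul_ne_top (hrank p) y
  have hyz : ∀ q ∈ minimalPrimes A, ¬ minorIdeal A y z ≤ q := fun q hq => by
    have := hq.1.1
    exact not_minorIdeal_le (p := q) ((one_tmul_eq_zero_iff q y).not.2 (hy q hq))
      (hz ⟨q, hq.1.1⟩ (Or.inl hq))
  obtain ⟨r, hr⟩ := exists_notMem_iff_mem (finite_setOf_le_asIdeal hyz)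
    (fun p hp => isMaximal_of_forall_not_le hp hyz) {p | orderIdeal A y ≤ p.asIdeal}
  refine ⟨y + r • z, by_contra fun hne => ?_⟩
  obtain ⟨𝔪, h𝔪, hle⟩ := Ideal.exists_le_maximal _ hne
  let p : PrimeSpectrum A := ⟨𝔪, h𝔪.isPrime⟩
  have hrp := hr p (minorIdeal_le_of_orderIdeal_add_smul_le hle)
  by_cases hyp : orderIdeal A y ≤ p.asIdeal
  · have hrz : orderIdeal A z ≤ p.asIdeal := by
      rintro _ ⟨φ, rfl⟩
      refine (p.2.mem_or_mem (?_ : r * φ z ∈ p.asIdeal)).resolve_left (hrp.2 hyp)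
      have := p.asIdeal.sub_mem (hle (apply_mem_orderIdeal φ _)) (hyp (apply_mem_orderIdeal φ y))
      simpa using this
    refine hz p (Or.inr hyp) ?_
    rw [(one_tmul_eq_zero_iff _ _).2 hrz]
    exact Submodule.zero_mem _
  · refine hyp ?_
    rintro _ ⟨φ, rfl⟩
    have := p.asIdeal.sub_mem (hle (apply_mem_orderIdeal φ _))
      (p.asIdeal.mul_mem_right (φ z) (not_not.1 (hrp.not.2 hyp)))
    simpa using this

end Serre

section RankOne

variable {A M : Type*} [CommRing A] [AddCommGroup M] [Module A M]

lemma apply_smul_comm_of_finrank_eq_one [Nontrivial A] [Module.Free A M]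
    (h : finrank A M = 1) (φ : Dual A M) (x y : M) : φ x • y = φ y • x := by
  let b := basisUnique Unit h
  have key (z : M) : z = b.repr z () • b () := by simpa using (b.sum_repr z).symm
  rw [key x, key y]
  simp only [map_smul, smul_smul, smul_eq_mul]
  congr 1
  ring

theorem apply_smul_comm_of_rankAtStalk_eq_one [Module.Finite A M] [Projective A M]
    (h : ∀ p : PrimeSpectrum A, rankAtStalk M p = 1) (φ : Dual A M) (x y : M) :
    φ x • y = φ y • x := by
  refine eq_of_localization_maximal (fun (P : Ideal A) _ => LocalizedModule P.primeCompl M)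
    (fun (P : Ideal A) _ => LocalizedModule.mkLinearMap P.primeCompl M) _ _
    fun P hP => ?_
  have := free_of_flat_of_isLocalRing (R := Localization.AtPrime P)
    (P := LocalizedModule P.primeCompl M)
  let ψ : Dual (Localization.AtPrime P) (LocalizedModule P.primeCompl M) :=
    IsLocalizedModule.mapExtendScalars P.primeCompl (LocalizedModule.mkLinearMap P.primeCompl M)
      (Algebra.linearMap A (Localization.AtPrime P)) (Localization.AtPrime P) φ
  have hψ (z : M) : ψ (LocalizedModule.mkLinearMap P.primeCompl M z) =
      algebraMap A (Localization.AtPrime P) (φ z) :=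
    IsLocalizedModule.map_apply P.primeCompl _ _ φ z
  have := apply_smul_comm_of_finrank_eq_one (h ⟨P, hP.isPrime⟩) ψ
    (LocalizedModule.mkLinearMap P.primeCompl M x) (LocalizedModule.mkLinearMap P.primeCompl M y)
  rwa [hψ, hψ, algebraMap_smul, algebraMap_smul, ← map_smul, ← map_smul] at this

/-- The relations satisfied by two generators `v`, `w` of a projective module of rank one:
`!![α, β; γ, δ]` is an idempotent matrix of rank one, and `α • w = β • v`, `δ • v = γ • w` say that
`v` and `w` are proportional to its columns. -/
structure IsRankOnePair (α β γ δ : A) (v w : M) : Prop where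
  add_eq_one : α + δ = 1
  mul_eq_mul : α * δ = β * γ
  smul_right : α • w = β • v
  smul_left : δ • v = γ • w

theorem exists_isRankOnePair [IsNoetherianRing A] [Ring.KrullDimLE 1 A] [Module.Finite A M]
    [Projective A M] (h : ∀ p : PrimeSpectrum A, rankAtStalk M p = 1) :
    ∃ (v w : M) (α β γ δ : A), Submodule.span A {v, w} = ⊤ ∧ IsRankOnePair α β γ δ v w := by
  have hcomm := apply_smul_comm_of_rankAtStalk_eq_one h
  obtain ⟨v, hv⟩ := exists_forall_not_orderIdeal_le (M := M)
    finite_setOf_asIdeal_mem_minimalPrimes fun p _ => (h p).symm ▸ one_pos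
  obtain ⟨w, hw⟩ := exists_forall_not_orderIdeal_le (M := M)
    (finite_setOf_le_asIdeal fun q hq => hv ⟨q, hq.1.1⟩ hq) fun p _ => (h p).symm ▸ one_pos
  have hsup : orderIdeal A v ⊔ orderIdeal A w = ⊤ := by
    by_contra hne
    obtain ⟨𝔪, h𝔪, hle⟩ := Ideal.exists_le_maximal _ hne
    exact hw ⟨𝔪, h𝔪.isPrime⟩ (le_sup_left.trans hle) (le_sup_right.trans hle)
  obtain ⟨_, ⟨φ, rfl⟩, _, ⟨ψ, rfl⟩, hφψ⟩ := Submodule.mem_sup.1 (hsup ▸ Submodule.mem_top (x := 1))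
  simp only [Dual.eval_apply] at hφψ
  refine ⟨v, w, φ v, φ w, ψ v, ψ w, eq_top_iff.2 fun x _ => ?_, hφψ, ?_, hcomm φ v w,
    hcomm ψ w v⟩
  · rw [Submodule.mem_span_pair]
    refine ⟨φ x, ψ x, ?_⟩
    rw [hcomm φ x v, hcomm ψ x w, ← add_smul, hφψ, one_smul]
  · simpa using congrArg ψ (hcomm φ v w)

lemma projective_ker_of_apply_eq_one [Projective A M] {φ : Dual A M} {x : M} (hx : φ x = 1) :
    Projective A (LinearMap.ker φ) := by
  refine .of_split (LinearMap.ker φ).subtype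
    ((LinearMap.id - φ.smulRight x).codRestrict _ fun y => by simp [hx]) ?_
  refine LinearMap.ext fun y => Subtype.ext ?_
  change (y : M) - φ y • x = y
  simp

/-- The splitting `M ≃ A × ker φ` given by an element `x` with `φ x = 1`. -/
def prodKerEquiv {φ : Dual A M} {x : M} (hx : φ x = 1) : (A × LinearMap.ker φ) ≃ₗ[A] M :=
  .ofBijective ((LinearMap.toSpanSingleton A M x).coprod (LinearMap.ker φ).subtype) <| by
    refine ⟨(injective_iff_map_eq_zero _).2 fun ⟨a, y⟩ hay => ?_, fun y => ?_⟩
    · have ha : a = 0 := by simpa [hx] using congrArg φ hay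
      subst ha
      simpa using hay
    · exact ⟨(φ y, ⟨y - φ y • x, by simp [hx]⟩), by simp⟩

lemma rankAtStalk_ker_add_one [Module.Finite A M] [Projective A M] {φ : Dual A M} {x : M}
    (hx : φ x = 1) (p : PrimeSpectrum A) :
    rankAtStalk (LinearMap.ker φ) p + 1 = rankAtStalk M p := by
  have : Module.Finite A (LinearMap.ker φ) := .of_surjective
    (LinearMap.snd A A _ ∘ₗ (prodKerEquiv hx).symm.toLinearMap)
    (Prod.snd_surjective.comp (prodKerEquiv hx).symm.surjective)
  have := projective_ker_of_apply_eq_one hx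
  have := p.nontrivial
  rw [← rankAtStalk_eq_of_equiv (prodKerEquiv hx), rankAtStalk_prod, rankAtStalk_self, add_comm]
  rfl

lemma span_insert_image_ker_eq_top {φ : Dual A M} {x : M} (hx : φ x = 1)
    {S : Set (LinearMap.ker φ)} (hS : Submodule.span A S = ⊤) :
    Submodule.span A (insert x (Subtype.val '' S)) = ⊤ := by
  have hker : Submodule.span A (Subtype.val '' S) = LinearMap.ker φ := by
    rw [← Submodule.coe_subtype, Submodule.span_image, hS, Submodule.map_subtype_top]
  rw [Submodule.span_insert, hker, eq_top_iff]
  intro y _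
  refine Submodule.mem_sup.2 ⟨φ y • x, ?_, y - φ y • x, by simp [hx], by simp⟩
  exact Submodule.smul_mem _ _ (Submodule.mem_span_singleton_self x)

theorem exists_generators_of_rankAtStalk_eq [IsNoetherianRing A] [Ring.KrullDimLE 1 A]
    (k : ℕ) (M : Type*) [AddCommGroup M] [Module A M] [Module.Finite A M] [Projective A M]
    (h : ∀ p : PrimeSpectrum A, rankAtStalk M p = k + 1) :
    ∃ (l : List M) (v w : M) (α β γ δ : A), l.length = k ∧
      Submodule.span A ({x | x ∈ l} ∪ {v, w}) = ⊤ ∧ IsRankOnePair α β γ δ v w := by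
  induction k generalizing M with
  | zero =>
    obtain ⟨v, w, α, β, γ, δ, hspan, hpair⟩ := exists_isRankOnePair h
    exact ⟨[], v, w, α, β, γ, δ, rfl, by simpa using hspan, hpair⟩
  | succ k ih =>
    obtain ⟨x, hx⟩ := exists_orderIdeal_eq_top (M := M) fun p => by
      rw [h]
      omega
    obtain ⟨φ, hφ : φ x = 1⟩ : (1 : A) ∈ orderIdeal A x := hx ▸ Submodule.mem_top
    have := projective_ker_of_apply_eq_one hφ
    obtain ⟨l, v, w, α, β, γ, δ, hl, hspan, hpair⟩ := ih (LinearMap.ker φ) fun p => by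
      have := rankAtStalk_ker_add_one hφ p
      have := h p
      omega
    refine ⟨x :: l.map Subtype.val, v, w, α, β, γ, δ, by simpa using hl, ?_,
      hpair.add_eq_one, hpair.mul_eq_mul, congrArg Subtype.val hpair.smul_right,
      congrArg Subtype.val hpair.smul_left⟩
    convert span_insert_image_ker_eq_top hφ hspan
    ext y
    simp only [List.mem_cons, List.mem_map, Set.mem_union, Set.mem_ofPred_eq, Set.mem_insert_iff,
      Set.mem_singleton_iff, Set.mem_image]
    aesop

end RankOne

section RegularSequence

open RingTheory.Sequence

variable {A : Type*} [CommRing A]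

lemma ofList_ofFn {k : ℕ} (a : Fin k → A) :
    Ideal.ofList (List.ofFn a) = Ideal.span (Set.range a) := by
  unfold Ideal.ofList
  congr 1
  ext y
  simp [List.mem_ofFn]

lemma ofList_append_pair (l : List A) (x y : A) :
    Ideal.ofList (l ++ [x, y]) = Ideal.ofList l ⊔ Ideal.span {x, y} := by
  rw [Ideal.ofList_append, Ideal.ofList_cons, Ideal.ofList_singleton, Ideal.span_insert]

lemma ofList_perm {l l' : List A} (h : l.Perm l') : Ideal.ofList l = Ideal.ofList l' := by
  unfold Ideal.ofList
  congr 1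
  ext y
  exact h.mem_iff

lemma isRegularSeq_succ_iff {k : ℕ} (a : Fin (k + 1) → A) :
    IsRegularSeq a ↔ IsRegularSeq (Fin.init a) ∧
      ∀ x, a (Fin.last k) * x ∈ Ideal.span (Set.range (Fin.init a)) →
        x ∈ Ideal.span (Set.range (Fin.init a)) := by
  have castSucc_iff (i : Fin k) (y : A) :
      (∃ j < i.castSucc, a j = y) ↔ ∃ j < i, Fin.init a j = y := by
    simp [Fin.exists_fin_succ', Fin.init, Fin.castSucc_lt_last, not_lt_of_gt]
  have last_iff (y : A) : (∃ j < Fin.last k, a j = y) ↔ y ∈ Set.range (Fin.init a) := by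
    simp [Fin.exists_fin_succ', Fin.init, Fin.castSucc_lt_last]
  unfold IsRegularSeq
  rw [Fin.forall_fin_succ']
  simp only [castSucc_iff, last_iff, Set.ofPred_mem_eq]
  rfl

lemma isWeaklyRegular_concat_iff (l : List A) (x : A) :
    IsWeaklyRegular A (l ++ [x]) ↔
      IsWeaklyRegular A l ∧ ∀ y, x * y ∈ Ideal.ofList l → y ∈ Ideal.ofList l := by
  rw [isWeaklyRegular_append_iff, isWeaklyRegular_singleton_iff,
    isSMulRegular_quotient_iff_mem_of_smul_mem]
  simp

lemma isWeaklyRegular_concat_sq {l : List A} {x : A} (h : IsWeaklyRegular A (l ++ [x])) :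
    IsWeaklyRegular A (l ++ [x ^ 2]) := by
  rw [isWeaklyRegular_concat_iff] at h ⊢
  exact ⟨h.1, fun y hy => h.2 _ (h.2 _ (by rwa [← mul_assoc, ← pow_two]))⟩

lemma isRegularSeq_iff_isWeaklyRegular_ofFn {k : ℕ} (a : Fin k → A) :
    IsRegularSeq a ↔ IsWeaklyRegular A (List.ofFn a) := by
  induction k with
  | zero => simp [IsRegularSeq]
  | succ k ih =>
    rw [List.ofFn_succ', List.concat_eq_append, isWeaklyRegular_concat_iff,
      isRegularSeq_succ_iff, ih, ← ofList_ofFn]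
    rfl

lemma mem_span_of_sum_mul_eq_zero {k : ℕ} {a : Fin k → A} (ha : IsRegularSeq a) {c : Fin k → A}
    (h : ∑ i, c i * a i = 0) (i : Fin k) : c i ∈ Ideal.span (Set.range a) := by
  induction k with
  | zero => exact i.elim0
  | succ k ih =>
    obtain ⟨hinit, hlast⟩ := (isRegularSeq_succ_iff a).1 ha
    rw [Fin.sum_univ_castSucc] at h
    have hc : c (Fin.last k) ∈ Ideal.span (Set.range (Fin.init a)) := by
      have heq : a (Fin.last k) * c (Fin.last k) = -∑ i : Fin k, c i.castSucc * a i.castSucc := by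
        linear_combination h
      refine hlast _ (heq ▸ neg_mem (sum_mem fun i _ => ?_))
      exact Ideal.mul_mem_left _ _ (Ideal.subset_span (Set.mem_range_self i))
    obtain ⟨d, hd⟩ := Ideal.mem_span_range_iff_exists_fun.1 hc
    have hle : Ideal.span (Set.range (Fin.init a)) ≤ Ideal.span (Set.range a) :=
      Ideal.span_mono (Set.range_comp_subset_range Fin.castSucc a)
    have hrel : ∑ i, (c i.castSucc + d i * a (Fin.last k)) * Fin.init a i = 0 := by
      rw [← h, ← hd, Finset.sum_mul, ← Finset.sum_add_distrib]
      exact Finset.sum_congr rfl fun i _ => by simp only [Fin.init]; ring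
    refine Fin.lastCases (hle hc) (fun i => ?_) i
    have hai := Ideal.subset_span (Set.mem_range_self (f := a) (Fin.last k))
    exact (Ideal.add_mem_iff_left _ (Ideal.mul_mem_left _ _ hai)).1 (hle (ih hinit hrel i))

lemma mem_span_of_sum_mul_mem_sq {k : ℕ} {a : Fin k → A} (ha : IsRegularSeq a) {c : Fin k → A}
    (h : ∑ i, c i * a i ∈ Ideal.span (Set.range a) ^ 2) (i : Fin k) :
    c i ∈ Ideal.span (Set.range a) := by
  rw [pow_two, ← smul_eq_mul, Ideal.span, Submodule.mem_ideal_smul_span_iff_exists_sum] at h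
  obtain ⟨d, hd, h⟩ := h
  rw [Finsupp.sum_fintype _ _ (by simp)] at h
  have hsub := mem_span_of_sum_mul_eq_zero ha (c := fun i => c i - d i)
    (by simp only [sub_mul, Finset.sum_sub_distrib, ← h, smul_eq_mul, sub_self]) i
  exact (Submodule.sub_mem_iff_left _ (hd i)).1 hsub

end RegularSequence

section CompleteIntersection

open RingTheory.Sequence IsLocalRing

variable {A : Type*} [CommRing A] {I : Ideal A} {k : ℕ}

/-- A complete intersection ideal, without the requirement on its height: the ideal is generated by
a weakly regular sequence of length `k`. Over a local ring the sequence is regular as soon as the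
ideal is proper. -/
def IsCompleteIntersection (I : Ideal A) (k : ℕ) : Prop :=
  ∃ rs : List A, rs.length = k ∧ IsWeaklyRegular A rs ∧ Ideal.ofList rs = I

lemma isCompleteIntersection_iff_exists_isRegularSeq :
    IsCompleteIntersection I k ↔
      ∃ a : Fin k → A, IsRegularSeq a ∧ Ideal.span (Set.range a) = I := by
  constructor
  · rintro ⟨rs, rfl, hreg, hrs⟩
    refine ⟨rs.get, ?_, ?_⟩
    · rwa [isRegularSeq_iff_isWeaklyRegular_ofFn, List.ofFn_get]
    · rwa [← ofList_ofFn, List.ofFn_get]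
  · rintro ⟨a, hreg, ha⟩
    exact ⟨List.ofFn a, by simp, (isRegularSeq_iff_isWeaklyRegular_ofFn a).1 hreg,
      by rwa [ofList_ofFn]⟩

lemma isLocallyCompleteIntersection_iff :
    IsLocallyCompleteIntersection I k ↔ idealHeight I = k ∧
      ∀ p : PrimeSpectrum A, I ≤ p.asIdeal →
        IsCompleteIntersection (I.map (algebraMap A (Localization.AtPrime p.asIdeal))) k := by
  simp only [isCompleteIntersection_iff_exists_isRegularSeq]
  rfl

lemma toCotangent_sum_smul {ι : Type*} [Fintype ι] (c : ι → A) (a : ι → I) :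
    I.toCotangent (∑ i, c i • a i) = ∑ i, Ideal.Quotient.mk I (c i) • I.toCotangent (a i) := by
  rw [map_sum]
  exact Finset.sum_congr rfl fun i _ => map_smul I.toCotangent (c i) (a i)

lemma sum_smul_toCotangent_eq_zero_iff {ι : Type*} [Fintype ι] (c : ι → A) (a : ι → I) :
    ∑ i, Ideal.Quotient.mk I (c i) • I.toCotangent (a i) = 0 ↔ ∑ i, c i * (a i : A) ∈ I ^ 2 := by
  rw [← toCotangent_sum_smul, Ideal.toCotangent_eq_zero]
  simp

lemma span_range_toCotangent_eq_top {ι : Type*} [Finite ι] (a : ι → I)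
    (h : I ≤ Ideal.span (Set.range fun i => (a i : A)) ⊔ I ^ 2) :
    Submodule.span (A ⧸ I) (Set.range fun i => I.toCotangent (a i)) = ⊤ := by
  have := Fintype.ofFinite ι
  refine eq_top_iff.2 fun x _ => ?_
  obtain ⟨x, rfl⟩ := I.toCotangent_surjective x
  obtain ⟨y, hy, z, hz, hyz⟩ := Submodule.mem_sup.1 (h x.2)
  obtain ⟨c, rfl⟩ := Ideal.mem_span_range_iff_exists_fun.1 hy
  have hx : I.toCotangent x = ∑ i, Ideal.Quotient.mk I (c i) • I.toCotangent (a i) := by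
    rw [← toCotangent_sum_smul, Ideal.toCotangent_eq]
    simpa [← hyz] using hz
  rw [hx]
  exact sum_mem fun i _ => Submodule.smul_mem _ _ (Submodule.subset_span ⟨i, rfl⟩)

lemma linearIndependent_toCotangent {a : Fin k → I} (ha : IsRegularSeq fun i => (a i : A))
    (hspan : Ideal.span (Set.range fun i => (a i : A)) = I) :
    LinearIndependent (A ⧸ I) fun i => I.toCotangent (a i) := by
  rw [Fintype.linearIndependent_iff]
  intro g hg i
  choose c hc using fun i => Ideal.Quotient.mk_surjective (g i)
  simp only [← hc, sum_smul_toCotangent_eq_zero_iff] at hg ⊢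
  rw [Ideal.Quotient.eq_zero_iff_mem]
  exact hspan.le (mem_span_of_sum_mul_mem_sq ha (by rwa [hspan]) i)

lemma IsCompleteIntersection.nonempty_basis (h : IsCompleteIntersection I k) :
    Nonempty (Basis (Fin k) (A ⧸ I) I.Cotangent) := by
  obtain ⟨a, ha, hspan⟩ := isCompleteIntersection_iff_exists_isRegularSeq.1 h
  lift a to Fin k → I using fun i => hspan ▸ Ideal.subset_span ⟨i, rfl⟩
  exact ⟨Basis.mk (linearIndependent_toCotangent ha hspan)
    (span_range_toCotangent_eq_top a (hspan.ge.trans le_sup_left)).ge⟩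

lemma IsCompleteIntersection.le_length (h : IsCompleteIntersection I k) (hI : I ≠ ⊤) {l : List A}
    (hl : Ideal.ofList l = I) : k ≤ l.length := by
  obtain ⟨b⟩ := h.nonempty_basis
  have := Ideal.Quotient.nontrivial_iff.2 hI
  have hmem (i : Fin l.length) : l.get i ∈ I := hl ▸ Ideal.subset_span (l.get_mem i)
  have hspan := span_range_toCotangent_eq_top (I := I) (fun i => ⟨l.get i, hmem i⟩)
    (by rw [← ofList_ofFn, List.ofFn_get, hl]; exact le_sup_left)
  calc k = finrank (A ⧸ I) I.Cotangent := by rw [finrank_eq_card_basis b, Fintype.card_fin]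
    _ = (Set.range fun i => I.toCotangent ⟨l.get i, hmem i⟩).finrank (A ⧸ I) := by
      rw [Set.finrank, hspan, finrank_top]
    _ ≤ l.length := (finrank_range_le_card _).trans_eq (Fintype.card_fin _)

end CompleteIntersection

section Exchange

open RingTheory.Sequence IsLocalRing

variable {A : Type*} [CommRing A]

lemma ofList_concat_le_of_sub_mul_mem {l : List A} {d e z : A} (h : z - d * e ∈ Ideal.ofList l) :
    Ideal.ofList (l ++ [z]) ≤ Ideal.ofList (l ++ [e]) := by
  simp only [Ideal.ofList_append, Ideal.ofList_singleton]
  refine sup_le le_sup_left ((Ideal.span_singleton_le_iff_mem _).2 ?_)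
  rw [← sub_add_cancel z (d * e)]
  exact add_mem (Submodule.mem_sup_left h)
    (Submodule.mem_sup_right (Ideal.mul_mem_left _ _ (Ideal.mem_span_singleton_self e)))

lemma ofList_concat_eq_of_sub_mul_mem {l : List A} {d e z : A} (hd : IsUnit d)
    (h : z - d * e ∈ Ideal.ofList l) : Ideal.ofList (l ++ [z]) = Ideal.ofList (l ++ [e]) := by
  obtain ⟨c, hc⟩ := hd.exists_left_inv
  refine (ofList_concat_le_of_sub_mul_mem h).antisymm
    (ofList_concat_le_of_sub_mul_mem (d := c) ?_)
  have heq : e - c * z = -c * (z - d * e) := by linear_combination (-e) * hc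
  exact heq ▸ Ideal.mul_mem_left _ _ h

lemma isWeaklyRegular_concat_of_sub_mul_mem {l : List A} {d e z : A} (hd : IsUnit d)
    (h : z - d * e ∈ Ideal.ofList l) (hreg : IsWeaklyRegular A (l ++ [e])) :
    IsWeaklyRegular A (l ++ [z]) := by
  rw [isWeaklyRegular_concat_iff] at hreg ⊢
  refine ⟨hreg.1, fun x hx => hreg.2 x ((Ideal.unit_mul_mem_iff_mem _ hd).1 ?_)⟩
  have heq : d * (e * x) = z * x - (z - d * e) * x := by ring
  exact heq ▸ sub_mem hx (Ideal.mul_mem_right x _ h)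

variable [IsLocalRing A]

lemma mem_maximalIdeal_mul_or_exists_perm {l : List A} {z : A} (hz : z ∈ Ideal.ofList l) :
    z ∈ maximalIdeal A * Ideal.ofList l ∨
      ∃ (e : A) (t : List A) (d : A), l.Perm (e :: t) ∧ IsUnit d ∧ z - d * e ∈ Ideal.ofList t := by
  induction l generalizing z with
  | nil => exact .inl (by simpa using hz)
  | cons e t ih =>
    rw [Ideal.ofList_cons] at hz ⊢
    obtain ⟨y, hy, z, hzt, rfl⟩ := Submodule.mem_sup.1 hz
    obtain ⟨c, rfl⟩ := Ideal.mem_span_singleton'.1 hy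
    by_cases hc : IsUnit c
    · exact .inr ⟨e, t, c, .refl _, hc, by simpa using hzt⟩
    rcases ih hzt with hmem | ⟨e', t', d, hperm, hd, hmem⟩
    · refine .inl (add_mem ?_ (Ideal.mul_mono_right le_sup_right hmem))
      exact Ideal.mul_mem_mul ((mem_maximalIdeal _).2 hc)
        (Submodule.mem_sup_left (Ideal.mem_span_singleton_self e))
    · refine .inr ⟨e', e :: t', d, (hperm.cons e).trans (.swap _ _ _), hd, ?_⟩
      rw [Ideal.ofList_cons, add_sub_assoc]
      exact add_mem (Submodule.mem_sup_left hy) (Submodule.mem_sup_right hmem)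

variable [IsNoetherianRing A]

lemma isWeaklyRegular_of_perm {l l' : List A} (hl : Ideal.ofList l ≠ ⊤) (hperm : l.Perm l')
    (h : IsWeaklyRegular A l) : IsWeaklyRegular A l' :=
  isWeaklyRegular_of_perm_of_subset_maximalIdeal h hperm fun _ hr =>
    le_maximalIdeal hl (Ideal.subset_span hr)

lemma exists_isWeaklyRegular_exchange {h l : List A} {g : A} (htop : Ideal.ofList (h ++ l) ≠ ⊤)
    (hreg : IsWeaklyRegular A (h ++ l)) (hg : g ∈ Ideal.ofList (h ++ l))
    (hg' : g ∉ Ideal.ofList h ⊔ maximalIdeal A * Ideal.ofList (h ++ l)) :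
    ∃ t : List A, t.length + 1 = l.length ∧
      Ideal.ofList ((h ++ [g]) ++ t) = Ideal.ofList (h ++ l) ∧
      IsWeaklyRegular A ((h ++ [g]) ++ t) := by
  rw [Ideal.ofList_append] at hg hg'
  obtain ⟨y, hy, z, hz, rfl⟩ := Submodule.mem_sup.1 hg
  obtain hmem | ⟨e, t, d, hperm, hd, hmem⟩ := mem_maximalIdeal_mul_or_exists_perm hz
  · exact absurd (add_mem (Submodule.mem_sup_left hy)
      (Submodule.mem_sup_right (Ideal.mul_mono_right le_sup_right hmem))) hg'
  have hsub : y + z - d * e ∈ Ideal.ofList (h ++ t) := by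
    rw [add_sub_assoc, Ideal.ofList_append]
    exact add_mem (Submodule.mem_sup_left hy) (Submodule.mem_sup_right hmem)
  have hperm_e : (h ++ l).Perm ((h ++ t) ++ [e]) := by
    rw [List.append_assoc]
    exact (hperm.trans (List.perm_append_singleton e t).symm).append_left h
  have hperm_g : ((h ++ t) ++ [y + z]).Perm ((h ++ [y + z]) ++ t) := by
    simpa only [List.append_assoc] using List.perm_append_comm.append_left h
  have heq : Ideal.ofList ((h ++ t) ++ [y + z]) = Ideal.ofList (h ++ l) := by
    rw [ofList_concat_eq_of_sub_mul_mem hd hsub, ofList_perm hperm_e]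
  refine ⟨t, by simp [hperm.length_eq], by rw [← ofList_perm hperm_g, heq], ?_⟩
  refine isWeaklyRegular_of_perm (heq ▸ htop) hperm_g ?_
  exact isWeaklyRegular_concat_of_sub_mul_mem hd hsub (isWeaklyRegular_of_perm htop hperm_e hreg)

lemma le_of_le_sup_mul {I N N' : Ideal A} (hI : I ≠ ⊤) (h : N ≤ N' ⊔ I * N) : N ≤ N' :=
  Submodule.le_of_le_smul_of_le_jacobson_bot (IsNoetherian.noetherian N)
    ((le_maximalIdeal hI).trans (maximalIdeal_le_jacobson _)) h

variable {I : Ideal A} {k : ℕ}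

lemma IsCompleteIntersection.notMem_sup_maximalIdeal_mul (h : IsCompleteIntersection I k)
    (hI : I ≠ ⊤) {g : A} {l : List A} (hl : l.length < k) (hgl : Ideal.ofList (g :: l) = I) :
    g ∉ Ideal.ofList l ⊔ maximalIdeal A * I := by
  intro hg
  have hle : I ≤ Ideal.ofList l ⊔ maximalIdeal A * I := by
    conv_lhs => rw [← hgl, Ideal.ofList_cons]
    exact sup_le ((Ideal.span_singleton_le_iff_mem _).2 hg) le_sup_left
  have hlI : Ideal.ofList l ≤ I := by
    rw [← hgl, Ideal.ofList_cons]
    exact le_sup_right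
  have heq := hlI.antisymm (le_of_le_sup_mul Ideal.IsPrime.ne_top' hle)
  exact hl.not_ge (h.le_length hI heq)

theorem IsCompleteIntersection.isWeaklyRegular_of_ofList_eq (h : IsCompleteIntersection I k)
    (hI : I ≠ ⊤) {gs : List A} (hlen : gs.length = k) (hgs : Ideal.ofList gs = I) :
    IsWeaklyRegular A gs := by
  have key (h₁ h₂ : List A) (heq : gs = h₁ ++ h₂) : ∃ t : List A, t.length = h₂.length ∧
      Ideal.ofList (h₁ ++ t) = I ∧ IsWeaklyRegular A (h₁ ++ t) := by
    induction h₁ using List.reverseRecOn generalizing h₂ with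
    | nil =>
      obtain ⟨rs, hrs, hreg, hrsI⟩ := h
      exact ⟨rs, by simp [hrs, ← hlen, heq], hrsI, hreg⟩
    | append_singleton h₁ g ih =>
      have hperm : gs.Perm (g :: (h₁ ++ h₂)) := by
        rw [heq, List.append_assoc]
        exact List.perm_middle
      obtain ⟨t, ht, htI, hreg⟩ := ih (g :: h₂) (by simpa using heq)
      have hlt : (h₁ ++ h₂).length < k := by
        rw [← hlen, hperm.length_eq]
        exact Nat.lt_succ_self _
      have hg := h.notMem_sup_maximalIdeal_mul hI hlt (by rw [← ofList_perm hperm, hgs])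
      have hgI : g ∈ I := by
        rw [← hgs, ofList_perm hperm]
        exact Ideal.subset_span List.mem_cons_self
      rw [← htI] at hI hg hgI
      obtain ⟨t', ht', htI', hreg'⟩ := exists_isWeaklyRegular_exchange hI hreg hgI fun hmem => hg <|
        sup_le_sup_right ((Ideal.ofList_append h₁ h₂).ge.trans' le_sup_left) _ hmem
      exact ⟨t', by simpa [ht] using ht', htI'.trans htI, hreg'⟩
  obtain ⟨t, ht, -, hreg⟩ := key gs [] (by simp)
  rw [List.length_eq_zero_iff.1 ht] at hreg
  simpa using hreg

end Exchange

section ConormalFrame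

/-- Elements `u, v, w` of an ideal `I` with coefficients `α, β, γ, δ`: the vector `u` stands for a
free direct summand of `I / I²`, the vectors `v, w` for generators of a direct summand `L` of rank
one which is the image of the idempotent matrix with rows `(α, β)` and `(γ, δ)`. -/
structure ConormalFrame (B : Type*) where
  (α β γ δ u v w : B)

namespace ConormalFrame

/-- The image of a frame under a ring homomorphism. -/
def map {B C : Type*} [CommRing B] [CommRing C] (φ : B →+* C) (D : ConormalFrame B) :
    ConormalFrame C :=
  ⟨φ D.α, φ D.β, φ D.γ, φ D.δ, φ D.u, φ D.v, φ D.w⟩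

variable {B : Type*} [CommRing B] {F I P Q : Ideal B} {D : ConormalFrame B} {x₁ x₂ y₁ y₂ : B}

/-- The relations making `D` a frame of `I / I²`: besides `u, v, w` the generators of `I / I²` are
those of `F`, and modulo `I` the coefficients of `D` form an idempotent matrix of rank one. -/
structure IsAdapted (D : ConormalFrame B) (F I : Ideal B) : Prop where
  le : F ≤ I
  u_mem : D.u ∈ I
  v_mem : D.v ∈ I
  w_mem : D.w ∈ I
  add_eq_one : D.α + D.δ = 1
  det_mem : D.α * D.δ - D.β * D.γ ∈ I
  right_mem : D.α * D.w - D.β * D.v ∈ I ^ 2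
  left_mem : D.δ * D.v - D.γ * D.w ∈ I ^ 2
  le_sup : I ≤ F ⊔ Ideal.span {D.u, D.v, D.w} ⊔ I ^ 2

/-- With `kerSnd`, a pair of generators of the kernel of a surjection `A u ⊕ L → L⁻¹`, where
`A = B / I`. This kernel is isomorphic to `L²`. -/
def kerFst (D : ConormalFrame B) : B := D.γ ^ 2 * D.u + D.α * D.v

/-- See `kerFst`. -/
def kerSnd (D : ConormalFrame B) : B := D.δ ^ 2 * D.u + D.β * D.w

/-- With `genSnd`, a basis of `L² ⊕ L⁻²`: the squares of `u` and `γ u - w` generate the second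
summand, and the weights satisfy `(α + 3δ) α² + (3α + δ) δ² = (α + δ)³ = 1`. -/
def genFst (D : ConormalFrame B) : B :=
  (D.α + 3 * D.δ) * D.α ^ 2 * D.kerFst + (3 * D.α + D.δ) * D.γ ^ 2 * D.kerSnd
    - (3 * D.α + D.δ) * (D.γ * D.u - D.w) ^ 2

/-- See `genFst`. -/
def genSnd (D : ConormalFrame B) : B :=
  (D.α + 3 * D.δ) * D.β ^ 2 * D.kerFst + (3 * D.α + D.δ) * D.δ ^ 2 * D.kerSnd
    + (D.α + 3 * D.δ) * D.u ^ 2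

/-- Ferrand's double structure on `I`: the preimage in `I` of the sum of `F` and `L²` in `I / I²`.
It is written with `genFst` and `genSnd`, which generate `L²` modulo `I²`. -/
def double (D : ConormalFrame B) (F I : Ideal B) : Ideal B :=
  F ⊔ Ideal.span {D.genFst, D.genSnd} ⊔ I ^ 2

lemma sq_le_double (D : ConormalFrame B) (F I : Ideal B) : I ^ 2 ≤ D.double F I :=
  le_sup_right

lemma map_genFst {C : Type*} [CommRing C] (φ : B →+* C) (D : ConormalFrame B) :
    (D.map φ).genFst = φ D.genFst := by
  simp [map, genFst, kerFst, kerSnd, map_ofNat]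

lemma map_genSnd {C : Type*} [CommRing C] (φ : B →+* C) (D : ConormalFrame B) :
    (D.map φ).genSnd = φ D.genSnd := by
  simp [map, genSnd, kerFst, kerSnd, map_ofNat]

lemma IsAdapted.map {C : Type*} [CommRing C] (h : D.IsAdapted F I) (φ : B →+* C) :
    (D.map φ).IsAdapted (F.map φ) (I.map φ) where
  le := Ideal.map_mono h.le
  u_mem := Ideal.mem_map_of_mem φ h.u_mem
  v_mem := Ideal.mem_map_of_mem φ h.v_mem
  w_mem := Ideal.mem_map_of_mem φ h.w_mem
  add_eq_one := by simpa [ConormalFrame.map] using congrArg φ h.add_eq_one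
  det_mem := by simpa [ConormalFrame.map] using Ideal.mem_map_of_mem φ h.det_mem
  right_mem := by simpa [ConormalFrame.map, Ideal.map_pow] using Ideal.mem_map_of_mem φ h.right_mem
  left_mem := by simpa [ConormalFrame.map, Ideal.map_pow] using Ideal.mem_map_of_mem φ h.left_mem
  le_sup := by
    simpa [ConormalFrame.map, Ideal.map_sup, Ideal.map_span, Ideal.map_pow,
      Set.image_insert_eq] using Ideal.map_mono (f := φ) h.le_sup

/-- A rank one factorization, modulo `I`, of the coefficient matrix of a frame, as a column
`(x₁, x₂)` times a row `(y₁, y₂)`. -/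
structure IsFactored (D : ConormalFrame B) (I : Ideal B) (x₁ x₂ y₁ y₂ : B) : Prop where
  α_mem : D.α - x₁ * y₁ ∈ I
  β_mem : D.β - x₁ * y₂ ∈ I
  γ_mem : D.γ - x₂ * y₁ ∈ I
  δ_mem : D.δ - x₂ * y₂ ∈ I

namespace IsFactored

variable (h : D.IsFactored I x₁ x₂ y₁ y₂)
include h

lemma α_sq_sub_mem : D.α ^ 2 - (x₁ * y₁) ^ 2 ∈ I := by
  rw [sq_sub_sq]
  exact I.mul_mem_left _ h.α_mem

lemma β_sq_sub_mem : D.β ^ 2 - (x₁ * y₂) ^ 2 ∈ I := by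
  rw [sq_sub_sq]
  exact I.mul_mem_left _ h.β_mem

lemma γ_sq_sub_mem : D.γ ^ 2 - (x₂ * y₁) ^ 2 ∈ I := by
  rw [sq_sub_sq]
  exact I.mul_mem_left _ h.γ_mem

lemma δ_sq_sub_mem : D.δ ^ 2 - (x₂ * y₂) ^ 2 ∈ I := by
  rw [sq_sub_sq]
  exact I.mul_mem_left _ h.δ_mem

end IsFactored

lemma IsAdapted.exists_isFactored [IsLocalRing B] (h : D.IsAdapted F I) :
    ∃ x₁ x₂ y₁ y₂, D.IsFactored I x₁ x₂ y₁ y₂ := by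
  rcases IsLocalRing.isUnit_or_isUnit_of_add_one h.add_eq_one with hα | hδ
  · obtain ⟨c, hc⟩ := hα.exists_left_inv
    refine ⟨1, c * D.γ, D.α, D.β, by simp, by simp, ?_, ?_⟩
    · convert I.zero_mem using 1
      linear_combination -D.γ * hc
    · convert I.mul_mem_left c h.det_mem using 1
      linear_combination -D.δ * hc
  · obtain ⟨c, hc⟩ := hδ.exists_left_inv
    refine ⟨c * D.β, 1, D.γ, D.δ, ?_, ?_, by simp, by simp⟩
    · convert I.mul_mem_left c h.det_mem using 1
      linear_combination -D.α * hc
    · convert I.zero_mem using 1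
      linear_combination -D.β * hc

lemma mk_mul_eq_mk_mul_of_sub_mem (hP : I * Q ≤ P) {r s z : B} (hr : r - s ∈ I) (hz : z ∈ Q) :
    Ideal.Quotient.mk P (r * z) = Ideal.Quotient.mk P (s * z) := by
  rw [Ideal.Quotient.eq, ← sub_mul]
  exact hP (Ideal.mul_mem_mul hr hz)

lemma mk_sq_eq_mk_sq_of_sub_mem (hP : I * Q ≤ P) {y z : B} (hy : y ∈ I) (hz : z ∈ I)
    (hyz : y - z ∈ Q) : Ideal.Quotient.mk P (y ^ 2) = Ideal.Quotient.mk P (z ^ 2) := by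
  rw [Ideal.Quotient.eq, sq_sub_sq]
  exact hP (Ideal.mul_mem_mul (add_mem hy hz) hyz)

/-- The generator of `L` belonging to a factorization. -/
def lineGen (D : ConormalFrame B) (x₁ x₂ : B) : B := x₁ * D.v + x₂ * D.w

/-- The lift of the generator of `L⁻¹` belonging to a factorization. -/
def dualGen (D : ConormalFrame B) (x₁ x₂ y₁ y₂ : B) : B :=
  (x₁ * y₁ ^ 2 + 2 * x₂ * y₁ * y₂) * D.u - y₂ ^ 2 * D.lineGen x₁ x₂

/-- The generator of the kernel `L²` belonging to a factorization, written in the two generators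
`kerFst` and `kerSnd`. -/
def kerGen (D : ConormalFrame B) (x₁ x₂ : B) : B :=
  (D.α + 3 * D.δ) * x₁ ^ 2 * D.kerFst + (3 * D.α + D.δ) * x₂ ^ 2 * D.kerSnd

namespace IsAdapted

variable (hD : D.IsAdapted F I)
include hD

lemma lineGen_mem (x₁ x₂ : B) : D.lineGen x₁ x₂ ∈ I :=
  add_mem (I.mul_mem_left _ hD.v_mem) (I.mul_mem_left _ hD.w_mem)

lemma dualGen_mem (x₁ x₂ y₁ y₂ : B) : D.dualGen x₁ x₂ y₁ y₂ ∈ I :=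
  sub_mem (I.mul_mem_left _ hD.u_mem) (I.mul_mem_left _ (hD.lineGen_mem _ _))

lemma kerFst_mem : D.kerFst ∈ I :=
  add_mem (I.mul_mem_left _ hD.u_mem) (I.mul_mem_left _ hD.v_mem)

lemma kerSnd_mem : D.kerSnd ∈ I :=
  add_mem (I.mul_mem_left _ hD.u_mem) (I.mul_mem_left _ hD.w_mem)

lemma kerGen_mem (x₁ x₂ : B) : D.kerGen x₁ x₂ ∈ I :=
  add_mem (I.mul_mem_left _ hD.kerFst_mem) (I.mul_mem_left _ hD.kerSnd_mem)

lemma genFst_mem (hQ : I ^ 2 ≤ Q) (hfst : D.kerFst ∈ Q) (hsnd : D.kerSnd ∈ Q) :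
    D.genFst ∈ Q :=
  sub_mem (add_mem (Q.mul_mem_left _ hfst) (Q.mul_mem_left _ hsnd)) (Q.mul_mem_left _
    (hQ (Ideal.pow_mem_pow (sub_mem (I.mul_mem_left _ hD.u_mem) hD.w_mem) 2)))

lemma genSnd_mem (hQ : I ^ 2 ≤ Q) (hfst : D.kerFst ∈ Q) (hsnd : D.kerSnd ∈ Q) :
    D.genSnd ∈ Q :=
  add_mem (add_mem (Q.mul_mem_left _ hfst) (Q.mul_mem_left _ hsnd))
    (Q.mul_mem_left _ (hQ (Ideal.pow_mem_pow hD.u_mem 2)))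

lemma sup_span_gen_le (hQ : I ^ 2 ≤ Q) (hF : F ≤ Q) (hfst : D.kerFst ∈ Q)
    (hsnd : D.kerSnd ∈ Q) : F ⊔ Ideal.span {D.genFst, D.genSnd} ≤ Q :=
  sup_le hF (Ideal.span_le.2 (Set.pair_subset (hD.genFst_mem hQ hfst hsnd)
    (hD.genSnd_mem hQ hfst hsnd)))

lemma double_le : D.double F I ≤ I :=
  sup_le (hD.sup_span_gen_le (Ideal.pow_le_self two_ne_zero) hD.le hD.kerFst_mem hD.kerSnd_mem)
    (Ideal.pow_le_self two_ne_zero)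

variable (h : D.IsFactored I x₁ x₂ y₁ y₂)
include h

lemma pairing_sub_one_mem : x₁ * y₁ + x₂ * y₂ - 1 ∈ I := by
  convert neg_mem (add_mem h.α_mem h.δ_mem) using 1
  linear_combination hD.add_eq_one

lemma weights_sub_one_mem :
    (D.α + 3 * D.δ) * (x₁ * y₁) ^ 2 + (3 * D.α + D.δ) * (x₂ * y₂) ^ 2 - 1 ∈ I := by
  have hα := Ideal.Quotient.eq.2 h.α_mem
  have hδ := Ideal.Quotient.eq.2 h.δ_mem
  have hadd := congrArg (Ideal.Quotient.mk I) hD.add_eq_one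
  rw [← Ideal.Quotient.eq, map_add, map_mul, map_mul, map_pow, map_pow, ← hα, ← hδ]
  simp only [map_add, map_mul, map_ofNat, map_one] at hadd ⊢
  generalize Ideal.Quotient.mk I D.α = α, Ideal.Quotient.mk I D.δ = δ at hadd ⊢
  linear_combination ((α + δ) ^ 2 + (α + δ) + 1) * hadd

lemma mk_v_eq :
    Ideal.Quotient.mk (I ^ 2) D.v = Ideal.Quotient.mk (I ^ 2) (y₁ * D.lineGen x₁ x₂) := by
  have hαv := mk_mul_eq_mk_mul_of_sub_mem (pow_two I).ge h.α_mem hD.v_mem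
  have hγw := mk_mul_eq_mk_mul_of_sub_mem (pow_two I).ge h.γ_mem hD.w_mem
  have hleft := Ideal.Quotient.eq.2 hD.left_mem
  have hadd := congrArg (Ideal.Quotient.mk (I ^ 2)) hD.add_eq_one
  simp only [lineGen, map_add, map_mul, map_one] at *
  linear_combination -Ideal.Quotient.mk (I ^ 2) D.v * hadd + hαv + hleft + hγw

lemma mk_w_eq :
    Ideal.Quotient.mk (I ^ 2) D.w = Ideal.Quotient.mk (I ^ 2) (y₂ * D.lineGen x₁ x₂) := by
  have hβv := mk_mul_eq_mk_mul_of_sub_mem (pow_two I).ge h.β_mem hD.v_mem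
  have hδw := mk_mul_eq_mk_mul_of_sub_mem (pow_two I).ge h.δ_mem hD.w_mem
  have hright := Ideal.Quotient.eq.2 hD.right_mem
  have hadd := congrArg (Ideal.Quotient.mk (I ^ 2)) hD.add_eq_one
  simp only [lineGen, map_add, map_mul, map_one] at *
  linear_combination -Ideal.Quotient.mk (I ^ 2) D.w * hadd + hβv + hright + hδw

lemma mk_kerFst_eq : Ideal.Quotient.mk (I ^ 2) D.kerFst =
    Ideal.Quotient.mk (I ^ 2) (y₁ ^ 2 * (x₂ ^ 2 * D.u + x₁ * D.lineGen x₁ x₂)) := by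
  have hγu := mk_mul_eq_mk_mul_of_sub_mem (pow_two I).ge h.γ_sq_sub_mem hD.u_mem
  have hαv := mk_mul_eq_mk_mul_of_sub_mem (pow_two I).ge h.α_mem hD.v_mem
  have hv := hD.mk_v_eq h
  simp only [kerFst, map_add, map_mul, map_pow] at *
  linear_combination hγu + hαv +
    Ideal.Quotient.mk (I ^ 2) x₁ * Ideal.Quotient.mk (I ^ 2) y₁ * hv

lemma mk_kerSnd_eq : Ideal.Quotient.mk (I ^ 2) D.kerSnd =
    Ideal.Quotient.mk (I ^ 2) (y₂ ^ 2 * (x₂ ^ 2 * D.u + x₁ * D.lineGen x₁ x₂)) := by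
  have hδu := mk_mul_eq_mk_mul_of_sub_mem (pow_two I).ge h.δ_sq_sub_mem hD.u_mem
  have hβw := mk_mul_eq_mk_mul_of_sub_mem (pow_two I).ge h.β_mem hD.w_mem
  have hw := hD.mk_w_eq h
  simp only [kerSnd, map_add, map_mul, map_pow] at *
  linear_combination hδu + hβw +
    Ideal.Quotient.mk (I ^ 2) x₁ * Ideal.Quotient.mk (I ^ 2) y₂ * hw

lemma mk_kerGen_eq : Ideal.Quotient.mk (I ^ 2) (D.kerGen x₁ x₂) =
    Ideal.Quotient.mk (I ^ 2) (x₂ ^ 2 * D.u + x₁ * D.lineGen x₁ x₂) := by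
  have hk := mk_mul_eq_mk_mul_of_sub_mem (pow_two I).ge (hD.weights_sub_one_mem h)
    (add_mem (I.mul_mem_left (x₂ ^ 2) hD.u_mem) (I.mul_mem_left x₁ (hD.lineGen_mem x₁ x₂)))
  have hfst := hD.mk_kerFst_eq h
  have hsnd := hD.mk_kerSnd_eq h
  rw [one_mul] at hk
  rw [← hk]
  simp only [kerGen, map_add, map_mul, map_pow] at hfst hsnd ⊢
  rw [hfst, hsnd]
  ring

lemma mk_pairing_sq_mul {z : B} (hz : z ∈ I) :
    Ideal.Quotient.mk (I ^ 2) ((x₁ * y₁ + x₂ * y₂) ^ 2 * z) = Ideal.Quotient.mk (I ^ 2) z := by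
  rw [mk_mul_eq_mk_mul_of_sub_mem (s := 1) (pow_two I).ge ?_ hz, one_mul]
  rw [← one_pow 2, sq_sub_sq]
  exact I.mul_mem_left _ (hD.pairing_sub_one_mem h)

lemma mk_u_eq : Ideal.Quotient.mk (I ^ 2) D.u =
    Ideal.Quotient.mk (I ^ 2) (x₁ * D.dualGen x₁ x₂ y₁ y₂ + y₂ ^ 2 * D.kerGen x₁ x₂) := by
  rw [map_add, map_mul _ (y₂ ^ 2), hD.mk_kerGen_eq h, ← hD.mk_pairing_sq_mul h hD.u_mem,
    ← map_mul, ← map_add, dualGen]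
  congr 1
  ring

lemma mk_lineGen_eq : Ideal.Quotient.mk (I ^ 2) (D.lineGen x₁ x₂) = Ideal.Quotient.mk (I ^ 2)
    ((x₁ * y₁ ^ 2 + 2 * x₂ * y₁ * y₂) * D.kerGen x₁ x₂ - x₂ ^ 2 * D.dualGen x₁ x₂ y₁ y₂) := by
  rw [map_sub, map_mul _ (_ + _), hD.mk_kerGen_eq h,
    ← hD.mk_pairing_sq_mul h (hD.lineGen_mem x₁ x₂), ← map_mul, ← map_sub, dualGen]
  congr 1
  ring

variable (hQ : I ^ 2 ≤ Q) (hb : D.kerGen x₁ x₂ ∈ Q)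
include hQ hb

lemma kerFst_mem_of_kerGen_mem : D.kerFst ∈ Q := by
  have hfst := Ideal.Quotient.eq.1 (hD.mk_kerFst_eq h)
  have hgen := Ideal.Quotient.eq.1 (hD.mk_kerGen_eq h)
  have hsub := hQ (sub_mem hfst (Ideal.mul_mem_left _ (y₁ ^ 2) hgen))
  convert add_mem hsub (Q.mul_mem_left (y₁ ^ 2) hb) using 1
  ring

lemma kerSnd_mem_of_kerGen_mem : D.kerSnd ∈ Q := by
  have hsnd := Ideal.Quotient.eq.1 (hD.mk_kerSnd_eq h)
  have hgen := Ideal.Quotient.eq.1 (hD.mk_kerGen_eq h)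
  have hsub := hQ (sub_mem hsnd (Ideal.mul_mem_left _ (y₂ ^ 2) hgen))
  convert add_mem hsub (Q.mul_mem_left (y₂ ^ 2) hb) using 1
  ring

lemma u_sub_mem : D.u - x₁ * D.dualGen x₁ x₂ y₁ y₂ ∈ Q := by
  convert add_mem (hQ (Ideal.Quotient.eq.1 (hD.mk_u_eq h))) (Q.mul_mem_left (y₂ ^ 2) hb) using 1
  ring

lemma lineGen_add_mem : D.lineGen x₁ x₂ + x₂ ^ 2 * D.dualGen x₁ x₂ y₁ y₂ ∈ Q := by
  convert add_mem (hQ (Ideal.Quotient.eq.1 (hD.mk_lineGen_eq h)))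
    (Q.mul_mem_left (x₁ * y₁ ^ 2 + 2 * x₂ * y₁ * y₂) hb) using 1
  ring

lemma γ_mul_u_sub_w_sub_mem : D.γ * D.u - D.w - x₂ * D.dualGen x₁ x₂ y₁ y₂ ∈ Q := by
  have hγ := hQ (pow_two I ▸ Ideal.mul_mem_mul h.γ_mem hD.u_mem)
  have hs := hQ (pow_two I ▸ Ideal.mul_mem_mul (hD.pairing_sub_one_mem h)
    (hD.dualGen_mem x₁ x₂ y₁ y₂))
  have hw := hQ (Ideal.Quotient.eq.1 (hD.mk_w_eq h))
  have hu := hD.u_sub_mem h hQ hb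
  have hl := hD.lineGen_add_mem h hQ hb
  convert sub_mem (add_mem (add_mem hγ (Q.mul_mem_left x₂ hs)) (Q.mul_mem_left (x₂ * y₁) hu))
    (add_mem hw (Q.mul_mem_left y₂ hl)) using 1
  ring

lemma mk_genFst_eq : Ideal.Quotient.mk (I * Q) D.genFst = Ideal.Quotient.mk (I * Q)
    (y₁ ^ 2 * D.kerGen x₁ x₂ -
      (3 * D.α + D.δ) * (x₂ * D.dualGen x₁ x₂ y₁ y₂) ^ 2) := by
  have hfst := mk_mul_eq_mk_mul_of_sub_mem le_rfl h.α_sq_sub_mem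
    (hD.kerFst_mem_of_kerGen_mem h hQ hb)
  have hsnd := mk_mul_eq_mk_mul_of_sub_mem le_rfl h.γ_sq_sub_mem
    (hD.kerSnd_mem_of_kerGen_mem h hQ hb)
  have hsq := mk_sq_eq_mk_sq_of_sub_mem le_rfl
    (sub_mem (I.mul_mem_left D.γ hD.u_mem) hD.w_mem)
    (I.mul_mem_left x₂ (hD.dualGen_mem x₁ x₂ y₁ y₂)) (hD.γ_mul_u_sub_w_sub_mem h hQ hb)
  rw [genFst, kerGen, mul_assoc _ (D.α ^ 2), mul_assoc _ (D.γ ^ 2), map_sub, map_add,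
    map_mul _ _ (_ * _), hfst, map_mul _ _ (_ * D.kerSnd), hsnd, map_mul _ _ (_ ^ 2), hsq]
  simp only [← map_mul, ← map_add, ← map_sub]
  congr 1
  ring

lemma mk_genSnd_eq : Ideal.Quotient.mk (I * Q) D.genSnd = Ideal.Quotient.mk (I * Q)
    (y₂ ^ 2 * D.kerGen x₁ x₂ +
      (D.α + 3 * D.δ) * (x₁ * D.dualGen x₁ x₂ y₁ y₂) ^ 2) := by
  have hfst := mk_mul_eq_mk_mul_of_sub_mem le_rfl h.β_sq_sub_mem
    (hD.kerFst_mem_of_kerGen_mem h hQ hb)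
  have hsnd := mk_mul_eq_mk_mul_of_sub_mem le_rfl h.δ_sq_sub_mem
    (hD.kerSnd_mem_of_kerGen_mem h hQ hb)
  have hsq := mk_sq_eq_mk_sq_of_sub_mem le_rfl hD.u_mem
    (I.mul_mem_left x₁ (hD.dualGen_mem x₁ x₂ y₁ y₂)) (hD.u_sub_mem h hQ hb)
  rw [genSnd, kerGen, mul_assoc _ (D.β ^ 2), mul_assoc _ (D.δ ^ 2), map_add, map_add,
    map_mul _ _ (_ * _), hfst, map_mul _ _ (_ * D.kerSnd), hsnd, map_mul _ _ (_ ^ 2), hsq]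
  simp only [← map_mul, ← map_add]
  congr 1
  ring

lemma kerGen_mem_span_gen_sup :
    D.kerGen x₁ x₂ ∈ Ideal.span {D.genFst, D.genSnd} ⊔ I * Q := by
  have hweights := Ideal.mul_mem_mul (hD.weights_sub_one_mem h) hb
  have hfst := Ideal.Quotient.eq.1 (hD.mk_genFst_eq h hQ hb)
  have hsnd := Ideal.Quotient.eq.1 (hD.mk_genSnd_eq h hQ hb)
  refine Submodule.mem_sup.2 ⟨(D.α + 3 * D.δ) * x₁ ^ 2 * D.genFst +
    (3 * D.α + D.δ) * x₂ ^ 2 * D.genSnd, Ideal.mem_span_pair.2 ⟨_, _, rfl⟩, _,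
    neg_mem (add_mem hweights (add_mem (Ideal.mul_mem_left _ ((D.α + 3 * D.δ) * x₁ ^ 2) hfst)
      (Ideal.mul_mem_left _ ((3 * D.α + D.δ) * x₂ ^ 2) hsnd))), ?_⟩
  ring

lemma dualGen_sq_mem_span_gen_sup :
    D.dualGen x₁ x₂ y₁ y₂ ^ 2 ∈ Ideal.span {D.genFst, D.genSnd} ⊔ I * Q := by
  have hweights := Ideal.mul_mem_mul (hD.weights_sub_one_mem h)
    (hQ (Ideal.pow_mem_pow (hD.dualGen_mem x₁ x₂ y₁ y₂) 2))
  have hfst := Ideal.Quotient.eq.1 (hD.mk_genFst_eq h hQ hb)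
  have hsnd := Ideal.Quotient.eq.1 (hD.mk_genSnd_eq h hQ hb)
  refine Submodule.mem_sup.2 ⟨-y₂ ^ 2 * D.genFst + y₁ ^ 2 * D.genSnd,
    Ideal.mem_span_pair.2 ⟨_, _, rfl⟩, _, sub_mem (sub_mem (Ideal.mul_mem_left _ (y₂ ^ 2) hfst)
      (Ideal.mul_mem_left _ (y₁ ^ 2) hsnd)) hweights, ?_⟩
  ring

end IsAdapted

lemma sup_span_pair_sq_le (F : Ideal B) (b a : B) :
    (F ⊔ Ideal.span {b, a}) ^ 2 ≤ F ⊔ Ideal.span {b, a ^ 2} := by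
  rw [Ideal.span_insert, Ideal.span_insert, ← sup_assoc, ← sup_assoc, pow_two, Ideal.sup_mul,
    Ideal.mul_sup (Ideal.span {a}), Ideal.span_singleton_mul_span_singleton, ← pow_two]
  exact sup_le (le_sup_of_le_left Ideal.mul_le_left) (sup_le_sup_right Ideal.mul_le_right _)

section LocalRing

variable [IsLocalRing B] [IsNoetherianRing B]

lemma IsAdapted.eq_sup_span_kerGen_dualGen (hD : D.IsAdapted F I)
    (h : D.IsFactored I x₁ x₂ y₁ y₂) (hI : I ≠ ⊤) :
    I = F ⊔ Ideal.span {D.kerGen x₁ x₂, D.dualGen x₁ x₂ y₁ y₂} := by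
  refine le_antisymm (le_of_le_sup_mul hI ?_) (sup_le hD.le (Ideal.span_le.2
    (Set.pair_subset (hD.kerGen_mem _ _) (hD.dualGen_mem _ _ _ _))))
  · set Q := F ⊔ Ideal.span {D.kerGen x₁ x₂, D.dualGen x₁ x₂ y₁ y₂} ⊔ I ^ 2 with hQdef
    have hQ : I ^ 2 ≤ Q := le_sup_right
    have hgen : Ideal.span {D.kerGen x₁ x₂, D.dualGen x₁ x₂ y₁ y₂} ≤ Q :=
      le_sup_of_le_left le_sup_right
    have hb : D.kerGen x₁ x₂ ∈ Q := hgen (Ideal.subset_span (by simp))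
    have ha : D.dualGen x₁ x₂ y₁ y₂ ∈ Q := hgen (Ideal.subset_span (by simp))
    have hl : D.lineGen x₁ x₂ ∈ Q := (Submodule.add_mem_iff_left _ (Q.mul_mem_left _ ha)).1
      (hD.lineGen_add_mem h hQ hb)
    rw [← pow_two, ← hQdef]
    refine hD.le_sup.trans (sup_le (sup_le (le_sup_of_le_left le_sup_left) ?_) hQ)
    rw [Ideal.span_le]
    rintro _ (rfl | rfl | rfl)
    · exact (Submodule.sub_mem_iff_left _ (Q.mul_mem_left _ ha)).1 (hD.u_sub_mem h hQ hb)
    · exact (Submodule.sub_mem_iff_left _ (Q.mul_mem_left _ hl)).1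
        (hQ (Ideal.Quotient.eq.1 (hD.mk_v_eq h)))
    · exact (Submodule.sub_mem_iff_left _ (Q.mul_mem_left _ hl)).1
        (hQ (Ideal.Quotient.eq.1 (hD.mk_w_eq h)))

lemma IsAdapted.sup_span_gen_eq (hD : D.IsAdapted F I) (h : D.IsFactored I x₁ x₂ y₁ y₂)
    (hI : I ≠ ⊤) : F ⊔ Ideal.span {D.genFst, D.genSnd} =
      F ⊔ Ideal.span {D.kerGen x₁ x₂, D.dualGen x₁ x₂ y₁ y₂ ^ 2} := by
  set Q := F ⊔ Ideal.span {D.kerGen x₁ x₂, D.dualGen x₁ x₂ y₁ y₂ ^ 2} with hQdef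
  have hQ : I ^ 2 ≤ Q := by
    rw [hD.eq_sup_span_kerGen_dualGen h hI]
    exact sup_span_pair_sq_le _ _ _
  have hb : D.kerGen x₁ x₂ ∈ Q := Submodule.mem_sup_right (Ideal.subset_span (by simp))
  refine le_antisymm (hD.sup_span_gen_le hQ le_sup_left (hD.kerFst_mem_of_kerGen_mem h hQ hb)
    (hD.kerSnd_mem_of_kerGen_mem h hQ hb)) (le_of_le_sup_mul hI ?_)
  · nth_rw 1 [hQdef]
    rw [sup_assoc]
    exact sup_le_sup_left (Ideal.span_le.2 (Set.pair_subset (hD.kerGen_mem_span_gen_sup h hQ hb)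
      (hD.dualGen_sq_mem_span_gen_sup h hQ hb))) F

theorem IsAdapted.isCompleteIntersection_sup_span_gen {f : List B}
    (hD : D.IsAdapted (Ideal.ofList f) I) (hI : I ≠ ⊤)
    (hci : IsCompleteIntersection I (f.length + 2)) :
    I ^ 2 ≤ Ideal.ofList f ⊔ Ideal.span {D.genFst, D.genSnd} ∧
      IsCompleteIntersection (Ideal.ofList f ⊔ Ideal.span {D.genFst, D.genSnd})
        (f.length + 2) := by
  obtain ⟨x₁, x₂, y₁, y₂, h⟩ := hD.exists_isFactored
  have hIeq := hD.eq_sup_span_kerGen_dualGen h hI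
  rw [hD.sup_span_gen_eq h hI]
  refine ⟨(congrArg (· ^ 2) hIeq).trans_le (sup_span_pair_sq_le _ _ _), ?_⟩
  have hreg := hci.isWeaklyRegular_of_ofList_eq hI (by simp)
    ((ofList_append_pair _ _ _).trans hIeq.symm)
  rw [List.append_cons] at hreg
  refine ⟨f ++ [D.kerGen x₁ x₂, D.dualGen x₁ x₂ y₁ y₂ ^ 2], by simp, ?_,
    ofList_append_pair _ _ _⟩
  rw [List.append_cons]
  exact isWeaklyRegular_concat_sq hreg

end LocalRing

end ConormalFrame
end ConormalFrame

section LocalBasis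

variable {A M ι : Type*} [CommRing A] [AddCommGroup M] [Module A M] [Fintype ι]

lemma nonempty_basis_localizedModule (S : Submonoid A) (y : ι → M)
    (hspan : ∀ x, ∃ s ∈ S, s • x ∈ Submodule.span A (Set.range y))
    (hli : ∀ c : ι → A, ∑ i, c i • y i = 0 → ∀ i, ∃ s ∈ S, s * c i = 0) :
    Nonempty (Basis ι (Localization S) (LocalizedModule S M)) := by
  let b (i : ι) : LocalizedModule S M := LocalizedModule.mkLinearMap S M (y i)
  refine ⟨Basis.mk (v := b) (Fintype.linearIndependent_iff.2 fun g hg i => ?_) fun z _ => ?_⟩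
  · obtain ⟨s, hs⟩ := IsLocalization.exist_integer_multiples_of_finite S g
    choose c hc using hs
    have hsum : LocalizedModule.mkLinearMap S M (∑ i, c i • y i) = 0 := by
      have := congrArg ((s : A) • ·) hg
      simpa [Finset.smul_sum, ← smul_assoc, ← hc, b] using this
    obtain ⟨t, ht⟩ := (IsLocalizedModule.eq_zero_iff S _).1 hsum
    obtain ⟨r, hr, hrc⟩ := hli (fun i => t * c i)
      (by simpa [Finset.smul_sum, smul_smul, Submonoid.smul_def] using ht) i
    have hci : algebraMap A (Localization S) (c i) = 0 :=
      (IsLocalization.map_eq_zero_iff S _ _).2 ⟨⟨r, hr⟩ * t, by simpa [mul_assoc] using hrc⟩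
    rw [hc, Algebra.smul_def] at hci
    exact (IsLocalization.map_units _ s).mul_right_eq_zero.1 hci
  · obtain ⟨⟨x, s⟩, rfl⟩ := IsLocalizedModule.mk'_surjective S (LocalizedModule.mkLinearMap S M) z
    obtain ⟨t, ht, htx⟩ := hspan x
    obtain ⟨c, hc⟩ := (Submodule.mem_span_range_iff_exists_fun A).1 htx
    have hu : IsUnit (algebraMap A (Localization S) (t * s)) :=
      IsLocalization.map_units _ (⟨t, ht⟩ * s)
    rw [← Submodule.smul_mem_iff_of_isUnit _ hu, algebraMap_smul, mul_smul]
    rw [Function.uncurry_apply_pair, ← Submonoid.smul_def s, IsLocalizedModule.mk'_cancel',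
      ← map_smul, ← hc, map_sum]
    refine sum_mem fun i _ => ?_
    rw [map_smul, ← algebraMap_smul (Localization S)]
    exact Submodule.smul_mem _ _ (Submodule.subset_span ⟨i, rfl⟩)

lemma nonempty_basis_of_rankAtStalk_eq_card [Module.Finite A M] [Projective A M] {y : ι → M}
    (hy : Submodule.span A (Set.range y) = ⊤)
    (h : ∀ p : PrimeSpectrum A, rankAtStalk M p = Fintype.card ι) :
    Nonempty (Basis ι A M) := by
  have hbij := bijective_of_surjective_of_rankAtStalk_eq (φ := Fintype.linearCombination A y)
    (by rwa [← LinearMap.range_eq_top, Fintype.range_linearCombination]) fun m hm => by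
      have := (⟨m, hm.isPrime⟩ : PrimeSpectrum A).nontrivial
      simp [rankAtStalk_eq_finrank_of_free, h]
  exact ⟨.ofEquivFun (LinearEquiv.ofBijective _ hbij).symm⟩

end LocalBasis

section Conormal

variable {R : Type*} [CommRing R] {I : Ideal R} {k : ℕ}

lemma IsCompleteIntersection.linearIndependent_toCotangent_of_span_eq
    (h : IsCompleteIntersection I k) {a : Fin k → I}
    (ha : Ideal.span (Set.range fun i => (a i : R)) = I) :
    LinearIndependent (R ⧸ I) fun i => I.toCotangent (a i) := by
  obtain ⟨b⟩ := h.nonempty_basis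
  rcases subsingleton_or_nontrivial (R ⧸ I) with hsub | hnontriv
  · exact linearIndependent_of_subsingleton
  · exact linearIndependent_of_top_le_span_of_card_eq_finrank
      (span_range_toCotangent_eq_top a (ha.ge.trans le_sup_left)).ge (finrank_eq_card_basis b).symm

lemma map_algebraMap_ne_top {p : PrimeSpectrum R} (hp : I ≤ p.asIdeal) :
    I.map (algebraMap R (Localization.AtPrime p.asIdeal)) ≠ ⊤ := by
  rw [IsLocalization.map_algebraMap_ne_top_iff_disjoint p.asIdeal.primeCompl]
  exact Set.disjoint_left.2 fun _ hs hsI => hs (hp hsI)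

lemma IsCompleteIntersection.exists_span_eq_map_algebraMap {S : Type*} [CommRing S] [Algebra R S]
    (M : Submonoid R) [IsLocalization M S]
    (h : IsCompleteIntersection (I.map (algebraMap R S)) k) :
    ∃ a : Fin k → I, Ideal.span (Set.range fun i => algebraMap R S (a i)) =
      I.map (algebraMap R S) := by
  obtain ⟨b, -, hb⟩ := isCompleteIntersection_iff_exists_isRegularSeq.1 h
  have hmem (i : Fin k) : b i ∈ I.map (algebraMap R S) := hb ▸ Ideal.subset_span ⟨i, rfl⟩
  choose x hx using fun i => (IsLocalization.mem_map_algebraMap_iff M S).1 (hmem i)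
  refine ⟨fun i => (x i).1, le_antisymm (Ideal.span_le.2 ?_) (hb.ge.trans (Ideal.span_le.2 ?_))⟩
  · rintro _ ⟨i, rfl⟩
    exact Ideal.mem_map_of_mem _ (x i).1.2
  · rintro _ ⟨i, rfl⟩
    refine (Ideal.mul_unit_mem_iff_mem _ (IsLocalization.map_units S (x i).2)).1 ?_
    exact hx i ▸ Ideal.subset_span ⟨i, rfl⟩

lemma nonempty_basis_localizedModule_cotangent (q : PrimeSpectrum (R ⧸ I))
    (h : IsCompleteIntersection (I.map (algebraMap R
      (Localization.AtPrime (q.comap (Ideal.Quotient.mk I)).asIdeal))) k) :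
    Nonempty (Basis (Fin k) (Localization.AtPrime q.asIdeal)
      (LocalizedModule q.asIdeal.primeCompl I.Cotangent)) := by
  set p := q.comap (Ideal.Quotient.mk I)
  set φ := algebraMap R (Localization.AtPrime p.asIdeal)
  have mem_map_iff (K : Ideal R) (x : R) : φ x ∈ K.map φ ↔ ∃ s ∈ p.asIdeal.primeCompl, s * x ∈ K :=
    IsLocalization.algebraMap_mem_map_algebraMap_iff p.asIdeal.primeCompl _ K x
  obtain ⟨a, ha⟩ := h.exists_span_eq_map_algebraMap p.asIdeal.primeCompl
  refine nonempty_basis_localizedModule _ (fun i => I.toCotangent (a i)) (fun x => ?_)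
    fun c hc i => ?_
  · obtain ⟨x, rfl⟩ := I.toCotangent_surjective x
    have hx : φ x ∈ (Ideal.span (Set.range fun i => (a i : R))).map φ := by
      rw [Ideal.map_span, ← Set.range_comp]
      exact ha.ge (Ideal.mem_map_of_mem φ x.2)
    obtain ⟨s, hs, hsx⟩ := (mem_map_iff _ _).1 hx
    obtain ⟨c, hc⟩ := Ideal.mem_span_range_iff_exists_fun.1 hsx
    refine ⟨Ideal.Quotient.mk I s, hs, ?_⟩
    have heq : s • x = ∑ i, c i • a i := Subtype.ext (by simp [hc])
    change I.toCotangent (s • x) ∈ _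
    rw [heq, toCotangent_sum_smul]
    exact sum_mem fun i _ => Submodule.smul_mem _ _ (Submodule.subset_span ⟨i, rfl⟩)
  · choose r hr using fun i => Ideal.Quotient.mk_surjective (c i)
    have hli := h.linearIndependent_toCotangent_of_span_eq
      (a := fun i => ⟨φ (a i), Ideal.mem_map_of_mem φ (a i).2⟩) ha
    simp only [← hr, sum_smul_toCotangent_eq_zero_iff] at hc
    have hφ : ∑ i, φ (r i) * φ (a i) ∈ I.map φ ^ 2 := by
      simpa [Ideal.map_pow] using Ideal.mem_map_of_mem φ hc
    have hri : φ (r i) ∈ I.map φ := Ideal.Quotient.eq_zero_iff_mem.1 <|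
      Fintype.linearIndependent_iff.1 hli (fun i => Ideal.Quotient.mk _ (φ (r i)))
        ((sum_smul_toCotangent_eq_zero_iff _ _).2 hφ) i
    obtain ⟨s, hs, hsr⟩ := (mem_map_iff _ _).1 hri
    exact ⟨Ideal.Quotient.mk I s, hs, by
      rwa [← hr, ← map_mul, Ideal.Quotient.eq_zero_iff_mem]⟩

lemma le_comap_asIdeal (q : PrimeSpectrum (R ⧸ I)) :
    I ≤ (q.comap (Ideal.Quotient.mk I)).asIdeal := fun x hx => by
  simp [Ideal.Quotient.eq_zero_iff_mem.2 hx]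

theorem rankAtStalk_cotangent (h : IsLocallyCompleteIntersection I k)
    (q : PrimeSpectrum (R ⧸ I)) : rankAtStalk I.Cotangent q = k := by
  obtain ⟨b⟩ := nonempty_basis_localizedModule_cotangent q
    ((isLocallyCompleteIntersection_iff.1 h).2 _ (le_comap_asIdeal q))
  rw [rankAtStalk, finrank_eq_card_basis b, Fintype.card_fin]

instance finite_cotangent [IsNoetherianRing R] (I : Ideal R) :
    Module.Finite (R ⧸ I) I.Cotangent :=
  have := Module.Finite.of_surjective I.toCotangent I.toCotangent_surjective
  .of_restrictScalars_finite R (R ⧸ I) I.Cotangent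

theorem projective_cotangent [IsNoetherianRing R] (h : IsLocallyCompleteIntersection I k) :
    Projective (R ⧸ I) I.Cotangent := by
  have := finitePresentation_of_finite (R ⧸ I) I.Cotangent
  refine freeLocus_eq_univ_iff.1 (Set.eq_univ_of_forall fun q => ?_)
  obtain ⟨b⟩ := nonempty_basis_localizedModule_cotangent q
    ((isLocallyCompleteIntersection_iff.1 h).2 _ (le_comap_asIdeal q))
  exact .of_basis b

lemma le_span_image_sup_sq {S : Set I} (h : Submodule.span (R ⧸ I) (I.toCotangent '' S) = ⊤) :
    I ≤ Ideal.span (Subtype.val '' S) ⊔ I ^ 2 := by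
  intro x hx
  have hmem : I.toCotangent ⟨x, hx⟩ ∈ (Submodule.span R S).map I.toCotangent := by
    rw [Submodule.map_span,
      ← Submodule.restrictScalars_span R (R ⧸ I) Ideal.Quotient.mk_surjective, h]
    trivial
  obtain ⟨y, hy, hyx⟩ := hmem
  have hyS : (y : R) ∈ Ideal.span (Subtype.val '' S) := by
    rw [Ideal.span, ← Submodule.coe_subtype, Submodule.span_image]
    exact ⟨y, hy, rfl⟩
  rw [← add_sub_cancel (y : R) x]
  exact Submodule.add_mem_sup hyS ((Ideal.toCotangent_eq _).1 hyx.symm)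

lemma image_mem_list {α β : Type*} (g : α → β) (l : List α) :
    g '' {x | x ∈ l} = {y | y ∈ l.map g} := by
  ext y
  simp only [Set.mem_image, Set.mem_ofPred_eq, List.mem_map]

lemma le_ofList_sup_span_pair_sup_sq {l : List I} {v w : I}
    (h : Submodule.span (R ⧸ I) ({x | x ∈ l.map I.toCotangent} ∪
      {I.toCotangent v, I.toCotangent w}) = ⊤) :
    I ≤ Ideal.ofList (l.map Subtype.val) ⊔ Ideal.span {(v : R), (w : R)} ⊔ I ^ 2 := by
  have himage : I.toCotangent '' ({x | x ∈ l} ∪ {v, w}) =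
      {x | x ∈ l.map I.toCotangent} ∪ {I.toCotangent v, I.toCotangent w} := by
    rw [Set.image_union, Set.image_pair, image_mem_list]
  refine (le_span_image_sup_sq (himage ▸ h)).trans_eq ?_
  rw [Set.image_union, Set.image_pair, Ideal.span_union, Ideal.ofList, image_mem_list]

theorem exists_conormalFrame_isAdapted [IsNoetherianRing R] [Ring.KrullDimLE 1 (R ⧸ I)] {m : ℕ}
    (h : IsLocallyCompleteIntersection I (m + 2)) :
    ∃ (f : List R) (D : ConormalFrame R), f.length = m ∧ D.IsAdapted (Ideal.ofList f) I := by
  have := projective_cotangent h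
  obtain ⟨l, v, w, α, β, γ, δ, hl, hspan, hpair⟩ :=
    exists_generators_of_rankAtStalk_eq (m + 1) I.Cotangent (rankAtStalk_cotangent h)
  obtain ⟨l, rfl⟩ := List.map_surjective_iff.2 I.toCotangent_surjective l
  obtain ⟨u, f, rfl⟩ : ∃ u f, l = u :: f :=
    List.exists_cons_of_length_eq_add_one (by simpa using hl)
  obtain ⟨v, rfl⟩ := I.toCotangent_surjective v
  obtain ⟨w, rfl⟩ := I.toCotangent_surjective w
  obtain ⟨α, rfl⟩ := Ideal.Quotient.mk_surjective α
  obtain ⟨β, rfl⟩ := Ideal.Quotient.mk_surjective β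
  obtain ⟨γ, rfl⟩ := Ideal.Quotient.mk_surjective γ
  obtain rfl : δ = Ideal.Quotient.mk I (1 - α) := by
    rw [map_sub, map_one, ← hpair.add_eq_one, add_sub_cancel_left]
  refine ⟨f.map Subtype.val, ⟨α, β, γ, 1 - α, u, v, w⟩, by simpa using hl, ?_, u.2, v.2, w.2,
    add_sub_cancel _ _, ?_, ?_, ?_, ?_⟩
  · rw [Ideal.ofList, Ideal.span_le]
    rintro _ hx
    obtain ⟨y, -, rfl⟩ := List.mem_map.1 hx
    exact y.2
  · rw [← Ideal.Quotient.eq, map_mul, map_mul, hpair.mul_eq_mul]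
  · exact (Ideal.toCotangent_eq (x := α • w) (y := β • v) I).1 hpair.smul_right
  · exact (Ideal.toCotangent_eq (x := (1 - α) • v) (y := γ • w) I).1 hpair.smul_left
  · refine (le_ofList_sup_span_pair_sup_sq hspan).trans_eq ?_
    rw [List.map_cons, Ideal.ofList_cons, Ideal.span_insert (u : R), sup_left_comm, ← sup_assoc]

end Conormal

section Doubling

variable {R : Type*} [CommRing R] {I J : Ideal R} {n : ℕ}

lemma ne_top_of_idealHeight_eq (h : idealHeight I = n) : I ≠ ⊤ := by
  rintro rfl
  have htop : idealHeight (⊤ : Ideal R) = ⊤ :=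
    iInf₂_eq_top.2 fun p hp => absurd (top_le_iff.1 hp) p.isPrime.ne_top
  exact ENat.natCast_ne_top n (h.symm.trans htop)

lemma le_asIdeal_iff_of_sq_le (hIJ : I ^ 2 ≤ J) (hJI : J ≤ I) (p : PrimeSpectrum R) :
    J ≤ p.asIdeal ↔ I ≤ p.asIdeal :=
  ⟨fun h => p.isPrime.le_of_pow_le (hIJ.trans h), hJI.trans⟩

lemma idealHeight_eq_of_sq_le (hIJ : I ^ 2 ≤ J) (hJI : J ≤ I) : idealHeight J = idealHeight I := by
  simp only [idealHeight, le_asIdeal_iff_of_sq_le hIJ hJI]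

lemma radical_eq_of_sq_le (hIJ : I ^ 2 ≤ J) (hJI : J ≤ I) : I.radical = J.radical := by
  refine le_antisymm ?_ (Ideal.radical_mono hJI)
  rw [← Ideal.radical_pow I two_ne_zero]
  exact Ideal.radical_mono hIJ

variable [IsNoetherianRing R]

theorem nonempty_basis_cotangent_of_length_eq (h : IsLocallyCompleteIntersection J n) {l : List R}
    (hl : l.length = n) (hlJ : Ideal.ofList l ≤ J) (hJl : J ≤ Ideal.ofList l ⊔ J ^ 2) :
    Nonempty (Basis (Fin n) (R ⧸ J) J.Cotangent) := by
  subst hl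
  have := projective_cotangent h
  let a (i : Fin l.length) : J := ⟨l.get i, hlJ (Ideal.subset_span (l.get_mem i))⟩
  refine nonempty_basis_of_rankAtStalk_eq_card (y := fun i => J.toCotangent (a i))
    (span_range_toCotangent_eq_top a ?_) fun p => ?_
  · rwa [← ofList_ofFn, List.ofFn_get]
  · rw [rankAtStalk_cotangent h, Fintype.card_fin]

lemma ConormalFrame.IsAdapted.isCompleteIntersection_map {D : ConormalFrame R} {f : List R}
    (hD : D.IsAdapted (Ideal.ofList f) I) {p : PrimeSpectrum R} (hp : I ≤ p.asIdeal)
    (h : IsCompleteIntersection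
      (I.map (algebraMap R (Localization.AtPrime p.asIdeal))) (f.length + 2)) :
    (I ^ 2).map (algebraMap R (Localization.AtPrime p.asIdeal)) ≤
        (Ideal.ofList f ⊔ Ideal.span {D.genFst, D.genSnd}).map (algebraMap R _) ∧
      IsCompleteIntersection ((Ideal.ofList f ⊔ Ideal.span {D.genFst, D.genSnd}).map
        (algebraMap R (Localization.AtPrime p.asIdeal))) (f.length + 2) := by
  set φ := algebraMap R (Localization.AtPrime p.asIdeal)
  have hDφ := hD.map φ
  rw [Ideal.map_ofList] at hDφ
  have hloc := hDφ.isCompleteIntersection_sup_span_gen (map_algebraMap_ne_top hp)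
    (by rwa [List.length_map])
  rwa [List.length_map, map_genFst, map_genSnd, ← Ideal.map_pow, ← Ideal.map_ofList,
    ← Set.image_pair, ← Ideal.map_span, ← Ideal.map_sup] at hloc

theorem ConormalFrame.IsAdapted.isLocallyCompleteIntersection {D : ConormalFrame R} {f : List R}
    (hD : D.IsAdapted (Ideal.ofList f) I) (h : IsLocallyCompleteIntersection I (f.length + 2)) :
    IsLocallyCompleteIntersection (D.double (Ideal.ofList f) I) (f.length + 2) := by
  rw [isLocallyCompleteIntersection_iff] at h ⊢
  have hIJ := D.sq_le_double (Ideal.ofList f) I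
  refine ⟨(idealHeight_eq_of_sq_le hIJ hD.double_le).trans h.1, fun p hp => ?_⟩
  rw [le_asIdeal_iff_of_sq_le hIJ hD.double_le] at hp
  obtain ⟨hle, hci⟩ := hD.isCompleteIntersection_map hp (h.2 p hp)
  rwa [double, Ideal.map_sup, sup_eq_left.2 hle]

theorem ConormalFrame.IsAdapted.sq_le_sup_sq_sq {D : ConormalFrame R} {f : List R}
    (hD : D.IsAdapted (Ideal.ofList f) I) (h : IsLocallyCompleteIntersection I (f.length + 2)) :
    I ^ 2 ≤ Ideal.ofList f ⊔ Ideal.span {D.genFst, D.genSnd} ⊔ (I ^ 2) ^ 2 := by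
  refine Ideal.le_of_localization_maximal fun P _ => ?_
  let p : PrimeSpectrum R := ⟨P, inferInstance⟩
  by_cases hp : I ≤ P
  · exact (hD.isCompleteIntersection_map (p := p) hp
      ((isLocallyCompleteIntersection_iff.1 h).2 p hp)).1.trans (Ideal.map_mono le_sup_left)
  · simp [Ideal.map_sup, Ideal.map_pow, Ideal.top_pow,
      IsLocalization.AtPrime.map_eq_top_of_not_le _ hp]

theorem ConormalFrame.IsAdapted.nonempty_basis_cotangent {D : ConormalFrame R} {f : List R}
    (hD : D.IsAdapted (Ideal.ofList f) I) (h : IsLocallyCompleteIntersection I (f.length + 2)) :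
    Nonempty (Basis (Fin (f.length + 2)) (R ⧸ D.double (Ideal.ofList f) I)
      (D.double (Ideal.ofList f) I).Cotangent) := by
  refine nonempty_basis_cotangent_of_length_eq (l := f ++ [D.genFst, D.genSnd])
    (hD.isLocallyCompleteIntersection h) (by simp) ?_ ?_
  · rw [ofList_append_pair]
    exact le_sup_left
  · rw [ofList_append_pair]
    exact sup_le le_sup_left ((hD.sq_le_sup_sq_sq h).trans
      (sup_le_sup_left (Ideal.pow_right_mono (D.sq_le_double _ I) 2) _))

end Doubling

end FerrandSzpiro

/-- **Theorem (Ferrand–Szpiro).**  Let `R` be a commutative Noetherian ring and `I` a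
locally complete intersection ideal of `R` of height `n ≥ 2` with `dim (R/I) ≤ 1`.  Then
there is a locally complete intersection ideal `J ⊆ R` of height `n` such that
(i) `√I = √J` and (ii) `J/J²` is a free `R/J`-module of rank `n`. -/
theorem ferrand_szpiro
    (R : Type*) [CommRing R] [IsNoetherianRing R]
    (I : Ideal R) (n : ℕ) (hn : 2 ≤ n)
    (hlci : IsLocallyCompleteIntersection I n)
    (hdim : ringKrullDim (R ⧸ I) ≤ 1) :
    ∃ J : Ideal R, IsLocallyCompleteIntersection J n ∧
      I.radical = J.radical ∧
      Module.Free (R ⧸ J) J.Cotangent ∧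
      Module.finrank (R ⧸ J) J.Cotangent = n := by
  obtain ⟨m, rfl⟩ : ∃ m, n = m + 2 := ⟨n - 2, by omega⟩
  have := Ring.krullDimLE_iff.2 hdim
  obtain ⟨f, D, rfl, hD⟩ := FerrandSzpiro.exists_conormalFrame_isAdapted hlci
  have hJ := hD.isLocallyCompleteIntersection hlci
  obtain ⟨b⟩ := hD.nonempty_basis_cotangent hlci
  have := Ideal.Quotient.nontrivial_iff.2 (FerrandSzpiro.ne_top_of_idealHeight_eq hJ.1)
  exact ⟨_, hJ, FerrandSzpiro.radical_eq_of_sq_le (D.sq_le_double _ _) hD.double_le, .of_basis b,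
    by rw [Module.finrank_eq_card_basis b, Fintype.card_fin]⟩
end
end

section
/- Let R be a commutative Noetherian ring and f ∈ R[T] a nonconstant polynomial (f ∉ R). Then: (i) for every proper ideal I of R[T, f^{-1}] (the localization of R[T] at powers of f), ht I = ht(I ∩ R[T]); (ii) for every proper ideal I of R[f, f^{-1}] (the localization at powers of f of the R-subalgebra of R[T] generated by f), ht I = ht(I ∩ R[f^{-1}]), where R[f^{-1}] denotes the R-subalgebra of R[f, f^{-1}] generated by f^{-1}. -/
noncomputable section

/-!
A prime of `S⁻¹B` has the same height as its contraction to `B`, because the primes below it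
correspond to the primes below the contraction; so contracting along any localization preserves
heights. This is (i). For (ii), the ring `R[f, f⁻¹]` is generated over `R` by the inverse elements
`f` and `f⁻¹`, which play symmetric roles: it is also the localization of `R[f⁻¹]` at the powers
of `f⁻¹`.
-/

theorem idealHeight_eq_height {A : Type*} [CommRing A] (I : Ideal A) :
    idealHeight I = I.height := by
  apply le_antisymm
  · rw [Ideal.height_eq_inf_minimalPrimes]
    refine le_iInf₂ fun p hp => ?_
    let P : PrimeSpectrum A := ⟨p, hp.isPrime⟩
    calc idealHeight I
      _ ≤ Order.height P := iInf₂_le P hp.le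
      _ = p.height := P.height_eq_orderHeight.symm
  · refine le_iInf₂ fun p hp => ?_
    rw [← PrimeSpectrum.height_eq_orderHeight]
    exact Ideal.height_mono hp

theorem idealHeight_comap_algebraMap {B A : Type*} [CommRing B] [CommRing A] [Algebra B A]
    (S : Submonoid B) [IsLocalization S A] (I : Ideal A) :
    idealHeight (I.comap (algebraMap B A)) = idealHeight I := by
  simpa only [idealHeight_eq_height] using IsLocalization.height_under S I

section Away

open Algebra IsLocalization.Away
open scoped Pointwise

theorem adjoin_invSelf_eq_top {B A : Type*} [CommSemiring B] [CommSemiring A] [Algebra B A]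
    (b : B) [IsLocalization.Away b A] : adjoin B {invSelf (S := A) b} = ⊤ := by
  refine Algebra.eq_top_iff.mpr fun z => ?_
  obtain ⟨n, a, hz⟩ := IsLocalization.Away.surj b z
  have hz' : z = a • invSelf (S := A) b ^ n := by
    rw [Algebra.smul_def, ← hz, mul_assoc, ← mul_pow, mul_invSelf, one_pow, mul_one]
  rw [hz']
  exact Subalgebra.smul_mem _ (pow_mem (self_mem_adjoin_singleton B _) n) a

variable {R B A : Type*} [CommSemiring R] [CommSemiring B] [CommSemiring A]
  [Algebra R B] [Algebra R A] [Algebra B A] [IsScalarTower R B A]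

theorem adjoin_image_union_invSelf_eq_top (b : B) [IsLocalization.Away b A] {s : Set B}
    (hs : adjoin R s = ⊤) :
    adjoin R (algebraMap B A '' s ∪ {invSelf (S := A) b}) = ⊤ := by
  rw [← adjoin_eq_adjoin_union R s _ hs, adjoin_invSelf_eq_top, Subalgebra.restrictScalars_top]

theorem isLocalizationAway_adjoin_singleton {u g : A} (hgu : g * u = 1)
    (htop : adjoin R {u, g} = ⊤) :
    IsLocalization.Away (⟨g, self_mem_adjoin_singleton R g⟩ : adjoin R {g}) A := by
  have hg : g ∈ adjoin R {g} := self_mem_adjoin_singleton R g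
  have hsub : g • ({u, g} : Set A) ⊆ (adjoin R {g} : Subalgebra R A) := by
    rintro _ ⟨x, rfl | rfl, rfl⟩
    · simpa only [smul_eq_mul, hgu, SetLike.mem_coe] using one_mem (adjoin R {g})
    · exact mul_mem hg hg
  refine IsLocalization.Away.mk _ (.of_mul_eq_one u hgu) (fun z => ?_)
    fun a b hab => ⟨0, by rw [Subtype.ext hab]⟩
  obtain ⟨n, hn⟩ := pow_smul_mem_of_smul_subset_of_mem_adjoin g {u, g} (adjoin R {g}) hsub
    (htop ▸ mem_top : z ∈ adjoin R {u, g}) hg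
  exact ⟨n, ⟨g ^ n • z, hn n le_rfl⟩, mul_comm _ _⟩

theorem isLocalizationAway_adjoin_invSelf {b : B} [IsLocalization.Away b A]
    (hb : adjoin R {b} = ⊤) :
    IsLocalization.Away
      (⟨invSelf b, self_mem_adjoin_singleton R _⟩ : adjoin R {invSelf (S := A) b}) A := by
  refine isLocalizationAway_adjoin_singleton (u := algebraMap B A b) ?_ ?_
  · rw [mul_comm, mul_invSelf]
  · simpa only [Set.image_singleton, Set.singleton_union] using
      adjoin_image_union_invSelf_eq_top (A := A) b hb

theorem adjoin_singleton_self_eq_top (b : B) :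
    adjoin R {(⟨b, self_mem_adjoin_singleton R b⟩ : adjoin R {b})} = ⊤ := by
  rw [← adjoin_adjoin_coe_preimage (s := {b})]
  congr 1
  ext x
  exact Subtype.ext_iff

end Away

theorem idealHeight_comap_adjoin_invSelf {R B A : Type*} [CommRing R] [CommSemiring B]
    [CommRing A] [Algebra R B] [Algebra R A] [Algebra B A] [IsScalarTower R B A] {b : B}
    [IsLocalization.Away b A] (hb : Algebra.adjoin R {b} = ⊤) (I : Ideal A) :
    idealHeight (I.comap (Algebra.adjoin R {IsLocalization.Away.invSelf (S := A) b}).val)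
      = idealHeight I := by
  let g : Algebra.adjoin R {IsLocalization.Away.invSelf (S := A) b} :=
    ⟨_, Algebra.self_mem_adjoin_singleton R _⟩
  have hloc : IsLocalization.Away g A := isLocalizationAway_adjoin_invSelf hb
  exact idealHeight_comap_algebraMap (.powers g) I

theorem height_of_contraction_overring_general
    (R B : Type*) [CommRing R] [CommRing B] [Algebra R B] (f : B) :
    (∀ (A : Type*) [CommRing A] [Algebra B A] [IsLocalization.Away f A],
      ∀ I : Ideal A, idealHeight I = idealHeight (I.comap (algebraMap B A))) ∧
    (∀ (A' : Type*) [CommRing A'] [Algebra R A'] [Algebra (Algebra.adjoin R {f}) A']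
      [IsScalarTower R (Algebra.adjoin R {f}) A']
      [IsLocalization.Away
        (⟨f, Algebra.self_mem_adjoin_singleton R f⟩ : Algebra.adjoin R {f}) A'],
      ∀ I : Ideal A',
        idealHeight I
          = idealHeight (I.comap
              (Algebra.adjoin R
                {IsLocalization.Away.invSelf
                  (S := A')
                  (⟨f, Algebra.self_mem_adjoin_singleton R f⟩ : Algebra.adjoin R {f})}).val)) :=
  ⟨fun _ _ _ _ I => (idealHeight_comap_algebraMap (.powers f) I).symm,
    fun _ _ _ _ _ _ I =>
      (idealHeight_comap_adjoin_invSelf (adjoin_singleton_self_eq_top (R := R) f) I).symm⟩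

/-- **Lemma.** Let `R` be a commutative Noetherian ring and `f ∈ R[T] \ R` a nonconstant
polynomial.  Then
(i) for every proper ideal `I` of `R[T, f⁻¹]`, `ht I = ht (I ∩ R[T])`;
(ii) for every proper ideal `I` of `R[f, f⁻¹]` (the localization at the powers of `f` of
the `R`-subalgebra of `R[T]` generated by `f`), `ht I = ht (I ∩ R[f⁻¹])`, where `R[f⁻¹]`
is the `R`-subalgebra generated by `f⁻¹`. -/
theorem height_of_contraction_overring
    (R : Type*) [CommRing R] [IsNoetherianRing R]
    (f : Polynomial R) (hf : f ∉ Set.range (Polynomial.C : R → Polynomial R)) :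
    (∀ (A : Type*) [CommRing A] [Algebra (Polynomial R) A] [IsLocalization.Away f A],
      ∀ I : Ideal A, I ≠ ⊤ →
        idealHeight I = idealHeight (I.comap (algebraMap (Polynomial R) A))) ∧
    (∀ (A' : Type*) [CommRing A'] [Algebra R A']
      [Algebra (↥(Algebra.adjoin R ({f} : Set (Polynomial R)))) A']
      [IsScalarTower R (↥(Algebra.adjoin R ({f} : Set (Polynomial R)))) A']
      [IsLocalization.Away
        (⟨f, Algebra.self_mem_adjoin_singleton R f⟩ :
          ↥(Algebra.adjoin R ({f} : Set (Polynomial R)))) A'],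
      ∀ I : Ideal A', I ≠ ⊤ →
        idealHeight I
          = idealHeight (I.comap
              (Algebra.adjoin R
                {IsLocalization.Away.invSelf
                  (S := A')
                  (⟨f, Algebra.self_mem_adjoin_singleton R f⟩ :
                    ↥(Algebra.adjoin R ({f} : Set (Polynomial R))))}).val)) := by
  obtain ⟨h_away, h_inv⟩ := height_of_contraction_overring_general R (Polynomial R) f
  exact ⟨fun A _ _ _ I _ => h_away A I, fun A' _ _ _ _ _ I _ => h_inv A' I⟩
end
end
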